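/- Let α = 0, so that the operator is the almost Mathieu operator with potential v(x) = 2λcos(2πx). Then for every θ ∈ ℝ and every E ∈ σ(H_{0,θ,b}), the Lyapunov exponent satisfies L(E) = max{ log|λ|, 0 }. -/

import Mathlib

open scoped Real

/-- The quasi-periodic potential `v(x) = 2λcos(2πx)/(1 - αcos(2πx))`. -/
noncomputable def potV (α lam : ℝ) (x : ℝ) : ℝ :=
  2 * lam * Real.cos (2 * Real.pi * x) / (1 - α * Real.cos (2 * Real.pi * x))

/-- One-step transfer matrix `A(x,z) = [[z - V x, -1],[1,0]]`. -/
noncomputable def tMat (V : ℝ → ℝ) (x : ℝ) (z : ℂ) : Matrix (Fin 2) (Fin 2) ℂ :=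
  !![z - (V x : ℝ), -1; 1, 0]

/-- The `n`-step transfer matrix `A_n(x,z) = A(x+(n-1)b,z) ⋯ A(x+b,z) A(x,z)`. -/
noncomputable def tProd (V : ℝ → ℝ) (b : ℝ) (n : ℕ) (x : ℝ) (z : ℂ) :
    Matrix (Fin 2) (Fin 2) ℂ :=
  (((List.range n).reverse).map (fun j => tMat V (x + (j : ℝ) * b) z)).prod

/-- The operator norm of a 2×2 complex matrix, acting on the Euclidean space `ℂ²`. -/
noncomputable def opNorm2 (M : Matrix (Fin 2) (Fin 2) ℂ) : ℝ :=
  ‖Matrix.toEuclideanCLM (𝕜 := ℂ) M‖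

/-- The Lyapunov exponent `L(z) = lim_n (1/n)∫₀¹ log‖A_n(x,z)‖ dx`; the limit exists and
equals `inf_{n ≥ 1} (1/n)∫₀¹ log‖A_n(x,z)‖ dx` by subadditivity, so we take that as the
definition. -/
noncomputable def lyap (V : ℝ → ℝ) (b : ℝ) (z : ℂ) : ℝ :=
  ⨅ n : ℕ+, ((n : ℝ))⁻¹ * ∫ x in (0:ℝ)..(1:ℝ), Real.log (opNorm2 (tProd V b n x z))

/-- `IsSchrodingerOp V b θ H` says that `H` is the bounded operator on `ℓ²(ℤ)` given by
`(Hu)ₙ = u_{n+1} + u_{n-1} + V(nb+θ)uₙ`. -/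
def IsSchrodingerOp (V : ℝ → ℝ) (b θ : ℝ)
    (H : lp (fun _ : ℤ => ℂ) 2 →L[ℂ] lp (fun _ : ℤ => ℂ) 2) : Prop :=
  ∀ u : lp (fun _ : ℤ => ℂ) 2, ∀ n : ℤ,
    (H u : ∀ _ : ℤ, ℂ) n = (u : ∀ _ : ℤ, ℂ) (n + 1) + (u : ∀ _ : ℤ, ℂ) (n - 1)
      + (V ((n : ℝ) * b + θ) : ℂ) * (u : ∀ _ : ℤ, ℂ) n





namespace AMO

open Filter Topology

/-- Euclidean length of a vector of `ℂ²`. -/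
noncomputable def vn (v : Fin 2 → ℂ) : ℝ := ‖(WithLp.toLp 2 v : EuclideanSpace ℂ (Fin 2))‖

lemma vn_nonneg (v : Fin 2 → ℂ) : 0 ≤ vn v := norm_nonneg _

lemma vn_sq (v : Fin 2 → ℂ) : vn v ^ 2 = ‖v 0‖ ^ 2 + ‖v 1‖ ^ 2 := by
  rw [vn, EuclideanSpace.norm_sq_eq]; simp [Fin.sum_univ_two]

lemma vn_smul (c : ℂ) (v : Fin 2 → ℂ) : vn (c • v) = ‖c‖ * vn v := by
  rw [vn, WithLp.toLp_smul, norm_smul, vn]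

lemma vn_add_le (v w : Fin 2 → ℂ) : vn (v + w) ≤ vn v + vn w := by
  rw [vn, WithLp.toLp_add]; exact norm_add_le _ _

lemma vn_pos {v : Fin 2 → ℂ} (h : v ≠ 0) : 0 < vn v := by
  rw [vn, norm_pos_iff]; simpa using h

lemma apply_le_vn (v : Fin 2 → ℂ) (i : Fin 2) : ‖v i‖ ≤ vn v := by
  simpa [vn] using PiLp.norm_apply_le (WithLp.toLp 2 v : EuclideanSpace ℂ (Fin 2)) i

lemma vn_le_sum (v : Fin 2 → ℂ) : vn v ≤ ‖v 0‖ + ‖v 1‖ := by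
  have := vn_sq v
  have := norm_nonneg (v 0)
  have := norm_nonneg (v 1)
  refine abs_le_of_sq_le_sq' (a := vn v) ?_ (by positivity) |>.2
  nlinarith [mul_nonneg (norm_nonneg (v 0)) (norm_nonneg (v 1))]

lemma vn_mulVec_le (M : Matrix (Fin 2) (Fin 2) ℂ) (v : Fin 2 → ℂ) :
    vn (M.mulVec v) ≤ opNorm2 M * vn v := by
  have := (Matrix.toEuclideanCLM (𝕜 := ℂ) M).le_opNorm (WithLp.toLp 2 v)
  rwa [Matrix.toEuclideanCLM_toLp] at this

lemma opNorm2_nonneg (M : Matrix (Fin 2) (Fin 2) ℂ) : 0 ≤ opNorm2 M := norm_nonneg _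

lemma opNorm2_le {M : Matrix (Fin 2) (Fin 2) ℂ} {c : ℝ} (hc : 0 ≤ c)
    (h : ∀ v, vn (M.mulVec v) ≤ c * vn v) : opNorm2 M ≤ c := by
  refine ContinuousLinearMap.opNorm_le_bound _ hc fun v => ?_
  have := h (WithLp.ofLp v)
  rw [vn, ← Matrix.toEuclideanCLM_toLp] at this
  exact this

lemma opNorm2_mul_le (M N : Matrix (Fin 2) (Fin 2) ℂ) :
    opNorm2 (M * N) ≤ opNorm2 M * opNorm2 N := by
  rw [opNorm2, map_mul]; exact norm_mul_le _ _

lemma opNorm2_one : opNorm2 1 = 1 := by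
  rw [opNorm2, map_one]; exact norm_one

lemma entry_le (M : Matrix (Fin 2) (Fin 2) ℂ) (i j : Fin 2) : ‖M i j‖ ≤ opNorm2 M := by
  have h := vn_mulVec_le M (Pi.single j 1)
  have h1 : vn (Pi.single j (1:ℂ)) = 1 := by
    rw [vn]; simp
  have h2 := apply_le_vn (M.mulVec (Pi.single j 1)) i
  rw [h1, mul_one] at h
  simp at h2
  exact h2.trans (by simpa using h)

lemma opNorm2_le_sum (M : Matrix (Fin 2) (Fin 2) ℂ) :
    opNorm2 M ≤ ‖M 0 0‖ + ‖M 0 1‖ + ‖M 1 0‖ + ‖M 1 1‖ := by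
  refine opNorm2_le (by positivity) fun v => ?_
  have h0 := apply_le_vn v 0
  have h1 := apply_le_vn v 1
  have ha : ‖M.mulVec v 0‖ ≤ ‖M 0 0‖ * vn v + ‖M 0 1‖ * vn v := by
    simp only [Matrix.mulVec, dotProduct, Fin.sum_univ_two]
    refine (norm_add_le _ _).trans ?_
    rw [norm_mul, norm_mul]; gcongr
  have hb : ‖M.mulVec v 1‖ ≤ ‖M 1 0‖ * vn v + ‖M 1 1‖ * vn v := by
    simp only [Matrix.mulVec, dotProduct, Fin.sum_univ_two]
    refine (norm_add_le _ _).trans ?_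
    rw [norm_mul, norm_mul]; gcongr
  have := vn_le_sum (M.mulVec v)
  linarith

lemma exists_entry (M : Matrix (Fin 2) (Fin 2) ℂ) : ∃ i j, opNorm2 M ≤ 4 * ‖M i j‖ := by
  by_contra! h
  have := opNorm2_le_sum M
  have h1 := h 0 0
  have h2 := h 0 1
  have h3 := h 1 0
  have h4 := h 1 1
  linarith

lemma opNorm2_adj_le (M : Matrix (Fin 2) (Fin 2) ℂ) : opNorm2 M.adjugate ≤ 4 * opNorm2 M := by
  have := opNorm2_le_sum M.adjugate
  simp only [Matrix.adjugate_fin_two, Matrix.of_apply, Matrix.cons_val', Matrix.cons_val_zero,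
    Matrix.cons_val_one, norm_neg, Matrix.cons_val_fin_one] at this
  rw [Matrix.adjugate_fin_two]
  linarith [entry_le M 0 0, entry_le M 0 1, entry_le M 1 0, entry_le M 1 1]

lemma one_le_opNorm2 {M : Matrix (Fin 2) (Fin 2) ℂ} (h : M.det = 1) : 1 ≤ opNorm2 M := by
  have key : ∀ j, ‖M 0 j‖ ^ 2 + ‖M 1 j‖ ^ 2 ≤ opNorm2 M ^ 2 := by
    intro j
    have h := vn_mulVec_le M (Pi.single j 1)
    have h1 : vn (Pi.single j (1:ℂ)) = 1 := by
      rw [vn]; simp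
    rw [h1, mul_one] at h
    have h2 := vn_sq (M.mulVec (Pi.single j 1))
    simp at h2
    rw [← h2]
    exact pow_le_pow_left₀ (vn_nonneg _) (by simpa using h) 2
  have k0 := key 0
  have k1 := key 1
  have hd : 1 ≤ ‖M 0 0‖ * ‖M 1 1‖ + ‖M 0 1‖ * ‖M 1 0‖ := by
    rw [Matrix.det_fin_two] at h
    calc (1:ℝ) = ‖M 0 0 * M 1 1 - M 0 1 * M 1 0‖ := by rw [h]; simp
      _ ≤ _ := by refine (norm_sub_le _ _).trans ?_; rw [norm_mul, norm_mul]
  have hn := opNorm2_nonneg M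
  nlinarith [sq_nonneg (‖M 0 0‖ - ‖M 1 1‖), sq_nonneg (‖M 0 1‖ - ‖M 1 0‖)]

lemma continuous_opNorm2 : Continuous opNorm2 := by
  unfold opNorm2
  refine continuous_norm.comp ?_
  exact LinearMap.continuous_of_finiteDimensional
    ((Matrix.toEuclideanCLM (n := Fin 2) (𝕜 := ℂ)).toAlgEquiv.toLinearMap)

/-- one step matrix -/
noncomputable def cm (g : ℝ → ℂ) (t : ℝ) : Matrix (Fin 2) (Fin 2) ℂ := !![g t, -1; 1, 0]

/-- cocycle products -/
noncomputable def cp (g : ℝ → ℂ) (b : ℝ) : ℕ → ℝ → Matrix (Fin 2) (Fin 2) ℂ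
  | 0, _ => 1
  | n+1, x => cm g (x + n * b) * cp g b n x

lemma cp_zero (g : ℝ → ℂ) (b x : ℝ) : cp g b 0 x = 1 := rfl
lemma cp_succ (g : ℝ → ℂ) (b : ℝ) (n : ℕ) (x : ℝ) :
    cp g b (n+1) x = cm g (x + n * b) * cp g b n x := rfl

lemma tProd_eq (V : ℝ → ℝ) (b : ℝ) (n : ℕ) (x : ℝ) (z : ℂ) :
    tProd V b n x z = cp (fun t => z - (V t : ℝ)) b n x := by
  induction n with
  | zero => simp [tProd, cp]
  | succ n ih =>
    rw [cp_succ, ← ih, tProd, tProd, List.range_succ]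
    simp [tMat, cm]

lemma cp_add (g : ℝ → ℂ) (b : ℝ) (m n : ℕ) (x : ℝ) :
    cp g b (m + n) x = cp g b m (x + n * b) * cp g b n x := by
  induction m with
  | zero => simp [cp_zero]
  | succ m ih =>
    rw [show m + 1 + n = (m + n) + 1 by ring, cp_succ, ih, cp_succ, Matrix.mul_assoc]
    congr 2
    push_cast; ring

lemma det_cp (g : ℝ → ℂ) (b : ℝ) (n : ℕ) (x : ℝ) : (cp g b n x).det = 1 := by
  induction n with
  | zero => simp [cp_zero]
  | succ n ih => rw [cp_succ, Matrix.det_mul, ih, cm]; simp [Matrix.det_fin_two]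

lemma one_le_cp (g : ℝ → ℂ) (b : ℝ) (n : ℕ) (x : ℝ) : 1 ≤ opNorm2 (cp g b n x) :=
  one_le_opNorm2 (det_cp g b n x)

lemma continuous_cp {g : ℝ → ℂ} (hg : Continuous g) (b : ℝ) (n : ℕ) :
    Continuous (cp g b n) := by
  induction n with
  | zero => exact continuous_const
  | succ n ih =>
    have : cp g b (n+1) = fun x => cm g (x + n * b) * cp g b n x := rfl
    rw [this]
    refine Continuous.matrix_mul ?_ ih
    unfold cm
    refine continuous_matrix fun i j => ?_
    fin_cases i <;> fin_cases j <;> simp <;> fun_prop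

lemma cp_periodic {g : ℝ → ℂ} (hg : Function.Periodic g 1) (b : ℝ) (n : ℕ) :
    Function.Periodic (cp g b n) 1 := by
  induction n with
  | zero => intro x; rfl
  | succ n ih =>
    intro x
    rw [cp_succ, cp_succ, ih x, cm, cm, show x + 1 + n * b = x + n * b + 1 by ring, hg]

lemma continuous_logcp {g : ℝ → ℂ} (hg : Continuous g) (b : ℝ) (n : ℕ) :
    Continuous (fun x => Real.log (opNorm2 (cp g b n x))) :=
  (continuous_opNorm2.comp (continuous_cp hg b n)).log
    (fun x => (lt_of_lt_of_le one_pos (one_le_cp g b n x)).ne')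

end AMO



namespace AMO

open Filter Topology

/-- the character `e(x) = exp(2πix)` -/
noncomputable def ee (x : ℝ) : ℂ := Complex.exp (2 * Real.pi * x * Complex.I)

lemma ee_add (x y : ℝ) : ee (x + y) = ee x * ee y := by
  rw [ee, ee, ee, ← Complex.exp_add]; congr 1; push_cast; ring

lemma ee_zero : ee 0 = 1 := by simp [ee]

lemma ee_ne_zero (x : ℝ) : ee x ≠ 0 := Complex.exp_ne_zero _

lemma ee_neg (x : ℝ) : ee (-x) = (ee x)⁻¹ := by
  rw [ee, ee, ← Complex.exp_neg]; congr 1; push_cast; ring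

lemma ee_sub (x y : ℝ) : ee (x - y) = ee x * (ee y)⁻¹ := by
  rw [sub_eq_add_neg, ee_add, ee_neg]

lemma norm_ee (x : ℝ) : ‖ee x‖ = 1 := by
  rw [ee, show (2 * Real.pi * x * Complex.I : ℂ) = ((2 * Real.pi * x : ℝ) : ℂ) * Complex.I by
    push_cast; ring]
  exact Complex.norm_exp_ofReal_mul_I _

lemma star_ee (x : ℝ) : (starRingEnd ℂ) (ee x) = ee (-x) := by
  rw [ee, ee, ← Complex.exp_conj]; congr 1
  simp only [map_mul, Complex.conj_ofReal, Complex.conj_I, Complex.ofReal_neg, map_ofNat]; ring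

lemma ee_int (n : ℤ) : ee n = 1 := by
  rw [ee, Complex.exp_eq_one_iff]; exact ⟨n, by push_cast; ring⟩

lemma ee_one : ee 1 = 1 := by simpa using ee_int 1

lemma ee_nat_mul (n : ℕ) (x : ℝ) : ee (n * x) = ee x ^ n := by
  rw [ee, ee, ← Complex.exp_nat_mul]; congr 1; push_cast; ring

lemma ee_int_mul (n : ℤ) (x : ℝ) : ee (n * x) = ee x ^ n := by
  rw [ee, ee, ← Complex.exp_int_mul]; congr 1; push_cast; ring

lemma ee_eq_one_iff (x : ℝ) : ee x = 1 ↔ ∃ n : ℤ, x = n := by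
  rw [ee, Complex.exp_eq_one_iff]
  constructor
  · rintro ⟨n, hn⟩
    refine ⟨n, ?_⟩
    have h : (2 * Real.pi * Complex.I) ≠ 0 := by simp [Real.pi_ne_zero]
    have : (x : ℂ) = n := by
      apply mul_left_cancel₀ h
      linear_combination hn
    exact_mod_cast this
  · rintro ⟨n, rfl⟩; exact ⟨n, by push_cast; ring⟩

lemma continuous_ee : Continuous ee := by unfold ee; fun_prop

lemma ee_periodic : Function.Periodic ee 1 := by
  intro x; rw [ee_add, ee_one, mul_one]

lemma ee_mul_irr_ne_one {b : ℝ} (hb : Irrational b) {k : ℤ} (hk : k ≠ 0) : ee (k * b) ≠ 1 := by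
  intro h
  obtain ⟨n, hn⟩ := (ee_eq_one_iff _).1 h
  exact (hb.intCast_mul hk).ne_int n hn

lemma integral_ee (k : ℤ) : ∫ x in (0:ℝ)..1, ee (k * x) = if k = 0 then 1 else 0 := by
  split_ifs with h
  · subst h; simp [ee_zero]
  · have hc : (2 * Real.pi * k * Complex.I : ℂ) ≠ 0 := by
      simp [Real.pi_ne_zero, h]
    have : ∀ x : ℝ, ee (k * x) = Complex.exp ((2 * Real.pi * k * Complex.I) * x) := by
      intro x; rw [ee]; congr 1; push_cast; ring
    simp_rw [this]
    rw [integral_exp_mul_complex hc]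
    have h1 := ee_int k
    rw [ee] at h1
    rw [show (2 * Real.pi * k * Complex.I * (1:ℝ) : ℂ) = 2 * Real.pi * (k:ℝ) * Complex.I by
      push_cast; ring, h1]
    simp

/-- strong equidistribution -/
def Good (b : ℝ) (f : ℝ → ℂ) : Prop :=
  ∃ C : ℝ, ∀ (s : ℕ) (x : ℝ),
    ‖∑ l ∈ Finset.range s, f (x + l * b) - s * ∫ t in (0:ℝ)..1, f t‖ ≤ C

lemma good_ee {b : ℝ} (hb : Irrational b) (k : ℤ) : Good b (fun t => ee (k * t)) := by
  by_cases hk : k = 0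
  · subst hk; refine ⟨0, fun s x => ?_⟩; simp [ee_zero]
  · refine ⟨2 / ‖ee (k * b) - 1‖, fun s x => ?_⟩
    rw [integral_ee, if_neg hk, mul_zero, sub_zero]
    have h1 := ee_mul_irr_ne_one hb hk
    have : ∀ l : ℕ, ee (k * (x + l * b)) = ee (k * x) * ee (k * b) ^ l := by
      intro l; rw [← ee_nat_mul, ← ee_add]; congr 1; ring
    simp_rw [this]
    rw [← Finset.mul_sum, geom_sum_eq h1, norm_mul, norm_ee, one_mul, norm_div]
    gcongr
    refine (norm_sub_le _ _).trans ?_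
    rw [norm_pow, norm_ee]; norm_num

lemma EQ {b : ℝ} (hb : Irrational b) {φ : ℝ → ℝ} (hc : Continuous φ)
    (hp : Function.Periodic φ 1) {η : ℝ} (hη : 0 < η) :
    ∃ C : ℝ, ∀ (s : ℕ) (x : ℝ),
      |∑ l ∈ Finset.range s, φ (x + l * b) - s * ∫ t in (0:ℝ)..1, φ t| ≤ s * η + C := by
  have : Fact ((0:ℝ) < 1) := ⟨one_pos⟩
  have hcl : Continuous (fun x : AddCircle (1:ℝ) => ((hp.lift x : ℝ) : ℂ)) := by
    refine Complex.continuous_ofReal.comp ?_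
    exact continuous_coinduced_dom.mpr hc
  let F : C(AddCircle (1:ℝ), ℂ) := ⟨_, hcl⟩
  have hF : F ∈ (Submodule.span ℂ (Set.range <| @fourier 1)).topologicalClosure := by
    rw [span_fourier_closure_eq_top]; trivial
  rw [← SetLike.mem_coe, Submodule.topologicalClosure_coe, Metric.mem_closure_iff] at hF
  obtain ⟨G, hG, hFG⟩ := hF (η/2) (by positivity)
  have hgood : Good b (fun x => G (x : AddCircle (1:ℝ))) := by
    rw [SetLike.mem_coe] at hG
    clear hFG
    have hKint : ∀ K : C(AddCircle (1:ℝ), ℂ),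
        IntervalIntegrable (fun x : ℝ => K (x : AddCircle (1:ℝ))) MeasureTheory.volume 0 1 := by
      intro K
      exact (K.continuous.comp (AddCircle.continuous_mk' 1)).intervalIntegrable _ _
    induction hG using Submodule.span_induction with
    | mem f hf =>
      obtain ⟨k, rfl⟩ := hf
      have : (fun x : ℝ => fourier k (x : AddCircle (1:ℝ))) = fun x => ee (k * x) := by
        funext x; rw [fourier_coe_apply, ee]; congr 1; push_cast; simp; ring
      rw [this]; exact good_ee hb k
    | zero => exact ⟨0, fun s x => by simp⟩
    | add f g _ _ hf hg =>
      obtain ⟨C, hC⟩ := hf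
      obtain ⟨D, hD⟩ := hg
      refine ⟨C + D, fun s x => ?_⟩
      have := norm_add_le_of_le (hC s x) (hD s x)
      simp only [ContinuousMap.add_apply]
      rw [intervalIntegral.integral_add (hKint f) (hKint g), Finset.sum_add_distrib]
      refine le_trans (le_of_eq ?_) this
      congr 1; dsimp only; ring
    | smul a f _ hf =>
      obtain ⟨C, hC⟩ := hf
      refine ⟨‖a‖ * C, fun s x => ?_⟩
      simp only [ContinuousMap.smul_apply, intervalIntegral.integral_smul]
      rw [← Finset.smul_sum, smul_eq_mul, smul_eq_mul,
        show ∀ u v : ℂ, a * u - s * (a * v) = a * (u - s * v) by intros; ring, norm_mul]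
      gcongr
      exact hC s x
  obtain ⟨C, hC⟩ := hgood
  refine ⟨C, fun s x => ?_⟩
  have hd : ∀ t : ℝ, ‖(φ t : ℂ) - G (t : AddCircle (1:ℝ))‖ ≤ η/2 := by
    intro t
    have := ContinuousMap.dist_apply_le_dist (f := F) (g := G) (t : AddCircle (1:ℝ))
    rw [dist_eq_norm] at this
    have h2 : F (t : AddCircle (1:ℝ)) = (φ t : ℂ) := rfl
    rw [h2] at this
    linarith
  have h1 : ‖∑ l ∈ Finset.range s, ((φ (x + l * b) : ℂ) - G ((x + l * b : ℝ) : AddCircle (1:ℝ)))‖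
      ≤ s * (η/2) := by
    refine (norm_sum_le _ _).trans ?_
    refine (Finset.sum_le_card_nsmul _ _ (η/2) fun i _ => hd _).trans ?_
    simp
  have h2 : ‖∫ t in (0:ℝ)..1, ((φ t : ℂ) - G (t : AddCircle (1:ℝ)))‖ ≤ η / 2 := by
    have := intervalIntegral.norm_integral_le_of_norm_le_const (a := 0) (b := 1)
      (f := fun t : ℝ => ((φ t : ℂ) - G (t : AddCircle (1:ℝ)))) (C := η/2) fun t _ => hd t
    simpa using this
  have i1 : IntervalIntegrable (fun t => (φ t : ℂ)) MeasureTheory.volume 0 1 :=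
    (Complex.continuous_ofReal.comp hc).intervalIntegrable _ _
  have i2 : IntervalIntegrable (fun t : ℝ => G (t : AddCircle (1:ℝ))) MeasureTheory.volume 0 1 :=
    (G.continuous.comp (AddCircle.continuous_mk' 1)).intervalIntegrable _ _
  rw [intervalIntegral.integral_sub i1 i2] at h2
  rw [Finset.sum_sub_distrib] at h1
  have h3 := hC s x
  have h4 : ‖(s:ℂ) * ((∫ t in (0:ℝ)..1, (φ t : ℂ)) - ∫ t in (0:ℝ)..1, G (t : AddCircle (1:ℝ)))‖
      ≤ s * (η/2) := by
    rw [norm_mul]; simp only [RCLike.norm_natCast]; gcongr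
  have h5 := norm_sub_le_of_le (norm_add_le_of_le h1 h3) h4
  rw [← Real.norm_eq_abs, ← Complex.norm_real]
  push_cast
  rw [← intervalIntegral.integral_ofReal]
  refine le_trans (le_of_eq ?_) (h5.trans (le_of_eq ?_))
  · congr 1; ring
  · ring

lemma UB {b : ℝ} (hb : Irrational b) {g : ℝ → ℂ} (hg : Continuous g)
    (hp : Function.Periodic g 1) {N : ℕ} (hN : 1 ≤ N) {Λ : ℝ}
    (h : (N:ℝ)⁻¹ * ∫ x in (0:ℝ)..1, Real.log (opNorm2 (cp g b N x)) < Λ) :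
    ∃ C : ℝ, 0 < C ∧ ∀ n x, opNorm2 (cp g b n x) ≤ C * Real.exp (n * Λ) := by
  have hN0 : (0:ℝ) < N := by exact_mod_cast hN
  set φ : ℝ → ℝ := fun x => Real.log (opNorm2 (cp g b N x)) with hφ
  set I := ∫ x in (0:ℝ)..1, φ x with hI
  have hNb : Irrational (N * b) := hb.natCast_mul (by omega)
  have hη : 0 < N * Λ - I := by
    rw [inv_mul_lt_iff₀ hN0] at h; linarith
  obtain ⟨C, hC⟩ := EQ hNb (continuous_logcp hg b N)
    (fun x => by simp only [cp_periodic hp b N x]) hη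
  -- multiples of N
  have hpos : ∀ n x, 0 < opNorm2 (cp g b n x) := fun n x => lt_of_lt_of_le one_pos (one_le_cp ..)
  have hmul : ∀ (s : ℕ) x, opNorm2 (cp g b (s * N) x) ≤ Real.exp (C + s * (N * Λ)) := by
    intro s x
    have h1 : opNorm2 (cp g b (s * N) x)
        ≤ Real.exp (∑ l ∈ Finset.range s, φ (x + l * (N * b))) := by
      induction s with
      | zero => simp [cp_zero, opNorm2_one]
      | succ s ih =>
        rw [Finset.sum_range_succ, Real.exp_add, show (s+1) * N = N + s * N by ring, cp_add]
        refine (opNorm2_mul_le _ _).trans ?_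
        rw [mul_comm]
        refine mul_le_mul ih ?_ (opNorm2_nonneg _) (Real.exp_pos _).le
        rw [hφ]; dsimp only
        rw [Real.exp_log (hpos _ _)]
        apply le_of_eq; congr 2; push_cast; ring
    refine h1.trans (Real.exp_le_exp.2 ?_)
    have h2 := (abs_le.1 (hC s x)).2
    have : (s:ℝ) * I + (s * (N * Λ - I) + C) = C + s * (N * Λ) := by ring
    rw [← this]; linarith
  -- bound for one step
  obtain ⟨M, hM⟩ : ∃ M : ℝ, ∀ i ∈ Finset.range N, ∀ x, opNorm2 (cp g b i x) ≤ M := by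
    have : ∀ i : ℕ, ∃ M : ℝ, ∀ x, opNorm2 (cp g b i x) ≤ M := by
      intro i
      obtain ⟨M, hM⟩ := (isCompact_Icc (a := (0:ℝ)) (b := 1)).exists_bound_of_continuousOn
        (f := fun x => opNorm2 (cp g b i x))
        ((continuous_opNorm2.comp (continuous_cp hg b i)).continuousOn)
      refine ⟨M, fun x => ?_⟩
      have hper : opNorm2 (cp g b i x) = opNorm2 (cp g b i (Int.fract x)) := by
        conv_lhs => rw [← Int.floor_add_fract x]
        have := (cp_periodic hp b i).int_mul ⌊x⌋ (Int.fract x)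
        rw [mul_one] at this
        rw [add_comm, this]
      rw [hper]
      exact (le_abs_self _).trans (hM _ ⟨Int.fract_nonneg x, (Int.fract_lt_one x).le⟩)
    choose M hM using this
    refine ⟨∑ i ∈ Finset.range N, M i, fun i hi x => (hM i x).trans ?_⟩
    refine Finset.single_le_sum (f := M) (fun j _ => ?_) hi
    exact (opNorm2_nonneg _).trans (hM j 0)
  have hMp : 0 < M := (hpos 0 0).trans_le (hM 0 (Finset.mem_range.2 hN) 0)
  refine ⟨M * Real.exp C * Real.exp (N * |Λ|), by positivity, fun n x => ?_⟩
  have hn : n = (n % N) + (n / N) * N := by rw [mul_comm]; exact (Nat.mod_add_div n N).symm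
  have hi : n % N < N := Nat.mod_lt _ (by omega)
  have e1 : opNorm2 (cp g b n x) ≤ M * Real.exp (C + (n / N : ℕ) * (N * Λ)) := by
    conv_lhs => rw [hn, cp_add]
    refine (opNorm2_mul_le _ _).trans ?_
    gcongr
    · exact opNorm2_nonneg _
    · exact hM _ (Finset.mem_range.2 hi) _
    · exact hmul _ _
  refine e1.trans ?_
  rw [mul_assoc, mul_assoc, ← Real.exp_add, ← Real.exp_add]
  gcongr
  have hn' : (n:ℝ) = (n % N : ℕ) + (n / N : ℕ) * N := by exact_mod_cast hn
  have h3 : ((n % N : ℕ) : ℝ) ≤ N := by exact_mod_cast hi.le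
  have h4 : -( (n % N : ℕ) * Λ) ≤ N * |Λ| := by
    rw [← mul_neg]
    calc _ ≤ ((n % N : ℕ) : ℝ) * |Λ| := by gcongr; exact neg_le_abs Λ
      _ ≤ _ := by gcongr
  rw [hn']; nlinarith

end AMO



namespace AMO

open Filter Topology Matrix
open scoped ComplexOrder

/-- entries of the rectangular band matrix -/
noncomputable def rent (α β : ℝ) (d : ℕ → ℂ) (r l : ℕ) : ℂ :=
  (if r = l then (α:ℂ) else 0) + (if r = l + 1 then d l else 0) + (if r = l + 2 then (β:ℂ) else 0)

/-- entries of the Gram matrix -/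
noncomputable def kent (α β : ℝ) (d : ℕ → ℂ) (i l : ℕ) : ℂ :=
  α * rent α β d i l + (starRingEnd ℂ) (d i) * rent α β d (i+1) l + β * rent α β d (i+2) l

lemma sum_rent (α β : ℝ) (d : ℕ → ℂ) (i l m : ℕ) (h : i + 3 ≤ m) :
    ∑ r ∈ Finset.range m, (starRingEnd ℂ) (rent α β d r i) * rent α β d r l = kent α β d i l := by
  have : ∀ r, (starRingEnd ℂ) (rent α β d r i) * rent α β d r l =
      (if r = i then (α:ℂ) * rent α β d r l else 0)
      + (if r = i + 1 then (starRingEnd ℂ) (d i) * rent α β d r l else 0)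
      + (if r = i + 2 then (β:ℂ) * rent α β d r l else 0) := by
    intro r
    conv_lhs => rw [rent]
    simp only [map_add, apply_ite (starRingEnd ℂ), map_zero, Complex.conj_ofReal, add_mul, ite_mul,
      zero_mul]
  simp_rw [this, Finset.sum_add_distrib, Finset.sum_ite_eq', Finset.mem_range]
  rw [if_pos (by omega), if_pos (by omega), if_pos (by omega), kent]

/-- rectangular band matrix -/
noncomputable def Rm (α β : ℝ) (d : ℕ → ℂ) (n : ℕ) : Matrix (Fin (n+2)) (Fin n) ℂ :=
  Matrix.of fun r l => rent α β d r l

/-- Gram matrix -/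
noncomputable def Km (α β : ℝ) (d : ℕ → ℂ) (n : ℕ) : Matrix (Fin n) (Fin n) ℂ :=
  Matrix.of fun i l => kent α β d i l

/-- Gram matrix without the first row -/
noncomputable def Xm (α β : ℝ) (d : ℕ → ℂ) (n : ℕ) : Matrix (Fin n) (Fin n) ℂ :=
  Matrix.of fun i l => kent α β d i l - (if (i:ℕ) = 0 ∧ (l:ℕ) = 0 then (α:ℂ)^2 else 0)

/-- square tridiagonal matrix -/
noncomputable def Sm (α β : ℝ) (d : ℕ → ℂ) (n : ℕ) : Matrix (Fin n) (Fin n) ℂ :=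
  Matrix.of fun i l => rent α β d (i+1) l

lemma Km_eq (α β : ℝ) (d : ℕ → ℂ) (n : ℕ) : Km α β d n = (Rm α β d n)ᴴ * Rm α β d n := by
  ext i l
  rw [Matrix.mul_apply]
  simp only [Km, Rm, Matrix.of_apply, Matrix.conjTranspose_apply]
  rw [← sum_rent α β d i l (n+2) (by omega)]
  exact (Finset.sum_range (fun r => (starRingEnd ℂ) (rent α β d r i) * rent α β d r l))

lemma Km_psd (α β : ℝ) (d : ℕ → ℂ) (n : ℕ) : (Km α β d n).PosSemidef := by
  rw [Km_eq]; exact Matrix.posSemidef_conjTranspose_mul_self _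

lemma Sm_gram (α β : ℝ) (d : ℕ → ℂ) (n : ℕ) (i l : Fin n) :
    ((Sm α β d n)ᴴ * Sm α β d n) i l =
      Xm α β d n i l - (if (i:ℕ) + 1 = n ∧ (l:ℕ) + 1 = n then (β:ℂ)^2 else 0) := by
  rw [Matrix.mul_apply]
  simp only [Sm, Xm, Matrix.of_apply, Matrix.conjTranspose_apply]
  rw [← sum_rent α β d i l (n+2) (by omega)]
  have h := (Finset.sum_range (n := n)
    (fun r => (starRingEnd ℂ) (rent α β d (r+1) i) * rent α β d (r+1) l)).symm
  refine Eq.trans h ?_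
  rw [Finset.sum_range_succ, Finset.sum_range_succ']
  have h1 : (starRingEnd ℂ) (rent α β d 0 i) * rent α β d 0 l =
      if (i:ℕ) = 0 ∧ (l:ℕ) = 0 then (α:ℂ)^2 else 0 := by
    have e : ∀ k : ℕ, rent α β d 0 k = if k = 0 then (α:ℂ) else 0 := by
      intro k
      rw [rent, if_neg (show ¬ 0 = k + 1 by omega), if_neg (show ¬ 0 = k + 2 by omega)]
      simp [eq_comm]
    rw [e, e]
    by_cases hi : (i:ℕ) = 0 <;> by_cases hl : (l:ℕ) = 0 <;> simp [hi, hl, pow_two]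
  have h2 : (starRingEnd ℂ) (rent α β d (n+1) i) * rent α β d (n+1) l =
      if (i:ℕ) + 1 = n ∧ (l:ℕ) + 1 = n then (β:ℂ)^2 else 0 := by
    have e : ∀ k : Fin n, rent α β d (n+1) k = if (k:ℕ) + 1 = n then (β:ℂ) else 0 := by
      intro k
      have := k.2
      rw [rent, if_neg (by omega), if_neg (by omega)]
      by_cases hk : (k:ℕ) + 1 = n
      · rw [if_pos (by omega), if_pos hk]; simp
      · rw [if_neg (by omega), if_neg hk]; simp
    rw [e, e]
    by_cases hi : (i:ℕ) + 1 = n <;> by_cases hl : (l:ℕ) + 1 = n <;> simp [hi, hl, pow_two]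
  rw [h1, h2]; ring

lemma det_rank_one {n : ℕ} (A : Matrix (Fin (n+1)) (Fin (n+1)) ℂ) (i : Fin (n+1)) (c : ℂ) :
    (A + Matrix.single i i c).det = A.det + c * (A.submatrix i.succAbove i.succAbove).det := by
  have h : A + Matrix.single i i c = A.updateRow i (A i + c • Pi.single i 1) := by
    ext k l
    by_cases hk : k = i
    · subst hk
      simp [Matrix.single_apply, Pi.single_apply, eq_comm]
    · simp [Matrix.updateRow_ne hk, Matrix.single_apply, Ne.symm hk]
  rw [h, Matrix.det_updateRow_add, Matrix.updateRow_eq_self, Matrix.det_updateRow_smul,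
    ← Matrix.adjugate_apply, Matrix.adjugate_fin_succ_eq_det_submatrix]
  rw [Even.neg_one_pow ⟨_, rfl⟩]; simp

/-- shift -/
def sh (d : ℕ → ℂ) : ℕ → ℂ := fun j => d (j+1)

lemma rent_shift (α β : ℝ) (d : ℕ → ℂ) (m r l : ℕ) :
    rent α β d (m + r) (m + l) = rent α β (fun j => d (m + j)) r l := by
  simp [rent, add_assoc]

lemma kent_shift (α β : ℝ) (d : ℕ → ℂ) (m i l : ℕ) :
    kent α β d (m + i) (m + l) = kent α β (fun j => d (m + j)) i l := by
  simp only [kent, ← rent_shift, add_assoc]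

lemma sh_eq (d : ℕ → ℂ) : sh d = fun j => d (1 + j) := by funext j; rw [sh, add_comm]

lemma det_Km_succ (α β : ℝ) (d : ℕ → ℂ) (n : ℕ) :
    (Km α β d (n+1)).det = (Xm α β d (n+1)).det + (α:ℂ)^2 * (Km α β (sh d) n).det := by
  have h : Km α β d (n+1) = Xm α β d (n+1) + Matrix.single 0 0 ((α:ℂ)^2) := by
    ext i l
    simp only [Km, Xm, Matrix.of_apply, Matrix.add_apply, Matrix.single_apply]
    have : ((i:ℕ) = 0 ∧ (l:ℕ) = 0) ↔ (0 = i ∧ 0 = l) := by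
      rw [Fin.ext_iff, Fin.ext_iff]; simp [eq_comm]
    simp only [this, sub_add_cancel]
  rw [h, det_rank_one]
  congr 3
  ext i l
  simp only [Km, Xm, Matrix.of_apply, Matrix.submatrix_apply, Fin.zero_succAbove, Fin.val_succ]
  rw [if_neg (by omega), sub_zero, add_comm (i:ℕ), add_comm (l:ℕ), kent_shift, sh_eq]

lemma det_Xm_succ (α β : ℝ) (d : ℕ → ℂ) (n : ℕ) :
    (Xm α β d (n+1)).det = ((‖(Sm α β d (n+1)).det‖^2 : ℝ) : ℂ) + (β:ℂ)^2 * (Xm α β d n).det := by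
  have h : Xm α β d (n+1) =
      (Sm α β d (n+1))ᴴ * Sm α β d (n+1) + Matrix.single (Fin.last n) (Fin.last n) ((β:ℂ)^2) := by
    ext i l
    rw [Matrix.add_apply, Sm_gram, Matrix.single_apply]
    have : ((i:ℕ) + 1 = n+1 ∧ (l:ℕ) + 1 = n + 1) ↔ (Fin.last n = i ∧ Fin.last n = l) := by
      rw [Fin.ext_iff, Fin.ext_iff]; simp [eq_comm]
    simp only [this, sub_add_cancel]
  rw [h, det_rank_one]
  congr 1
  · rw [Matrix.det_mul, Matrix.det_conjTranspose]
    have := Complex.conj_mul' (Sm α β d (n+1)).det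
    rw [Complex.ofReal_pow, ← this]; rfl
  · congr 2
    ext i l
    rw [Matrix.submatrix_apply, Sm_gram]
    simp only [Xm, Matrix.of_apply, Fin.succAbove_last, Fin.val_castSucc]
    have := i.2
    rw [if_neg (c := (i:ℕ) + 1 = n + 1 ∧ (l:ℕ) + 1 = n + 1) (by omega), sub_zero]

/-- continuants -/
noncomputable def pp (c : ℝ) : ℕ → (ℕ → ℂ) → ℂ
  | 0, _ => 1
  | 1, d => d 0
  | n+2, d => d 0 * pp c (n+1) (sh d) - c * pp c n (sh (sh d))

lemma det_Sm (α β : ℝ) (n : ℕ) : ∀ d, (Sm α β d n).det = pp (α * β) n d := by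
  induction n using Nat.strong_induction_on with
  | _ n ih =>
    intro d
    match n, ih with
    | 0, _ => simp [pp]
    | 1, _ => simp [Sm, pp, rent]
    | n+2, ih =>
      have hsub : ((Sm α β d (n+2)).submatrix Fin.succ (Fin.succAbove 0)) = Sm α β (sh d) (n+1) := by
        ext i l
        simp only [Sm, Matrix.of_apply, Matrix.submatrix_apply, Fin.zero_succAbove, Fin.val_succ]
        rw [show (i:ℕ) + 1 + 1 = 1 + (i + 1) by ring, add_comm (l:ℕ), rent_shift, sh_eq]
      rw [Matrix.det_succ_row_zero, Fin.sum_univ_succ, Fin.sum_univ_succ, hsub, ih (n+1) (by omega)]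
      rw [Finset.sum_eq_zero]
      · have hsub2 : ((Sm α β d (n+2)).submatrix Fin.succ (Fin.succAbove (Fin.succ 0))).det
            = β * pp (α * β) n (sh (sh d)) := by
          rw [Matrix.det_succ_column_zero, Fin.sum_univ_succ, Finset.sum_eq_zero]
          · have : (((Sm α β d (n+2)).submatrix Fin.succ (Fin.succAbove (Fin.succ 0))).submatrix
              (Fin.succAbove 0) Fin.succ) = Sm α β (sh (sh d)) n := by
              ext i l
              simp only [Sm, Matrix.of_apply, Matrix.submatrix_apply, Fin.zero_succAbove,
                Fin.val_succ, Fin.succ_succAbove_succ]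
              rw [show (i:ℕ) + 1 + 1 + 1 = 1 + (1 + (i + 1)) by ring,
                show (l:ℕ) + 1 + 1 = 1 + (1 + l) by ring, rent_shift, rent_shift, sh_eq, sh_eq]
            rw [this, ih n (by omega)]
            simp [Sm, rent]
          · intro i _
            simp [Sm, rent]
        rw [hsub2]
        simp [Sm, rent, pp]; ring
      · intro i _
        simp [Sm, rent]

/-- real versions of the Gram determinants -/
noncomputable def Xr (α β : ℝ) : ℕ → (ℕ → ℂ) → ℝ
  | 0, _ => 1
  | n+1, d => ‖pp (α * β) (n+1) d‖^2 + β^2 * Xr α β n d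

/-- real versions of the Gram determinants -/
noncomputable def Yr (α β : ℝ) : ℕ → (ℕ → ℂ) → ℝ
  | 0, _ => 1
  | n+1, d => Xr α β (n+1) d + α^2 * Yr α β n (sh d)

lemma det_Xm (α β : ℝ) (n : ℕ) (d : ℕ → ℂ) : (Xm α β d n).det = (Xr α β n d : ℂ) := by
  induction n with
  | zero => simp [Xr]
  | succ n ih => rw [det_Xm_succ, ih, det_Sm, Xr]; push_cast; ring

lemma det_Km (α β : ℝ) (n : ℕ) : ∀ d, (Km α β d n).det = (Yr α β n d : ℂ) := by
  induction n with
  | zero => intro d; simp [Yr]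
  | succ n ih => intro d; rw [det_Km_succ, ih, det_Xm, Yr]; push_cast; ring

lemma Xr_nonneg (α β : ℝ) (n : ℕ) (d : ℕ → ℂ) : 0 ≤ Xr α β n d := by
  induction n with
  | zero => simp [Xr]
  | succ n ih => rw [Xr]; positivity

lemma Yr_nonneg (α β : ℝ) (n : ℕ) : ∀ d, 0 ≤ Yr α β n d := by
  induction n with
  | zero => simp [Yr]
  | succ n ih => intro d; rw [Yr]; have := Xr_nonneg α β (n+1) d; have := ih (sh d); positivity

lemma pp_le_Xr (α β : ℝ) (n : ℕ) (d : ℕ → ℂ) : ‖pp (α*β) n d‖^2 ≤ Xr α β n d := by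
  cases n with
  | zero => simp [pp, Xr]
  | succ n => rw [Xr]; have := Xr_nonneg α β n d; nlinarith [sq_nonneg β, mul_nonneg (sq_nonneg β) this]

lemma Xr_le_Yr (α β : ℝ) (n : ℕ) (d : ℕ → ℂ) : Xr α β n d ≤ Yr α β n d := by
  cases n with
  | zero => simp [Yr, Xr]
  | succ n => rw [Yr]; have := Yr_nonneg α β n (sh d); nlinarith [mul_nonneg (sq_nonneg α) this]

/-- upper bound -/
lemma Yr_le {α β C μ : ℝ} (hC : 1 ≤ C) (hμ : 0 ≤ μ) (hα : |α| ≤ μ) (hβ : |β| ≤ μ) (n : ℕ) :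
    ∀ d : ℕ → ℂ, (∀ m k, ‖pp (α*β) k (fun j => d (m + j))‖ ≤ C * μ^k) →
      Yr α β n d ≤ (n+1)^2 * (C^2 * μ^(2*n)) := by
  have ha : α^2 ≤ μ^2 := sq_le_sq' (abs_le.1 hα).1 (abs_le.1 hα).2
  have hb : β^2 ≤ μ^2 := sq_le_sq' (abs_le.1 hβ).1 (abs_le.1 hβ).2
  have hX : ∀ n, ∀ d : ℕ → ℂ, (∀ m k, ‖pp (α*β) k (fun j => d (m + j))‖ ≤ C * μ^k) →
      Xr α β n d ≤ (n+1) * (C^2 * μ^(2*n)) := by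
    intro n d h
    induction n with
    | zero => simp [Xr]; exact hC.trans (le_abs_self C)
    | succ n ih =>
      rw [Xr]
      have h1 := h 0 (n+1)
      simp only [zero_add] at h1
      have h2 := pow_le_pow_left₀ (norm_nonneg _) h1 2
      have h3 : β^2 * Xr α β n d ≤ μ^2 * ((n+1) * (C^2 * μ^(2*n))) := by
        have := Xr_nonneg α β n d
        gcongr
      have e : ((n+1:ℕ):ℝ)= n+1 := by push_cast; ring
      rw [e]
      calc _ ≤ (C * μ^(n+1))^2 + μ^2 * ((n+1) * (C^2 * μ^(2*n))) := add_le_add h2 h3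
        _ = _ := by ring
  induction n with
  | zero => intro d h; simp [Yr]; exact hC.trans (le_abs_self C)
  | succ n ih =>
    intro d h
    rw [Yr]
    have h1 := hX (n+1) d h
    have h2 := ih (sh d) (fun m k => by
      have := h (m+1) k
      refine le_trans (le_of_eq ?_) this
      congr 2; funext j; rw [sh]; congr 1; ring)
    have h3 : α^2 * Yr α β n (sh d) ≤ μ^2 * ((n+1)^2 * (C^2 * μ^(2*n))) := by
      have := Yr_nonneg α β n (sh d)
      gcongr
    have e : ((n+1:ℕ):ℝ)= n+1 := by push_cast; ring
    rw [e] at h1 ⊢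
    have h4 : 0 ≤ C^2 * μ^(2*(n+1)) := by positivity
    have h5 : μ^2 * ((n+1)^2 * (C^2 * μ^(2*n))) = ((n:ℝ)+1)^2 * (C^2 * μ^(2*(n+1))) := by ring
    rw [h5] at h3
    nlinarith [mul_nonneg (show (0:ℝ) ≤ n by positivity) h4]

end AMO



namespace AMO

open Filter Topology Matrix
open scoped ComplexOrder

lemma herm_det_add {n : Type*} [Fintype n] [DecidableEq n] {M : Matrix n n ℂ} (hM : M.IsHermitian)
    (δ : ℝ) : (M + (δ:ℂ) • (1 : Matrix n n ℂ)).det = ((∏ i, (hM.eigenvalues i + δ) : ℝ) : ℂ) := by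
  have h : M + (δ:ℂ) • (1 : Matrix n n ℂ) =
      Unitary.conjStarAlgAut ℂ _ hM.eigenvectorUnitary
        (diagonal (fun i => ((hM.eigenvalues i + δ : ℝ) : ℂ))) := by
    conv_lhs => rw [hM.spectral_theorem]
    rw [← map_one (Unitary.conjStarAlgAut ℂ _ hM.eigenvectorUnitary), ← map_smul, ← map_add]
    congr 1
    rw [smul_one_eq_diagonal, diagonal_add]
    congr 1; funext i; simp
  rw [h, Unitary.conjStarAlgAut_apply, det_mul_comm, ← mul_assoc]
  simp

lemma herm_trace_pow {n : Type*} [Fintype n] [DecidableEq n] {M : Matrix n n ℂ}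
    (hM : M.IsHermitian) (r : ℕ) :
    (M ^ r).trace = ((∑ i, (hM.eigenvalues i)^r : ℝ) : ℂ) := by
  have h : M ^ r =
      Unitary.conjStarAlgAut ℂ _ hM.eigenvectorUnitary
        (diagonal (fun i => (((hM.eigenvalues i)^r : ℝ) : ℂ))) := by
    conv_lhs => rw [hM.spectral_theorem]
    rw [← map_pow, diagonal_pow]
    congr 2; funext i; simp
  rw [h, Unitary.conjStarAlgAut_apply, trace_mul_comm, ← mul_assoc]
  simp [trace]

lemma posDef_det_le {n : Type*} [Fintype n] [DecidableEq n] {M : Matrix n n ℂ} (hM : M.PosDef) :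
    M.det.re ≤ Real.exp (M.trace.re - Fintype.card n) := by
  have h1 := hM.1.det_eq_prod_eigenvalues
  have h2 := hM.1.trace_eq_sum_eigenvalues
  have e1 : M.det.re = ∏ i, hM.1.eigenvalues i := by
    rw [h1]; norm_cast
  have e2 : M.trace.re = ∑ i, hM.1.eigenvalues i := by
    rw [h2]; norm_cast
  rw [e1, e2]
  have : (∑ i, hM.1.eigenvalues i) - Fintype.card n = ∑ i, (hM.1.eigenvalues i - 1) := by
    rw [Finset.sum_sub_distrib]; simp
  rw [this, Real.exp_sum]
  refine Finset.prod_le_prod (fun i _ => (hM.eigenvalues_pos i).le) fun i _ => ?_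
  have := Real.add_one_le_exp (hM.1.eigenvalues i - 1)
  linarith

open scoped MatrixOrder in
lemma posDef_factor {n : Type*} [Fintype n] [DecidableEq n] {M : Matrix n n ℂ} (hM : M.PosDef) :
    ∃ y : Matrix n n ℂ, IsUnit y ∧ M = yᴴ * y := by
  obtain ⟨y, hy, h⟩ := CStarAlgebra.isStrictlyPositive_iff_eq_star_mul_self.mp
        hM.isStrictlyPositive
  exact ⟨y, hy, h⟩

lemma posDef_det_re {n : Type*} [Fintype n] [DecidableEq n] {M : Matrix n n ℂ} (hM : M.PosDef) :
    0 < M.det.re ∧ M.det = (M.det.re : ℂ) := by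
  have := hM.det_pos
  rw [Complex.lt_def] at this
  refine ⟨this.1, ?_⟩
  apply Complex.ext <;> simp [this.2.symm]

lemma fischer {m n : Type*} [Fintype n] [DecidableEq n] [Fintype m] [DecidableEq m]
    {M : Matrix (m ⊕ n) (m ⊕ n) ℂ} (hM : M.PosDef) :
    M.det.re ≤ M.toBlocks₁₁.det.re * M.toBlocks₂₂.det.re := by
  have hA : M.toBlocks₁₁.PosDef := hM.submatrix Sum.inl_injective
  have hD : M.toBlocks₂₂.PosDef := hM.submatrix Sum.inr_injective
  obtain ⟨y, hy, hAy⟩ := posDef_factor hA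
  obtain ⟨z, hz, hDz⟩ := posDef_factor hD
  have hy' := (Matrix.isUnit_iff_isUnit_det _).1 hy
  have hz' := (Matrix.isUnit_iff_isUnit_det _).1 hz
  set W : Matrix (m ⊕ n) (m ⊕ n) ℂ := fromBlocks y⁻¹ 0 0 z⁻¹ with hW
  have hWd : W.det = y.det⁻¹ * z.det⁻¹ := by
    rw [hW, det_fromBlocks_zero₂₁, det_nonsing_inv, det_nonsing_inv]; simp
  have hWu : IsUnit W := by
    rw [Matrix.isUnit_iff_isUnit_det, hWd]
    exact (hy'.inv).mul hz'.inv
  have hP : (Wᴴ * M * W).PosDef :=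
    hM.conjTranspose_mul_mul_same (Matrix.mulVec_injective_of_isUnit hWu)
  have hle := posDef_det_le hP
  have hM' : M = fromBlocks (yᴴ * y) M.toBlocks₁₂ M.toBlocks₂₁ (zᴴ * z) := by
    rw [← hAy, ← hDz, fromBlocks_toBlocks]
  have htr : (Wᴴ * M * W).trace = Fintype.card (m ⊕ n) := by
    rw [hM', hW, fromBlocks_conjTranspose, fromBlocks_multiply, fromBlocks_multiply]
    have htb : ∀ (P : Matrix m m ℂ) (Q : Matrix m n ℂ) (R : Matrix n m ℂ) (S : Matrix n n ℂ),
        (fromBlocks P Q R S).trace = P.trace + S.trace := by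
      intros; simp [trace, Fintype.sum_sum_type]
    rw [htb]
    simp only [conjTranspose_zero, Matrix.zero_mul, Matrix.mul_zero, add_zero, zero_add]
    have c1 : (y⁻¹)ᴴ * (yᴴ * y) * y⁻¹ = 1 := by
      rw [← mul_assoc, ← conjTranspose_mul, mul_nonsing_inv _ hy']
      simp [mul_nonsing_inv _ hy']
    have c2 : (z⁻¹)ᴴ * (zᴴ * z) * z⁻¹ = 1 := by
      rw [← mul_assoc, ← conjTranspose_mul, mul_nonsing_inv _ hz']
      simp [mul_nonsing_inv _ hz']
    rw [c1, c2]; simp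
  rw [htr] at hle
  simp only [Complex.natCast_re, sub_self, Real.exp_zero] at hle
  rw [det_mul, det_mul, det_conjTranspose, mul_comm (star W.det), mul_assoc] at hle
  have e3 : star W.det * W.det = ((‖W.det‖^2 : ℝ) : ℂ) := by
    rw [Complex.ofReal_pow, ← Complex.conj_mul']; rfl
  rw [e3, Complex.re_mul_ofReal] at hle
  have e4 : M.toBlocks₁₁.det.re = ‖y.det‖^2 := by
    rw [hAy, det_mul, det_conjTranspose]
    have : star y.det * y.det = ((‖y.det‖^2 : ℝ) : ℂ) := by
      rw [Complex.ofReal_pow, ← Complex.conj_mul']; rfl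
    rw [this]; exact Complex.ofReal_re _
  have e5 : M.toBlocks₂₂.det.re = ‖z.det‖^2 := by
    rw [hDz, det_mul, det_conjTranspose]
    have : star z.det * z.det = ((‖z.det‖^2 : ℝ) : ℂ) := by
      rw [Complex.ofReal_pow, ← Complex.conj_mul']; rfl
    rw [this]; exact Complex.ofReal_re _
  have hyn : 0 < ‖y.det‖ := norm_pos_iff.2 hy'.ne_zero
  have hzn : 0 < ‖z.det‖ := norm_pos_iff.2 hz'.ne_zero
  rw [e4, e5]
  rw [hWd, norm_mul, norm_inv, norm_inv, ← mul_inv, inv_pow, ← div_eq_mul_inv,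
    div_le_one (by positivity)] at hle
  linarith [mul_pow ‖y.det‖ ‖z.det‖ 2]

/-- regularised Gram determinant -/
noncomputable def Dt (α β δ : ℝ) (d : ℕ → ℂ) (n : ℕ) : ℝ :=
  ∏ i, ((Km_psd α β d n).1.eigenvalues i + δ)

lemma Dt_det (α β δ : ℝ) (d : ℕ → ℂ) (n : ℕ) :
    (Km α β d n + (δ:ℂ) • (1 : Matrix _ _ ℂ)).det = (Dt α β δ d n : ℂ) :=
  herm_det_add _ δ

lemma Dt_pos (α β : ℝ) {δ : ℝ} (hδ : 0 < δ) (d : ℕ → ℂ) (n : ℕ) : 0 < Dt α β δ d n :=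
  Finset.prod_pos fun i _ => by
    have := (Km_psd α β d n).eigenvalues_nonneg i
    linarith

lemma Dt_zero (α β : ℝ) (d : ℕ → ℂ) (n : ℕ) : Dt α β 0 d n = Yr α β n d := by
  have h := Dt_det α β 0 d n
  rw [Complex.ofReal_zero, zero_smul, add_zero, det_Km] at h
  exact_mod_cast h.symm

lemma Yr_le_Dt (α β : ℝ) {δ : ℝ} (hδ : 0 ≤ δ) (d : ℕ → ℂ) (n : ℕ) :
    Yr α β n d ≤ Dt α β δ d n := by
  rw [← Dt_zero]
  refine Finset.prod_le_prod (fun i _ => ?_) fun i _ => by linarith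
  simpa using (Km_psd α β d n).eigenvalues_nonneg i

lemma Dt_fischer (α β : ℝ) {δ : ℝ} (hδ : 0 < δ) (d : ℕ → ℂ) (m n : ℕ) :
    Dt α β δ d (m + n) ≤ Dt α β δ d m * Dt α β δ (fun j => d (m + j)) n := by
  have hpd : ∀ (d : ℕ → ℂ) n, (Km α β d n + (δ:ℂ) • (1 : Matrix _ _ ℂ)).PosDef := by
    intro d n
    refine PosDef.posSemidef_add (Km_psd α β d n) ?_
    exact PosDef.one.smul (by exact_mod_cast hδ)
  set M := (Km α β d (m+n) + (δ:ℂ) • (1 : Matrix _ _ ℂ)).submatrix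
    (finSumFinEquiv (m := m) (n := n)) (finSumFinEquiv (m := m) (n := n)) with hM
  have hMpd : M.PosDef := (hpd d (m+n)).submatrix (finSumFinEquiv (m := m) (n := n)).injective
  have h := fischer hMpd
  have h0 : M.det.re = Dt α β δ d (m+n) := by
    rw [hM, det_submatrix_equiv_self, Dt_det, Complex.ofReal_re]
  have h1 : M.toBlocks₁₁ = Km α β d m + (δ:ℂ) • (1 : Matrix _ _ ℂ) := by
    ext i l
    simp [hM, toBlocks₁₁, Km, one_apply]
  have h2 : M.toBlocks₂₂ = Km α β (fun j => d (m + j)) n + (δ:ℂ) • (1 : Matrix _ _ ℂ) := by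
    ext i l
    simp [hM, toBlocks₂₂, Km, one_apply, kent_shift]
  rw [h0, h1, h2, Dt_det, Dt_det] at h
  simpa using h

lemma Dt_fischer_mul (α β : ℝ) {δ : ℝ} (hδ : 0 < δ) (m : ℕ) {B : ℝ} (s : ℕ) :
    ∀ (d : ℕ → ℂ), (∀ k, Dt α β δ (fun j => d (k + j)) m ≤ B) → Dt α β δ d (s * m) ≤ B ^ s := by
  induction s with
  | zero => intro d h; rw [Nat.zero_mul]; simp [Dt]
  | succ s ih =>
    intro d h
    have hB : 0 ≤ B := (Dt_pos α β hδ _ m).le.trans (h 0)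
    rw [show (s+1) * m = m + s * m by ring, pow_succ']
    refine (Dt_fischer α β hδ d m (s*m)).trans ?_
    refine mul_le_mul (by simpa using h 0) (ih _ fun k => ?_) (Dt_pos α β hδ _ _).le hB
    have := h (m + k)
    simpa [add_assoc] using this

end AMO



namespace AMO

open Filter Topology Matrix
open scoped ComplexOrder

/-- parameters of the operators -/
structure Par where
  a : ℝ
  c : ℝ
  k : ℝ
  l : ℝ
  E : ℝ

/-- parameters of the adjoint -/
def Par.st (P : Par) : Par := ⟨P.c, P.a, P.l, P.k, P.E⟩
/-- parameters of the dual -/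
def Par.dual (P : Par) : Par := ⟨P.l, P.k, P.a, P.c, P.E⟩

/-- diagonal -/
noncomputable def ddz (P : Par) (b x : ℝ) (j : ℤ) : ℂ :=
  P.k * ee (x + j * b) + P.l * ee (-(x + j * b)) - P.E

/-- diagonal -/
noncomputable def dd (P : Par) (b x : ℝ) (j : ℕ) : ℂ := ddz P b x j

lemma dd_shift (P : Par) (b x : ℝ) (m : ℕ) : (fun j => dd P b x (m + j)) = dd P b (x + m * b) := by
  funext j
  simp only [dd, ddz]
  push_cast
  rw [show x + ((m:ℝ) + j) * b = x + m * b + j * b by ring]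

lemma star_ddz (P : Par) (b x : ℝ) (j : ℤ) : (starRingEnd ℂ) (ddz P b x j) = ddz P.st b x j := by
  simp only [ddz, Par.st, map_sub, map_add, map_mul, Complex.conj_ofReal, star_ee, neg_neg]
  ring

/-- the operator on finitely supported sequences -/
noncomputable def opT (P : Par) (b x : ℝ) : (ℤ →₀ ℂ) →ₗ[ℂ] (ℤ →₀ ℂ) :=
  Finsupp.linearCombination ℂ fun j : ℤ =>
    (Finsupp.single (j-1) (P.a:ℂ) + Finsupp.single (j+1) (P.c:ℂ) + Finsupp.single j (ddz P b x j))

lemma opT_single (P : Par) (b x : ℝ) (j : ℤ) : opT P b x (Finsupp.single j 1) =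
    Finsupp.single (j-1) (P.a:ℂ) + Finsupp.single (j+1) (P.c:ℂ) + Finsupp.single j (ddz P b x j) := by
  rw [opT, Finsupp.linearCombination_single, one_smul]

lemma opT_apply (P : Par) (b x : ℝ) (v : ℤ →₀ ℂ) (i : ℤ) :
    opT P b x v i = P.a * v (i+1) + P.c * v (i-1) + ddz P b x i * v i := by
  induction v using Finsupp.induction_linear with
  | zero => simp
  | add f g hf hg => rw [map_add, Finsupp.add_apply, hf, hg]; simp only [Finsupp.add_apply]; ring
  | single j z =>
    rw [show Finsupp.single j z = z • Finsupp.single j (1:ℂ) by simp, map_smul, opT_single]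
    simp only [Finsupp.smul_apply, Finsupp.add_apply, Finsupp.single_apply, smul_eq_mul]
    by_cases h1 : j - 1 = i
    · have h1' : j = i + 1 := by omega
      have h2 : ¬ j + 1 = i := by omega
      have h2' : ¬ j = i - 1 := by omega
      have h3 : ¬ j = i := by omega
      rw [if_pos h1, if_pos h1', if_neg h2, if_neg h2', if_neg h3, if_neg h3]; ring
    · have h1' : ¬ j = i + 1 := by omega
      by_cases h2 : j + 1 = i
      · have h2' : j = i - 1 := by omega
        have h3 : ¬ j = i := by omega
        rw [if_neg h1, if_neg h1', if_pos h2, if_pos h2', if_neg h3, if_neg h3]; ring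
      · have h2' : ¬ j = i - 1 := by omega
        rw [if_neg h1, if_neg h1', if_neg h2, if_neg h2']
        by_cases h3 : j = i
        · subst h3; simp; ring
        · rw [if_neg h3, if_neg h3]; ring

/-- `T*T` -/
noncomputable def opK (P : Par) (b x : ℝ) : Module.End ℂ (ℤ →₀ ℂ) := opT P.st b x ∘ₗ opT P b x

/-- the operator on the lattice -/
noncomputable def opL (P : Par) (b : ℝ) : ((ℤ × ℤ) →₀ ℂ) →ₗ[ℂ] ((ℤ × ℤ) →₀ ℂ) :=
  Finsupp.linearCombination ℂ fun p : ℤ × ℤ =>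
    (Finsupp.single (p.1-1, p.2) (P.a:ℂ) + Finsupp.single (p.1+1, p.2) (P.c:ℂ)
      + Finsupp.single (p.1, p.2+1) (P.k * ee (p.1 * b))
      + Finsupp.single (p.1, p.2-1) (P.l * ee (-(p.1 * b)))
      - Finsupp.single p (P.E:ℂ))

/-- `T*T` on the lattice -/
noncomputable def opLK (P : Par) (b : ℝ) : Module.End ℂ ((ℤ × ℤ) →₀ ℂ) := opL P.st b ∘ₗ opL P b

/-- fibration map -/
noncomputable def Fx (x : ℝ) : ((ℤ × ℤ) →₀ ℂ) →ₗ[ℂ] (ℤ →₀ ℂ) :=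
  Finsupp.linearCombination ℂ fun p : ℤ × ℤ => Finsupp.single p.1 (ee (p.2 * x))

lemma Fx_single (x : ℝ) (p : ℤ × ℤ) (c : ℂ) :
    Fx x (Finsupp.single p c) = Finsupp.single p.1 (c * ee (p.2 * x)) := by
  rw [Fx, Finsupp.linearCombination_single, Finsupp.smul_single, smul_eq_mul]

lemma Fx_opL (P : Par) (b x : ℝ) (v) : Fx x (opL P b v) = opT P b x (Fx x v) := by
  suffices h : Fx x ∘ₗ opL P b = opT P b x ∘ₗ Fx x from LinearMap.congr_fun h v
  refine Finsupp.lhom_ext' fun p => LinearMap.ext_ring ?_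
  obtain ⟨j, k⟩ := p
  simp only [LinearMap.comp_apply, Finsupp.lsingle_apply, Fx_single, opL,
    Finsupp.linearCombination_single, one_smul, map_add, map_sub, one_mul]
  rw [show Finsupp.single j (ee (k * x)) = ee (k*x) • Finsupp.single j (1:ℂ) by simp, map_smul,
    opT_single]
  simp only [smul_add, Finsupp.smul_single, smul_eq_mul]
  have h : ee (k * x) * ddz P b x j = P.k * ee (j * b) * ee ((k+1:ℤ) * x)
      + P.l * ee (-(j * b)) * ee ((k-1:ℤ) * x) - P.E * ee (k * x) := by
    rw [ddz, show ((k+1:ℤ):ℝ) * x = k * x + x by push_cast; ring,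
      show ((k-1:ℤ):ℝ) * x = k * x + (-x) by push_cast; ring,
      show -(x + j * b) = -x + -(j*b) by ring]
    simp only [ee_add]
    ring
  rw [h, Finsupp.single_sub, Finsupp.single_add, mul_comm (ee (k*x)) (P.a:ℂ),
    mul_comm (ee (k*x)) (P.c:ℂ)]
  abel

lemma Fx_opLK_pow (P : Par) (b x : ℝ) (r : ℕ) (v) :
    Fx x ((opLK P b ^ r) v) = (opK P b x ^ r) (Fx x v) := by
  induction r with
  | zero => simp
  | succ r ih =>
    rw [pow_succ', pow_succ', Module.End.mul_apply, Module.End.mul_apply, ← ih, opLK, opK,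
      LinearMap.comp_apply, LinearMap.comp_apply, Fx_opL, Fx_opL]

lemma Fx_integral (j : ℤ) (v : (ℤ × ℤ) →₀ ℂ) :
    Continuous (fun x => Fx x v j) ∧ ∫ x in (0:ℝ)..1, Fx x v j = v (j, 0) := by
  induction v using Finsupp.induction_linear with
  | zero => simp [continuous_const]
  | add f g hf hg =>
    simp only [map_add, Finsupp.add_apply]
    refine ⟨hf.1.add hg.1, ?_⟩
    rw [intervalIntegral.integral_add (hf.1.intervalIntegrable _ _) (hg.1.intervalIntegrable _ _),
      hf.2, hg.2]
  | single p c =>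
    obtain ⟨i, k⟩ := p
    simp only [Fx_single, Finsupp.single_apply, Prod.mk.injEq]
    by_cases h : i = j
    · simp only [h, if_true, true_and]
      refine ⟨continuous_const.mul (continuous_ee.comp (by fun_prop)), ?_⟩
      rw [intervalIntegral.integral_const_mul, integral_ee]
      split_ifs <;> simp
    · simp [h, continuous_const]

/-- moments -/
noncomputable def tau (P : Par) (b : ℝ) (r : ℕ) (m : ℤ) : ℂ :=
  (opLK P b ^ r) (Finsupp.single (m, 0) 1) (m, 0)

lemma tau_integral (P : Par) (b : ℝ) (r : ℕ) (m : ℤ) :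
    Continuous (fun x => (opK P b x ^ r) (Finsupp.single m 1) m) ∧
    ∫ x in (0:ℝ)..1, (opK P b x ^ r) (Finsupp.single m 1) m = tau P b r m := by
  have h := Fx_integral m ((opLK P b ^ r) (Finsupp.single (m, 0) 1))
  have e : ∀ x, Fx x ((opLK P b ^ r) (Finsupp.single (m, 0) 1)) m
      = (opK P b x ^ r) (Finsupp.single m 1) m := by
    intro x; rw [Fx_opLK_pow, Fx_single]; simp [ee_zero]
  simp_rw [e] at h
  exact h

/-- duality map -/
noncomputable def Gd (b : ℝ) (m m' : ℤ) : ((ℤ × ℤ) →₀ ℂ) →ₗ[ℂ] ((ℤ × ℤ) →₀ ℂ) :=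
  Finsupp.linearCombination ℂ fun p : ℤ × ℤ =>
    Finsupp.single (p.2 + m', m - p.1) (ee (-(p.1 * (p.2 + m') * b)))

lemma Gd_single (b : ℝ) (m m' : ℤ) (p : ℤ × ℤ) (c : ℂ) :
    Gd b m m' (Finsupp.single p c)
      = Finsupp.single (p.2 + m', m - p.1) (c * ee (-(p.1 * (p.2 + m') * b))) := by
  rw [Gd, Finsupp.linearCombination_single, Finsupp.smul_single, smul_eq_mul]

lemma Gd_opL (P : Par) (b : ℝ) (m m' : ℤ) (v) :
    Gd b m m' (opL P b v) = opL P.dual b (Gd b m m' v) := by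
  suffices h : Gd b m m' ∘ₗ opL P b = opL P.dual b ∘ₗ Gd b m m' from LinearMap.congr_fun h v
  refine Finsupp.lhom_ext' fun p => LinearMap.ext_ring ?_
  obtain ⟨j, k⟩ := p
  simp only [LinearMap.comp_apply, Finsupp.lsingle_apply, Gd_single, one_mul]
  simp only [opL, Finsupp.linearCombination_single, one_smul, map_add, map_sub, Gd_single,
    smul_add, smul_sub, Finsupp.smul_single, smul_eq_mul, Par.dual]
  have e1 : (P.a:ℂ) * ee (-(((j-1:ℤ):ℝ) * (k + m') * b))
      = ee (-(j * (k + m') * b)) * (P.a * ee (((k + m' : ℤ):ℝ) * b)) := by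
    rw [mul_left_comm, ← ee_add]; congr 2; push_cast; ring
  have e2 : (P.c:ℂ) * ee (-(((j+1:ℤ):ℝ) * (k + m') * b))
      = ee (-(j * (k + m') * b)) * (P.c * ee (-(((k + m' : ℤ):ℝ) * b))) := by
    rw [mul_left_comm, ← ee_add]; congr 2; push_cast; ring
  have e3 : (P.k:ℂ) * ee (j * b) * ee (-((j:ℝ) * (((k+1:ℤ):ℝ) + m') * b))
      = ee (-(j * (k + m') * b)) * P.k := by
    rw [mul_assoc, ← ee_add, mul_comm]; congr 2; push_cast; ring
  have e4 : (P.l:ℂ) * ee (-(j * b)) * ee (-((j:ℝ) * (((k-1:ℤ):ℝ) + m') * b))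
      = ee (-(j * (k + m') * b)) * P.l := by
    rw [mul_assoc, ← ee_add, mul_comm]; congr 2; push_cast; ring
  rw [e1, e2, e3, e4, mul_comm (P.E:ℂ), show m - (j - 1) = m - j + 1 by ring,
    show m - (j + 1) = m - j - 1 by ring, show k + 1 + m' = k + m' + 1 by ring,
    show k - 1 + m' = k + m' - 1 by ring]
  abel

lemma Gd_opLK_pow (P : Par) (b : ℝ) (m m' : ℤ) (r : ℕ) (v) :
    Gd b m m' ((opLK P b ^ r) v) = (opLK P.dual b ^ r) (Gd b m m' v) := by
  induction r with
  | zero => simp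
  | succ r ih =>
    rw [pow_succ', pow_succ', Module.End.mul_apply, Module.End.mul_apply, ← ih, opLK, opLK,
      LinearMap.comp_apply, LinearMap.comp_apply, Gd_opL, Gd_opL]
    rfl

lemma Gd_coeff (b : ℝ) (m m' : ℤ) (v : (ℤ × ℤ) →₀ ℂ) :
    Gd b m m' v (m', 0) = ee (-(m * m' * b)) * v (m, 0) := by
  induction v using Finsupp.induction_linear with
  | zero => simp
  | add f g hf hg => simp only [map_add, Finsupp.add_apply, hf, hg]; ring
  | single p c =>
    obtain ⟨i, k⟩ := p
    simp only [Gd_single, Finsupp.single_apply, Prod.mk.injEq]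
    by_cases h : i = m ∧ k = 0
    · obtain ⟨rfl, rfl⟩ := h
      simp [mul_comm]
    · rw [if_neg h, if_neg (by omega), mul_zero]

lemma tau_dual (P : Par) (b : ℝ) (r : ℕ) (m m' : ℤ) : tau P b r m = tau P.dual b r m' := by
  have h1 := Gd_coeff b m m' ((opLK P b ^ r) (Finsupp.single (m, 0) 1))
  rw [Gd_opLK_pow, Gd_single] at h1
  simp only [zero_add, sub_self, one_mul] at h1
  rw [show Finsupp.single (m', (0:ℤ)) (ee (-((m:ℝ) * (((0:ℤ):ℝ) + m') * b)))
    = ee (-(m * m' * b)) • Finsupp.single (m', 0) (1:ℂ) by simp, map_smul, Finsupp.smul_apply,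
    smul_eq_mul] at h1
  exact (mul_left_cancel₀ (ee_ne_zero _) h1).symm

/-- support condition -/
def Sp (p q : ℤ) (v : ℤ →₀ ℂ) : Prop := ∀ i, (i < p ∨ q < i) → v i = 0

lemma Sp_opT {P : Par} {b x : ℝ} {p q : ℤ} {v : ℤ →₀ ℂ} (h : Sp p q v) :
    Sp (p-1) (q+1) (opT P b x v) := by
  intro i hi
  rw [opT_apply, h _ (by omega), h _ (by omega), h _ (by omega)]; simp

lemma Sp_opK {P : Par} {b x : ℝ} {p q : ℤ} {v : ℤ →₀ ℂ} (h : Sp p q v) :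
    Sp (p-2) (q+2) (opK P b x v) := by
  have := Sp_opT (P := P.st) (b := b) (x := x) (Sp_opT (P := P) (b := b) (x := x) h)
  intro i hi
  exact this i (by omega)

lemma Sp_opK_pow {P : Par} {b x : ℝ} (r : ℕ) (j : ℤ) :
    Sp (j-2*r) (j+2*r) ((opK P b x ^ r) (Finsupp.single j 1)) := by
  induction r with
  | zero =>
    intro i hi
    simp only [pow_zero, Module.End.one_apply]
    rw [Finsupp.single_apply, if_neg (by simp at hi; omega)]
  | succ r ih =>
    rw [pow_succ', Module.End.mul_apply]
    have := Sp_opK (P := P) (b := b) (x := x) ih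
    intro i hi
    exact this i (by push_cast at hi; omega)

lemma rent_sum (P : Par) (b x : ℝ) (n r : ℕ) {v : ℤ →₀ ℂ} (hv : Sp 0 (n-1) v) :
    ∑ l ∈ Finset.range n, rent P.a P.c (dd P b x) r l * v l = opT P b x v (r - 1) := by
  have : ∀ l : ℕ, rent P.a P.c (dd P b x) r l * v l =
      (if r = l then (P.a:ℂ) * v l else 0) + (if r = l + 1 then dd P b x l * v l else 0)
      + (if r = l + 2 then (P.c:ℂ) * v l else 0) := by
    intro l; simp only [rent, add_mul, ite_mul, zero_mul]
  simp_rw [this, Finset.sum_add_distrib]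
  rw [opT_apply, sub_add_cancel]
  have s1 : ∑ l ∈ Finset.range n, (if r = l then (P.a:ℂ) * v l else 0) = P.a * v r := by
    rw [Finset.sum_ite_eq]
    split_ifs with h
    · rfl
    · rw [Finset.mem_range] at h; rw [hv _ (by omega), mul_zero]
  have s2 : ∑ l ∈ Finset.range n, (if r = l + 1 then dd P b x l * v l else 0)
      = ddz P b x (r-1) * v (r-1) := by
    cases r with
    | zero => simp [hv (-1) (by omega)]
    | succ r =>
      simp only [Nat.add_right_cancel_iff]
      rw [Finset.sum_ite_eq]
      split_ifs with h
      · simp [dd]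
      · rw [Finset.mem_range] at h; rw [hv ((r+1:ℕ) - 1) (by omega), mul_zero]
  have s3 : ∑ l ∈ Finset.range n, (if r = l + 2 then (P.c:ℂ) * v l else 0)
      = P.c * v (r-1-1) := by
    match r with
    | 0 => simp [hv (-2) (by omega)]
    | 1 => simp [hv (-1) (by omega)]
    | r+2 =>
      simp only [Nat.add_right_cancel_iff]
      rw [Finset.sum_ite_eq]
      split_ifs with h
      · congr 2; push_cast; ring
      · rw [Finset.mem_range] at h; rw [hv ((r+2:ℕ) - 1 - 1) (by omega), mul_zero]
  rw [s1, s2, s3]; ring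

lemma kent_sum (P : Par) (b x : ℝ) (n i : ℕ) {v : ℤ →₀ ℂ} (hv : Sp 0 (n-1) v) :
    ∑ l ∈ Finset.range n, kent P.a P.c (dd P b x) i l * v l = opK P b x v i := by
  have : ∀ l : ℕ, kent P.a P.c (dd P b x) i l * v l =
      P.a * (rent P.a P.c (dd P b x) i l * v l)
      + (starRingEnd ℂ) (dd P b x i) * (rent P.a P.c (dd P b x) (i+1) l * v l)
      + P.c * (rent P.a P.c (dd P b x) (i+2) l * v l) := by
    intro l; rw [kent]; ring
  simp_rw [this, Finset.sum_add_distrib, ← Finset.mul_sum, rent_sum P b x n _ hv]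
  rw [opK, LinearMap.comp_apply, opT_apply P.st, dd, star_ddz]
  push_cast
  rw [show (i:ℤ) + 2 - 1 = i + 1 by ring, show (i:ℤ) + 1 - 1 = i by ring]
  simp only [Par.st]; ring

lemma Km_pow_local (P : Par) (b x : ℝ) (n : ℕ) (j : Fin n) (r : ℕ) (h1 : 2 * r ≤ (j:ℕ))
    (h2 : (j:ℕ) + 2 * r < n) (i : Fin n) :
    (Km P.a P.c (dd P b x) n ^ r) i j = (opK P b x ^ r) (Finsupp.single (j:ℤ) 1) i := by
  induction r generalizing i with
  | zero =>
    simp [Matrix.one_apply, Finsupp.single_apply, Fin.ext_iff, eq_comm]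
  | succ r ih =>
    rw [pow_succ', pow_succ', Matrix.mul_apply, Module.End.mul_apply]
    have hs : Sp 0 (n-1) ((opK P b x ^ r) (Finsupp.single (j:ℤ) 1)) := by
      intro i hi
      exact Sp_opK_pow r j i (by omega)
    rw [← kent_sum P b x n i hs, Finset.sum_range]
    refine Finset.sum_congr rfl fun l _ => ?_
    rw [ih (by omega) (by omega) l]; rfl

end AMO



namespace AMO

open Filter Topology Matrix
open scoped ComplexOrder

lemma row_pow {n : ℕ} {M : Matrix (Fin n) (Fin n) ℂ} {B : ℝ}
    (h : ∀ i, ∑ j, ‖M i j‖ ≤ B) (r : ℕ) (i : Fin n) : ∑ j, ‖(M^r) i j‖ ≤ B^r := by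
  induction r with
  | zero => simp [Matrix.one_apply, apply_ite]
  | succ r ih =>
    have hB : 0 ≤ B := (Finset.sum_nonneg fun j _ => norm_nonneg _).trans (h i)
    rw [pow_succ]
    calc ∑ j, ‖(M^r * M) i j‖ ≤ ∑ j, ∑ k, ‖(M^r) i k‖ * ‖M k j‖ := by
          refine Finset.sum_le_sum fun j _ => ?_
          rw [Matrix.mul_apply]
          refine (norm_sum_le _ _).trans (le_of_eq ?_)
          simp
      _ = ∑ k, ‖(M^r) i k‖ * ∑ j, ‖M k j‖ := by
          rw [Finset.sum_comm]
          simp [Finset.mul_sum]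
      _ ≤ ∑ k, ‖(M^r) i k‖ * B := by
          gcongr with k
          exact h k
      _ = (∑ k, ‖(M^r) i k‖) * B := by rw [Finset.sum_mul]
      _ ≤ B^(r+1) := by rw [pow_succ]; gcongr

lemma row_eig {n : ℕ} {M : Matrix (Fin n) (Fin n) ℂ} (hM : M.IsHermitian) {B : ℝ}
    (h : ∀ i, ∑ j, ‖M i j‖ ≤ B) (i : Fin n) : hM.eigenvalues i ≤ B := by
  set v : Fin n → ℂ := ⇑(hM.eigenvectorBasis i) with hv
  have h1 : M *ᵥ v = hM.eigenvalues i • v := hM.mulVec_eigenvectorBasis i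
  have hne : v ≠ 0 := by
    intro h0
    have : hM.eigenvectorBasis i = 0 := by
      ext j
      exact congrFun h0 j
    exact hM.eigenvectorBasis.orthonormal.ne_zero i this
  have : Nonempty (Fin n) := ⟨i⟩
  obtain ⟨k, hk⟩ := Finite.exists_max (fun j => ‖v j‖)
  have hpos : 0 < ‖v k‖ := by
    by_contra hc
    apply hne
    funext j
    have := (hk j).trans (not_lt.mp hc)
    simpa using this
  have h2 := congrFun h1 k
  have h3 : ‖hM.eigenvalues i • v k‖ ≤ B * ‖v k‖ := by
    rw [← Pi.smul_apply, ← h1, Matrix.mulVec, dotProduct]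
    refine (norm_sum_le _ _).trans ?_
    calc ∑ j, ‖M k j * v j‖ ≤ ∑ j, ‖M k j‖ * ‖v k‖ := by
          refine Finset.sum_le_sum fun j _ => ?_
          rw [norm_mul]
          have := hk j
          gcongr
      _ ≤ B * ‖v k‖ := by
          rw [← Finset.sum_mul]
          have := h k
          gcongr
  rw [norm_smul] at h3
  exact (le_abs_self _).trans (le_of_mul_le_mul_right h3 hpos)

lemma rent_row (α β : ℝ) {d : ℕ → ℂ} {D : ℝ} (hd : ∀ l, ‖d l‖ ≤ D) (r n : ℕ) :
    ∑ l ∈ Finset.range n, ‖rent α β d r l‖ ≤ |α| + D + |β| := by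
  have hD : 0 ≤ D := (norm_nonneg _).trans (hd 0)
  calc ∑ l ∈ Finset.range n, ‖rent α β d r l‖
      ≤ ∑ l ∈ Finset.range n, ((if l = r then |α| else 0) + (if l = r - 1 then D else 0)
          + (if l = r - 2 then |β| else 0)) := by
        refine Finset.sum_le_sum fun l _ => ?_
        refine (norm_add₃_le).trans ?_
        gcongr
        · split_ifs <;> first | omega | simp
        · split_ifs
          · exact hd l
          · omega
          · simpa using hD
          · simp
        · split_ifs <;> first | omega | simp
    _ ≤ _ := by
        rw [Finset.sum_add_distrib, Finset.sum_add_distrib, Finset.sum_ite_eq', Finset.sum_ite_eq',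
          Finset.sum_ite_eq']
        gcongr <;> split_ifs <;> first | exact le_refl _ | positivity

lemma Km_row (α β : ℝ) {d : ℕ → ℂ} {D : ℝ} (hd : ∀ l, ‖d l‖ ≤ D) (n : ℕ) (i : Fin n) :
    ∑ j, ‖Km α β d n i j‖ ≤ (|α| + D + |β|)^2 := by
  have hD : 0 ≤ D := (norm_nonneg _).trans (hd 0)
  simp only [Km, Matrix.of_apply]
  rw [← Finset.sum_range (fun j => ‖kent α β d i j‖)]
  calc ∑ j ∈ Finset.range n, ‖kent α β d i j‖
      ≤ ∑ j ∈ Finset.range n, (|α| * ‖rent α β d i j‖ + D * ‖rent α β d (i+1) j‖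
          + |β| * ‖rent α β d (i+2) j‖) := by
        refine Finset.sum_le_sum fun j _ => ?_
        refine (norm_add₃_le).trans ?_
        simp only [norm_mul, Complex.norm_real, Real.norm_eq_abs, RCLike.norm_conj]
        have := hd i
        gcongr
    _ ≤ |α| * (|α| + D + |β|) + D * (|α| + D + |β|) + |β| * (|α| + D + |β|) := by
        rw [Finset.sum_add_distrib, Finset.sum_add_distrib, ← Finset.mul_sum, ← Finset.mul_sum,
          ← Finset.mul_sum]
        gcongr <;> exact rent_row _ _ hd _ _
    _ = _ := by ring

/-- bound -/
noncomputable def Par.bd (P : Par) : ℝ := (|P.a| + |P.c| + |P.k| + |P.l| + |P.E|)^2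

lemma Par.bd_dual (P : Par) : P.dual.bd = P.bd := by
  simp only [Par.bd, Par.dual]; ring

lemma dd_le (P : Par) (b x : ℝ) (j : ℕ) : ‖dd P b x j‖ ≤ |P.k| + |P.l| + |P.E| := by
  simp only [dd, ddz]
  refine (norm_sub_le _ _).trans ?_
  refine (add_le_add_left (norm_add_le _ _) _).trans ?_
  simp [norm_ee]

lemma Km_row' (P : Par) (b x : ℝ) (n : ℕ) (i : Fin n) :
    ∑ j, ‖Km P.a P.c (dd P b x) n i j‖ ≤ P.bd := by
  refine (Km_row _ _ (dd_le P b x) n i).trans (le_of_eq ?_)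
  simp only [Par.bd]; ring

lemma Km_eig (P : Par) (b x : ℝ) (n : ℕ) (i : Fin n) :
    (Km_psd P.a P.c (dd P b x) n).1.eigenvalues i ∈ Set.Icc 0 P.bd :=
  ⟨(Km_psd P.a P.c (dd P b x) n).eigenvalues_nonneg i, row_eig _ (Km_row' P b x n) i⟩

lemma Km_pow_le (P : Par) (b x : ℝ) (n r : ℕ) (i j : Fin n) :
    ‖(Km P.a P.c (dd P b x) n ^ r) i j‖ ≤ P.bd ^ r :=
  (Finset.single_le_sum (f := fun j => ‖(Km P.a P.c (dd P b x) n ^ r) i j‖)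
    (fun _ _ => norm_nonneg _) (Finset.mem_univ j)).trans (row_pow (Km_row' P b x n) r i)

lemma continuous_Km (P : Par) (b : ℝ) (n : ℕ) :
    Continuous (fun x => Km P.a P.c (dd P b x) n) := by
  refine continuous_matrix fun i j => ?_
  simp only [Km, Matrix.of_apply, kent, rent]
  have : ∀ j, Continuous fun x => dd P b x j := by
    intro j
    simp only [dd, ddz]
    have := continuous_ee
    fun_prop
  have h2 : ∀ (p : Prop) [Decidable p] (j), Continuous fun x => if p then dd P b x j else 0 := by
    intro p _ j
    split_ifs
    · exact this j
    · exact continuous_const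
  have h3 := Complex.continuous_conj
  have := this i
  fun_prop

lemma continuous_Dt (P : Par) (b δ : ℝ) (n : ℕ) :
    Continuous (fun x => Dt P.a P.c δ (dd P b x) n) := by
  have : (fun x => Dt P.a P.c δ (dd P b x) n)
    = fun x => ((Km P.a P.c (dd P b x) n + (δ:ℂ) • (1 : Matrix _ _ ℂ)).det).re := by
    funext x; rw [Dt_det]; simp
  rw [this]
  have := continuous_Km P b n
  have h : Continuous fun x => (Km P.a P.c (dd P b x) n + (δ:ℂ) • (1 : Matrix _ _ ℂ)) := by fun_prop
  exact Complex.continuous_re.comp h.matrix_det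

lemma tr_int (P : Par) (b : ℝ) (r : ℕ) : ∃ C : ℝ, ∀ n : ℕ,
    ‖(∫ x in (0:ℝ)..1, (Km P.a P.c (dd P b x) n ^ r).trace) - n * tau P b r 0‖ ≤ C := by
  have hB : 0 ≤ P.bd := by simp only [Par.bd]; positivity
  have hall : ∀ m : ℤ, tau P b r m = tau P b r 0 := fun m => by
    rw [tau_dual P b r m 0, ← tau_dual P b r 0 0]
  refine ⟨(4 * r : ℝ) * (P.bd ^ r + ‖tau P b r 0‖), fun n => ?_⟩
  have hc : ∀ i j, Continuous fun x => (Km P.a P.c (dd P b x) n ^ r) i j := by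
    intro i j
    have := (continuous_Km P b n).pow r
    exact this.matrix_elem i j
  have e1 : (∫ x in (0:ℝ)..1, (Km P.a P.c (dd P b x) n ^ r).trace)
      = ∑ j, ∫ x in (0:ℝ)..1, (Km P.a P.c (dd P b x) n ^ r) j j := by
    simp only [Matrix.trace, Matrix.diag]
    rw [intervalIntegral.integral_finsetSum]
    intro j _
    exact (hc j j).intervalIntegrable _ _
  have e2 : (n:ℂ) * tau P b r 0 = ∑ j : Fin n, tau P b r 0 := by simp
  rw [e1, e2, ← Finset.sum_sub_distrib]
  refine (norm_sum_le _ _).trans ?_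
  have key : ∀ j : Fin n, ‖(∫ x in (0:ℝ)..1, (Km P.a P.c (dd P b x) n ^ r) j j) - tau P b r 0‖
      ≤ if ((j:ℕ) < 2 * r ∨ n ≤ (j:ℕ) + 2 * r) then P.bd ^ r + ‖tau P b r 0‖ else 0 := by
    intro j
    split_ifs with h
    · refine (norm_sub_le _ _).trans ?_
      gcongr
      have := intervalIntegral.norm_integral_le_of_norm_le_const (a := 0) (b := 1) (C := P.bd ^ r)
        (f := fun x => (Km P.a P.c (dd P b x) n ^ r) j j) (fun x _ => Km_pow_le P b x n r j j)
      simpa using this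
    · push Not at h
      have e3 : ∀ x, (Km P.a P.c (dd P b x) n ^ r) j j
        = (opK P b x ^ r) (Finsupp.single ((j:ℕ):ℤ) 1) ((j:ℕ):ℤ) := fun x =>
          Km_pow_local P b x n j r h.1 h.2 j
      simp only [e3]
      rw [(tau_integral P b r _).2, hall]
      simp
  refine (Finset.sum_le_sum fun j _ => key j).trans ?_
  rw [← Finset.sum_filter, Finset.sum_const, nsmul_eq_mul]
  gcongr
  have hcard : (Finset.univ.filter fun j : Fin n => (j:ℕ) < 2 * r ∨ n ≤ (j:ℕ) + 2 * r).card ≤ 4 * r := by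
    calc _ = ((Finset.univ.filter fun j : Fin n => (j:ℕ) < 2 * r ∨ n ≤ (j:ℕ) + 2 * r).map
            Fin.valEmbedding).card := (Finset.card_map _).symm
      _ ≤ (Finset.range (2 * r) ∪ Finset.Ico (n - 2 * r) n).card := by
          apply Finset.card_le_card
          intro a ha
          simp only [Finset.mem_map, Finset.mem_filter, Finset.mem_univ, true_and] at ha
          obtain ⟨j, hj, rfl⟩ := ha
          simp only [Fin.valEmbedding_apply, Finset.mem_union, Finset.mem_range, Finset.mem_Ico]
          omega
      _ ≤ 2 * r + (n - (n - 2 * r)) := by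
          refine (Finset.card_union_le _ _).trans ?_
          simp
      _ ≤ 4 * r := by omega
  exact_mod_cast hcard

lemma tr_int_dual (P : Par) (b : ℝ) (r : ℕ) : ∃ C : ℝ, ∀ n : ℕ,
    ‖(∫ x in (0:ℝ)..1, (Km P.a P.c (dd P b x) n ^ r).trace)
      - ∫ x in (0:ℝ)..1, (Km P.dual.a P.dual.c (dd P.dual b x) n ^ r).trace‖ ≤ C := by
  obtain ⟨C1, h1⟩ := tr_int P b r
  obtain ⟨C2, h2⟩ := tr_int P.dual b r
  refine ⟨C1 + C2, fun n => ?_⟩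
  have e := tau_dual P b r 0 0
  have h1' := h1 n
  have h2' := h2 n
  rw [e] at h1'
  rw [← sub_sub_sub_cancel_right _ _ ((n:ℂ) * tau P.dual b r 0)]
  exact (norm_sub_le _ _).trans (add_le_add h1' h2')

end AMO



namespace AMO

open Filter Topology Matrix
open scoped ComplexOrder

lemma sum_eval (P : Par) (b x : ℝ) (n : ℕ) (p : Polynomial ℝ) :
    ∑ i, p.eval ((Km_psd P.a P.c (dd P b x) n).1.eigenvalues i)
      = ∑ r ∈ Finset.range (p.natDegree + 1), p.coeff r * ((Km P.a P.c (dd P b x) n ^ r).trace).re := by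
  simp only [Polynomial.eval_eq_sum_range]
  rw [Finset.sum_comm]
  refine Finset.sum_congr rfl fun r _ => ?_
  rw [herm_trace_pow (Km_psd P.a P.c (dd P b x) n).1 r, Complex.ofReal_re, Finset.mul_sum]

lemma continuous_tr (P : Par) (b : ℝ) (n r : ℕ) :
    Continuous fun x => (Km P.a P.c (dd P b x) n ^ r).trace :=
  ((continuous_Km P b n).pow r).matrix_trace

lemma continuous_sum_eval (P : Par) (b : ℝ) (n : ℕ) (p : Polynomial ℝ) :
    Continuous fun x => ∑ i, p.eval ((Km_psd P.a P.c (dd P b x) n).1.eigenvalues i) := by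
  simp only [sum_eval]
  have := fun r => Complex.continuous_re.comp (continuous_tr P b n r)
  simp only [Function.comp_def] at this
  fun_prop

lemma int_sum_eval (P : Par) (b : ℝ) (p : Polynomial ℝ) : ∃ C : ℝ, ∀ n : ℕ,
    |(∫ x in (0:ℝ)..1, ∑ i, p.eval ((Km_psd P.a P.c (dd P b x) n).1.eigenvalues i))
     - ∫ x in (0:ℝ)..1, ∑ i, p.eval ((Km_psd P.dual.a P.dual.c (dd P.dual b x) n).1.eigenvalues i)| ≤ C := by
  choose C hC using fun r => tr_int_dual P b r
  refine ⟨∑ r ∈ Finset.range (p.natDegree + 1), |p.coeff r| * C r, fun n => ?_⟩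
  have e : ∀ Q : Par, (∫ x in (0:ℝ)..1, ∑ i, p.eval ((Km_psd Q.a Q.c (dd Q b x) n).1.eigenvalues i))
      = ∑ r ∈ Finset.range (p.natDegree + 1), p.coeff r *
        (∫ x in (0:ℝ)..1, (Km Q.a Q.c (dd Q b x) n ^ r).trace).re := by
    intro Q
    simp only [sum_eval]
    rw [intervalIntegral.integral_finsetSum]
    · refine Finset.sum_congr rfl fun r _ => ?_
      rw [intervalIntegral.integral_const_mul]
      congr 1
      exact Complex.reCLM.intervalIntegral_comp_comm ((continuous_tr Q b n r).intervalIntegrable 0 1)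
    · intro r _
      have := (Complex.continuous_re.comp (continuous_tr Q b n r))
      exact (continuous_const.mul this).intervalIntegrable _ _
  rw [e P, e P.dual, ← Finset.sum_sub_distrib]
  refine (Finset.abs_sum_le_sum_abs _ _).trans ?_
  refine Finset.sum_le_sum fun r _ => ?_
  rw [← mul_sub, abs_mul, ← Complex.sub_re]
  gcongr
  exact (Complex.abs_re_le_norm _).trans (hC r n)

lemma log_Dt (P : Par) (b x : ℝ) {δ : ℝ} (hδ : 0 < δ) (n : ℕ) :
    Real.log (Dt P.a P.c δ (dd P b x) n)
      = ∑ i, Real.log ((Km_psd P.a P.c (dd P b x) n).1.eigenvalues i + δ) := by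
  rw [Dt, Real.log_prod]
  intro i _
  have := (Km_eig P b x n i).1
  positivity

lemma continuous_log_Dt (P : Par) (b : ℝ) {δ : ℝ} (hδ : 0 < δ) (n : ℕ) :
    Continuous (fun x => Real.log (Dt P.a P.c δ (dd P b x) n)) :=
  (continuous_Dt P b δ n).log fun x => (Dt_pos _ _ hδ _ _).ne'

lemma lemM (P : Par) (b : ℝ) {δ η : ℝ} (hδ : 0 < δ) (hη : 0 < η) : ∃ C : ℝ, ∀ n : ℕ,
    |(∫ x in (0:ℝ)..1, Real.log (Dt P.a P.c δ (dd P b x) n))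
      - ∫ x in (0:ℝ)..1, Real.log (Dt P.dual.a P.dual.c δ (dd P.dual b x) n)| ≤ n * η + C := by
  obtain ⟨p, hp⟩ := exists_polynomial_near_of_continuousOn 0 P.bd (fun t => Real.log (t + δ))
    (by
      refine ContinuousOn.log (by fun_prop) ?_
      intro t ht
      have := ht.1
      positivity) (η/2) (by positivity)
  obtain ⟨C, hC⟩ := int_sum_eval P b p
  refine ⟨C, fun n => ?_⟩
  have key : ∀ Q : Par, Q.bd = P.bd → |(∫ x in (0:ℝ)..1, Real.log (Dt Q.a Q.c δ (dd Q b x) n))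
      - ∫ x in (0:ℝ)..1, ∑ i, p.eval ((Km_psd Q.a Q.c (dd Q b x) n).1.eigenvalues i)| ≤ n * (η/2) := by
    intro Q hQ
    rw [← intervalIntegral.integral_sub ((continuous_log_Dt Q b hδ n).intervalIntegrable _ _)
      ((continuous_sum_eval Q b n p).intervalIntegrable _ _)]
    have := intervalIntegral.norm_integral_le_of_norm_le_const (a := 0) (b := 1) (C := n * (η/2))
        (f := fun x => Real.log (Dt Q.a Q.c δ (dd Q b x) n) -
          ∑ i, p.eval ((Km_psd Q.a Q.c (dd Q b x) n).1.eigenvalues i)) (fun x _ => by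
        rw [log_Dt Q b x hδ n, ← Finset.sum_sub_distrib]
        refine (norm_sum_le _ _).trans ?_
        refine (Finset.sum_le_card_nsmul _ _ (η/2) ?_).trans ?_
        · intro i _
          have := hp _ (hQ ▸ Km_eig Q b x n i)
          rw [Real.norm_eq_abs, abs_sub_comm]
          exact this.le
        · simp)
    simpa using this
  have k1 := key P rfl
  have k2 := key P.dual (Par.bd_dual P)
  have k3 := hC n
  rw [abs_le] at *
  constructor <;> linarith [k1.1, k1.2, k2.1, k2.2, k3.1, k3.2]

end AMO



namespace AMO

open Filter Topology Matrix
open scoped ComplexOrder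

lemma cp_front (g : ℝ → ℂ) (b : ℝ) (n : ℕ) (x : ℝ) :
    cp g b (n+1) x = cp g b n (x + b) * cm g x := by
  have := cp_add g b n 1 x
  rw [this]
  simp [cp_succ, cp_zero]

lemma cp_front_00 (g : ℝ → ℂ) (b : ℝ) (n : ℕ) (x : ℝ) :
    cp g b (n+1) x 0 0 = cp g b n (x+b) 0 0 * g x + cp g b n (x+b) 0 1 := by
  rw [cp_front]; simp [Matrix.mul_apply, cm, Fin.sum_univ_two]

lemma cp_01 (g : ℝ → ℂ) (b : ℝ) (n : ℕ) (x : ℝ) :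
    cp g b (n+1) x 0 1 = - cp g b n (x+b) 0 0 := by
  rw [cp_front]; simp [Matrix.mul_apply, cm, Fin.sum_univ_two]

lemma cp_11 (g : ℝ → ℂ) (b : ℝ) (n : ℕ) (x : ℝ) :
    cp g b (n+1) x 1 1 = - cp g b n (x+b) 1 0 := by
  rw [cp_front]; simp [Matrix.mul_apply, cm, Fin.sum_univ_two]

lemma cp_10 (g : ℝ → ℂ) (b : ℝ) (n : ℕ) (x : ℝ) :
    cp g b (n+1) x 1 0 = cp g b n x 0 0 := by
  rw [cp_succ]; simp [Matrix.mul_apply, cm, Fin.sum_univ_two]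

lemma pp_cp (g : ℝ → ℂ) (b a : ℝ) (n : ℕ) : ∀ (x : ℝ) (d : ℕ → ℂ)
    (_ : ∀ j : ℕ, d j = - a * g (x + j * b)), pp (a*a) n d = (-a:ℂ)^n * cp g b n x 0 0 := by
  induction n using Nat.strong_induction_on with
  | _ n ih =>
    intro x d hd
    match n, ih with
    | 0, _ => simp [pp, cp_zero]
    | 1, _ => simp [pp, hd, cp_front_00, cp_zero]
    | n+2, ih =>
      have hs : ∀ j : ℕ, sh d j = - a * g (x + b + j * b) := by
        intro j
        rw [sh, hd]
        push_cast
        ring_nf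
      have hs2 : ∀ j : ℕ, sh (sh d) j = - a * g (x + b + b + j * b) := by
        intro j
        rw [sh, hs]
        push_cast
        ring_nf
      rw [pp, ih (n+1) (by omega) (x+b) (sh d) hs, ih n (by omega) (x+b+b) _ hs2, hd 0,
        cp_front_00 g b (n+1) x, cp_01]
      push_cast
      simp only [zero_mul, add_zero]
      ring

lemma cp_le_Yr (g : ℝ → ℂ) (b a : ℝ) (n : ℕ) (hn : 2 ≤ n) (x : ℝ) (d : ℕ → ℂ)
    (hd : ∀ j : ℕ, d j = - a * g (x + j * b)) :
    (opNorm2 (cp g b n x))^2 * (a^2)^n ≤ 16 * Yr a a n d := by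
  obtain ⟨k, rfl⟩ : ∃ k, n = k + 2 := ⟨n - 2, by omega⟩
  have hs : ∀ j : ℕ, sh d j = - a * g (x + b + j * b) := by
    intro j
    rw [sh, hd]
    push_cast
    ring_nf
  have nn : ∀ n x, ‖(-a:ℂ)^n * cp g b n x 0 0‖^2 = (a^2)^n * ‖cp g b n x 0 0‖^2 := by
    intro n x
    rw [norm_mul, norm_pow, norm_neg, Complex.norm_real, mul_pow, ← pow_mul, mul_comm n 2, pow_mul,
      Real.norm_eq_abs, sq_abs]
  have h00 : (a^2)^(k+2) * ‖cp g b (k+2) x 0 0‖^2 ≤ Yr a a (k+2) d := by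
    rw [← nn, ← pp_cp g b a (k+2) x d hd]
    exact (pp_le_Xr a a _ d).trans (Xr_le_Yr _ _ _ _)
  have h10 : (a^2)^(k+2) * ‖cp g b (k+1) x 0 0‖^2 ≤ Yr a a (k+2) d := by
    have h1 : (a^2)^(k+1) * ‖cp g b (k+1) x 0 0‖^2 ≤ Xr a a (k+1) d := by
      rw [← nn, ← pp_cp g b a (k+1) x d hd]
      exact pp_le_Xr a a _ d
    refine le_trans ?_ (Xr_le_Yr _ _ _ _)
    rw [Xr]
    have := mul_le_mul_of_nonneg_left h1 (sq_nonneg a)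
    have h2 : 0 ≤ ‖pp (a*a) (k+1+1) d‖^2 := by positivity
    calc _ = a^2 * ((a^2)^(k+1) * ‖cp g b (k+1) x 0 0‖^2) := by ring
      _ ≤ _ := by linarith
  have hY : a^2 * Yr a a (k+1) (sh d) ≤ Yr a a (k+2) d := by
    rw [show Yr a a (k+2) d = Xr a a (k+1+1) d + a^2 * Yr a a (k+1) (sh d) from rfl]
    linarith [Xr_nonneg a a (k+1+1) d]
  have h01 : (a^2)^(k+2) * ‖cp g b (k+1) (x+b) 0 0‖^2 ≤ Yr a a (k+2) d := by
    have h1 : (a^2)^(k+1) * ‖cp g b (k+1) (x+b) 0 0‖^2 ≤ Yr a a (k+1) (sh d) := by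
      rw [← nn, ← pp_cp g b a (k+1) (x+b) (sh d) hs]
      exact (pp_le_Xr a a _ _).trans (Xr_le_Yr _ _ _ _)
    calc _ = a^2 * ((a^2)^(k+1) * ‖cp g b (k+1) (x+b) 0 0‖^2) := by ring
      _ ≤ _ := (mul_le_mul_of_nonneg_left h1 (sq_nonneg a)).trans hY
  have h11 : (a^2)^(k+2) * ‖cp g b k (x+b) 0 0‖^2 ≤ Yr a a (k+2) d := by
    have h1 : (a^2)^k * ‖cp g b k (x+b) 0 0‖^2 ≤ Xr a a k (sh d) := by
      rw [← nn, ← pp_cp g b a k (x+b) (sh d) hs]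
      exact pp_le_Xr a a _ _
    have h2 : a^2 * Xr a a k (sh d) ≤ Yr a a (k+1) (sh d) := by
      refine le_trans ?_ (Xr_le_Yr _ _ _ _)
      rw [Xr]
      have h2 : 0 ≤ ‖pp (a*a) (k+1) (sh d)‖^2 := by positivity
      linarith
    calc _ = a^2 * (a^2 * ((a^2)^k * ‖cp g b k (x+b) 0 0‖^2)) := by ring
      _ ≤ a^2 * (a^2 * Xr a a k (sh d)) := by gcongr
      _ ≤ _ := (mul_le_mul_of_nonneg_left h2 (sq_nonneg a)).trans hY
  obtain ⟨i, j, hij⟩ := exists_entry (cp g b (k+2) x)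
  have h4 : (a^2)^(k+2) * ‖cp g b (k+2) x i j‖^2 ≤ Yr a a (k+2) d := by
    fin_cases i <;> fin_cases j
    · exact h00
    · have := cp_01 g b (k+1) x
      simp only [Fin.zero_eta, Fin.mk_one] at *
      rw [this, norm_neg]; exact h01
    · have := cp_10 g b (k+1) x
      simp only [Fin.zero_eta, Fin.mk_one] at *
      rw [this]; exact h10
    · have := cp_11 g b (k+1) x
      simp only [Fin.mk_one] at *
      rw [this, norm_neg, cp_10]; exact h11
  calc (opNorm2 (cp g b (k+2) x))^2 * (a^2)^(k+2) ≤ (4 * ‖cp g b (k+2) x i j‖)^2 * (a^2)^(k+2) := by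
        have := opNorm2_nonneg (cp g b (k+2) x)
        gcongr
    _ = 16 * ((a^2)^(k+2) * ‖cp g b (k+2) x i j‖^2) := by ring
    _ ≤ _ := by linarith

lemma prod_add_le {ι : Type*} (s : Finset ι) (f : ι → ℝ) {B δ : ℝ} (hδ : 0 ≤ δ)
    (hf : ∀ i, f i ∈ Set.Icc 0 B) :
    ∏ i ∈ s, (f i + δ) ≤ ∏ i ∈ s, f i + ((B + δ)^s.card - B^s.card) := by
  classical
  induction s using Finset.induction_on with
  | empty => simp
  | insert a s ha ih =>
    rw [Finset.prod_insert ha, Finset.prod_insert ha, Finset.card_insert_of_notMem ha]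
    have h0 := (hf a).1
    have h1 := (hf a).2
    have hB : 0 ≤ B := h0.trans h1
    have hD : 0 ≤ (B + δ)^s.card - B^s.card := by
      rw [sub_nonneg]
      gcongr
      linarith
    have hP : ∏ i ∈ s, (f i + δ) ≤ (B + δ)^s.card := by
      rw [← Finset.prod_const]
      refine Finset.prod_le_prod (fun i _ => ?_) (fun i _ => ?_)
      · linarith [(hf i).1]
      · linarith [(hf i).2]
    calc (f a + δ) * ∏ i ∈ s, (f i + δ) = f a * ∏ i ∈ s, (f i + δ) + δ * ∏ i ∈ s, (f i + δ) := by ring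
      _ ≤ f a * (∏ i ∈ s, f i + ((B + δ)^s.card - B^s.card)) + δ * (B + δ)^s.card := by gcongr
      _ = f a * ∏ i ∈ s, f i + f a * ((B + δ)^s.card - B^s.card) + δ * (B + δ)^s.card := by ring
      _ ≤ f a * ∏ i ∈ s, f i + B * ((B + δ)^s.card - B^s.card) + δ * (B + δ)^s.card := by gcongr
      _ = _ := by ring

lemma Dt_le (P : Par) (b : ℝ) (m : ℕ) {T : ℝ} (hT : 0 < T) :
    ∃ δ > 0, ∀ x, Dt P.a P.c δ (dd P b x) m ≤ Yr P.a P.c m (dd P b x) + T := by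
  have hc : Tendsto (fun δ : ℝ => (P.bd + δ)^m - P.bd^m) (𝓝 0) (𝓝 0) := by
    have : Continuous (fun δ : ℝ => (P.bd + δ)^m - P.bd^m) := by fun_prop
    have h := this.tendsto 0
    simpa using h
  have h1 := hc.eventually (gt_mem_nhds hT)
  obtain ⟨δ, hδ, hpos⟩ := ((h1.filter_mono nhdsWithin_le_nhds).and
    (self_mem_nhdsWithin (a := (0:ℝ)) (s := Set.Ioi 0))).exists
  refine ⟨δ, hpos, fun x => ?_⟩
  have h2 := prod_add_le Finset.univ _ (le_of_lt hpos) (Km_eig P b x m)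
  rw [← Dt_zero, Dt, Dt]
  simp only [add_zero]
  simp only [Finset.card_univ, Fintype.card_fin] at h2
  linarith

lemma poly_exp (D : ℝ) {η : ℝ} (hη : 0 < η) : ∃ N : ℕ, ∀ m ≥ N,
    D * ((m:ℝ)+1)^2 ≤ Real.exp (m * η) := by
  have h : Tendsto (fun m : ℕ => (m:ℝ)^2 / (Real.exp η)^m) atTop (𝓝 0) :=
    tendsto_pow_const_div_const_pow_of_one_lt 2 (by rw [Real.one_lt_exp_iff]; exact hη)
  have h2 := h.eventually (gt_mem_nhds (show (0:ℝ) < 1/(4*(|D|+1)) by positivity))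
  obtain ⟨N, hN⟩ := eventually_atTop.mp h2
  refine ⟨max N 1, fun m hm => ?_⟩
  have h3 := hN m (le_of_max_le_left hm)
  have hm1 : (1:ℝ) ≤ m := by exact_mod_cast le_of_max_le_right hm
  rw [← Real.exp_nat_mul, div_lt_div_iff₀ (by positivity) (by positivity)] at h3
  calc D * ((m:ℝ)+1)^2 ≤ (|D|+1) * ((m:ℝ)+m)^2 := by
        gcongr
        linarith [le_abs_self D]
    _ = (m:ℝ)^2 * (4 * (|D|+1)) := by ring
    _ ≤ _ := by linarith

lemma transfer (P : Par) (b : ℝ) {C μ a : ℝ} (hC : 1 ≤ C) (hμ : 0 < μ) (ha : a ≠ 0)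
    (hPa : |P.a| ≤ μ) (hPc : |P.c| ≤ μ)
    (hpp : ∀ k x, ‖pp (P.a * P.c) k (dd P b x)‖ ≤ C * μ^k)
    (hPk : P.k = a) (hPl : P.l = a) {g : ℝ → ℂ} (hg : Continuous g)
    (hd : ∀ x (j : ℕ), dd P.dual b x j = -a * g (x + j * b)) {η : ℝ} (hη : 0 < η) :
    ∃ n : ℕ, 1 ≤ n ∧ (n:ℝ)⁻¹ * ∫ x in (0:ℝ)..1, Real.log (opNorm2 (cp g b n x))
      ≤ Real.log μ - Real.log |a| + η := by
  obtain ⟨N0, hN0⟩ := poly_exp (2 * C^2) (show 0 < η/2 by positivity)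
  set m := max N0 2 with hm
  have hm2 : 2 ≤ m := le_max_right _ _
  have hm0 := hN0 m (le_max_left _ _)
  obtain ⟨δ, hδ, hD⟩ := Dt_le P b m (T := (m+1)^2 * (C^2 * μ^(2*m))) (by positivity)
  set T : ℝ := Real.exp (m * (η/2)) * μ^(2*m) with hTdef
  have hTpos : 0 < T := by positivity
  have hDT : ∀ x, Dt P.a P.c δ (dd P b x) m ≤ T := by
    intro x
    have h1 := Yr_le hC hμ.le hPa hPc m (dd P b x) (fun m' k => by rw [dd_shift]; exact hpp k _)
    calc _ ≤ _ := hD x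
      _ ≤ (m+1)^2 * (C^2 * μ^(2*m)) + (m+1)^2 * (C^2 * μ^(2*m)) := by linarith
      _ = (2 * C^2 * ((m:ℝ)+1)^2) * μ^(2*m) := by ring
      _ ≤ T := by rw [hTdef]; gcongr
  have hDs : ∀ s x, Dt P.a P.c δ (dd P b x) (s*m) ≤ T^s := fun s x =>
    Dt_fischer_mul P.a P.c hδ m s (dd P b x) (fun k => by rw [dd_shift]; exact hDT _)
  obtain ⟨C', hC'⟩ := lemM P b hδ (show 0 < η/2 by positivity)
  obtain ⟨s0, hs0⟩ := exists_nat_gt ((C' + Real.log 16) / η)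
  set s := max s0 1 with hs
  have hs1 : 1 ≤ s := le_max_right _ _
  have hss : (C' + Real.log 16) < s * η := by
    rw [div_lt_iff₀ hη] at hs0
    have : (s0:ℝ) ≤ s := by exact_mod_cast le_max_left _ _
    nlinarith
  set n := s * m with hn
  have hn2 : 2 ≤ n := by rw [hn]; nlinarith
  refine ⟨n, by omega, ?_⟩
  have hnpos : (0:ℝ) < n := by exact_mod_cast (by omega : 0 < n)
  have I1 : ∫ x in (0:ℝ)..1, Real.log (Dt P.a P.c δ (dd P b x) n) ≤ s * Real.log T := by
    have : ∫ x in (0:ℝ)..1, Real.log (Dt P.a P.c δ (dd P b x) n) ≤ ∫ x in (0:ℝ)..1, s * Real.log T := by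
      apply intervalIntegral.integral_mono_on (by norm_num)
        ((continuous_log_Dt P b hδ n).intervalIntegrable _ _) (by simp)
      intro x _
      rw [← Real.log_pow]
      exact Real.log_le_log (Dt_pos _ _ hδ _ _) (hDs s x)
    simpa using this
  have hcl : Continuous fun x => Real.log (opNorm2 (cp g b n x)) := continuous_logcp hg b n
  have I2 : 2 * (∫ x in (0:ℝ)..1, Real.log (opNorm2 (cp g b n x))) + (2 * n * Real.log |a| - Real.log 16)
      ≤ ∫ x in (0:ℝ)..1, Real.log (Dt P.dual.a P.dual.c δ (dd P.dual b x) n) := by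
    have : ∫ x in (0:ℝ)..1, (2 * Real.log (opNorm2 (cp g b n x)) + (2 * n * Real.log |a| - Real.log 16))
      ≤ ∫ x in (0:ℝ)..1, Real.log (Dt P.dual.a P.dual.c δ (dd P.dual b x) n) := by
      apply intervalIntegral.integral_mono_on (by norm_num)
        (((hcl.const_mul 2).add continuous_const).intervalIntegrable _ _)
        ((continuous_log_Dt P.dual b hδ n).intervalIntegrable _ _)
      intro x _
      have h1 := cp_le_Yr g b a n hn2 x _ (hd x)
      have h2 := Yr_le_Dt P.dual.a P.dual.c hδ.le (dd P.dual b x) n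
      have e1 : P.dual.a = a := hPl
      have e2 : P.dual.c = a := hPk
      have h3 : (opNorm2 (cp g b n x))^2 * (a^2)^n ≤ 16 * Dt P.dual.a P.dual.c δ (dd P.dual b x) n := by
        refine h1.trans ?_
        rw [e1, e2] at h2 ⊢
        linarith
      have hop : 0 < opNorm2 (cp g b n x) := lt_of_lt_of_le one_pos (one_le_cp g b n x)
      have ha2 : 0 < a^2 := by positivity
      have h4 := Real.log_le_log (by positivity) h3
      rw [Real.log_mul (by positivity) (by positivity), Real.log_mul (by norm_num) (Dt_pos _ _ hδ _ _).ne',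
        Real.log_pow, Real.log_pow, Real.log_pow, ← Real.log_abs a] at h4
      push_cast at h4
      simp only [Pi.add_apply]
      linarith
    rw [intervalIntegral.integral_add ((hcl.const_mul 2).intervalIntegrable _ _) (by simp),
      intervalIntegral.integral_const_mul] at this
    simpa using this
  have I3 := (abs_le.mp (hC' n)).1
  have hlT : Real.log T = m * (η/2) + 2 * m * Real.log μ := by
    rw [hTdef, Real.log_mul (by positivity) (by positivity), Real.log_exp, Real.log_pow]
    push_cast; ring
  rw [inv_mul_le_iff₀ hnpos]
  have hnc : (n:ℝ) = s * m := by rw [hn]; push_cast; ring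
  have hm1 : (1:ℝ) ≤ m := by exact_mod_cast (by omega : 1 ≤ m)
  have hsη : (s:ℝ) * η ≤ n * η := by
    rw [hnc]
    have : (s:ℝ) * 1 ≤ s * m := by gcongr
    nlinarith
  have e5 : (s:ℝ) * Real.log T = n * (η/2) + 2 * n * Real.log μ := by rw [hlT, hnc]; ring
  nlinarith

end AMO



namespace AMO

open Filter Topology Matrix
open scoped ComplexOrder

/-- the (complexified) cocycle function -/
noncomputable def gz (lam E ρ : ℝ) (x : ℝ) : ℂ := E - lam * (ρ * ee x + (ρ⁻¹:ℝ) * ee (-x))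

/-- dual cocycle function -/
noncomputable def gh (lam E : ℝ) (x : ℝ) : ℂ := (E - ee x - ee (-x)) / lam

lemma continuous_gz (lam E ρ : ℝ) : Continuous (gz lam E ρ) := by
  have := continuous_ee
  unfold gz; fun_prop

lemma continuous_gh (lam E : ℝ) : Continuous (gh lam E) := by
  have := continuous_ee
  unfold gh; fun_prop

lemma ee_neg_periodic : Function.Periodic (fun x => ee (-x)) 1 := by
  intro x
  simp only [ee_neg]
  rw [ee_periodic]

lemma gz_periodic (lam E ρ : ℝ) : Function.Periodic (gz lam E ρ) 1 := by
  intro x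
  have := ee_neg_periodic x
  simp only [gz] at *
  rw [this, ee_periodic]

lemma gh_periodic (lam E : ℝ) : Function.Periodic (gh lam E) 1 := by
  intro x
  have := ee_neg_periodic x
  simp only [gh] at *
  rw [this, ee_periodic]

lemma UB' {b : ℝ} (hb : Irrational b) {g : ℝ → ℂ} (hg : Continuous g)
    (hp : Function.Periodic g 1) {Λ : ℝ}
    (h : ∃ N : ℕ, 1 ≤ N ∧ (N:ℝ)⁻¹ * ∫ x in (0:ℝ)..1, Real.log (opNorm2 (cp g b N x)) < Λ) :
    ∃ C : ℝ, 1 ≤ C ∧ ∀ n x, opNorm2 (cp g b n x) ≤ C * Real.exp (n * Λ) := by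
  obtain ⟨N, hN, h⟩ := h
  obtain ⟨C, _, hC⟩ := UB hb hg hp hN h
  refine ⟨max C 1, le_max_right _ _, fun n x => (hC n x).trans ?_⟩
  gcongr
  exact le_max_left _ _

lemma dual1 {b : ℝ} (hb : Irrational b) {lam E Λ : ℝ} (hl : lam ≠ 0) (hΛ : 0 ≤ Λ)
    (h : ∃ N : ℕ, 1 ≤ N ∧ (N:ℝ)⁻¹ * ∫ x in (0:ℝ)..1, Real.log (opNorm2 (cp (gz lam E 1) b N x)) < Λ)
    {η : ℝ} (hη : 0 < η) :
    ∃ n : ℕ, 1 ≤ n ∧ (n:ℝ)⁻¹ * ∫ x in (0:ℝ)..1, Real.log (opNorm2 (cp (gh lam E) b n x))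
      ≤ Λ - Real.log |lam| + η := by
  obtain ⟨C, hC, hCb⟩ := UB' hb (continuous_gz lam E 1) (gz_periodic lam E 1) h
  have h1 : (1:ℝ) ≤ Real.exp Λ := Real.one_le_exp hΛ
  have := transfer ⟨1, 1, lam, lam, E⟩ b (C := C) (μ := Real.exp Λ) (a := lam) hC (Real.exp_pos _) hl
    (by simpa using h1) (by simpa using h1) (by
      intro k x
      have e := pp_cp (gz lam E 1) b 1 k x (dd ⟨1, 1, lam, lam, E⟩ b x) (by
        intro j
        simp only [dd, ddz, gz]
        push_cast
        ring)
      simp only [e]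
      rw [norm_mul, norm_pow, norm_neg, Complex.norm_real, norm_one, one_pow, one_mul, ← Real.exp_nat_mul]
      exact (entry_le _ _ _).trans (hCb k x)) rfl rfl (continuous_gh lam E) (by
      intro x j
      have : (lam:ℂ) ≠ 0 := by exact_mod_cast hl
      simp only [dd, ddz, gh, Par.dual]
      push_cast
      field_simp
      ring) hη
  rwa [Real.log_exp] at this

lemma dual2 {b : ℝ} (hb : Irrational b) {lam E Λ ρ : ℝ} (hl : lam ≠ 0) (hρ : 0 < ρ)
    (h1 : |lam| * ρ ≤ Real.exp Λ) (h2 : |lam| * ρ⁻¹ ≤ Real.exp Λ)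
    (h : ∃ n : ℕ, 1 ≤ n ∧ (n:ℝ)⁻¹ * ∫ x in (0:ℝ)..1, Real.log (opNorm2 (cp (gh lam E) b n x))
      < Λ - Real.log |lam|) {η : ℝ} (hη : 0 < η) :
    ∃ n : ℕ, 1 ≤ n ∧ (n:ℝ)⁻¹ * ∫ x in (0:ℝ)..1, Real.log (opNorm2 (cp (gz lam E ρ) b n x)) ≤ Λ + η := by
  obtain ⟨C, hC, hCb⟩ := UB' hb (continuous_gh lam E) (gh_periodic lam E) h
  have hl' : (lam:ℂ) ≠ 0 := by exact_mod_cast hl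
  have := transfer ⟨lam * ρ, lam * ρ⁻¹, 1, 1, E⟩ b (C := C) (μ := Real.exp Λ) (a := 1) hC
    (Real.exp_pos _) one_ne_zero
    (by simpa [abs_mul, abs_of_pos hρ] using h1) (by simpa [abs_mul, abs_of_pos hρ] using h2) (by
      intro k x
      have e := pp_cp (gh lam E) b lam k x (dd ⟨lam * ρ, lam * ρ⁻¹, 1, 1, E⟩ b x) (by
        intro j
        simp only [dd, ddz, gh]
        push_cast
        field_simp
        ring)
      have e2 : lam * ρ * (lam * ρ⁻¹) = lam * lam := by field_simp
      simp only [e2, e]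
      rw [norm_mul, norm_pow, norm_neg, Complex.norm_real, Real.norm_eq_abs]
      have e3 : |lam|^k = Real.exp (k * Real.log |lam|) := by
        rw [Real.exp_nat_mul, Real.exp_log (by positivity)]
      calc |lam|^k * ‖cp (gh lam E) b k x 0 0‖
          ≤ |lam|^k * (C * Real.exp (k * (Λ - Real.log |lam|))) := by
            gcongr
            exact (entry_le _ _ _).trans (hCb k x)
        _ = C * (Real.exp (k * Real.log |lam|) * Real.exp (k * (Λ - Real.log |lam|))) := by rw [e3]; ring
        _ = C * Real.exp Λ ^ k := by
            rw [← Real.exp_add, ← Real.exp_nat_mul]; ring_nf) rfl rfl (continuous_gz lam E ρ) (by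
      intro x j
      simp only [dd, ddz, gz, Par.dual]
      push_cast
      ring) hη
  simpa using this

/-- growth on shifted circles -/
lemma step1 {b : ℝ} (hb : Irrational b) {lam E Λ ρ : ℝ} (hΛ : 0 ≤ Λ) (hρ : 0 < ρ)
    (h1 : |lam| * ρ ≤ Real.exp Λ) (h2 : |lam| * ρ⁻¹ ≤ Real.exp Λ)
    (h : ∃ N : ℕ, 1 ≤ N ∧ (N:ℝ)⁻¹ * ∫ x in (0:ℝ)..1, Real.log (opNorm2 (cp (gz lam E 1) b N x)) < Λ)
    {η : ℝ} (hη : 0 < η) :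
    ∃ C : ℝ, 1 ≤ C ∧ ∀ n x, opNorm2 (cp (gz lam E ρ) b n x) ≤ C * Real.exp (n * (Λ + η)) := by
  apply UB' hb (continuous_gz _ _ _) (gz_periodic _ _ _)
  by_cases hl : lam = 0
  · have : gz lam E ρ = gz lam E 1 := by funext x; simp [gz, hl]
    rw [this]
    obtain ⟨N, hN, h⟩ := h
    exact ⟨N, hN, by linarith⟩
  obtain ⟨n, hn, h3⟩ := dual1 hb hl hΛ h (show 0 < η/4 by positivity)
  have hle : Real.exp Λ ≤ Real.exp (Λ + η/2) := Real.exp_le_exp.mpr (by linarith)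
  obtain ⟨m, hm, h4⟩ := dual2 hb hl hρ (Λ := Λ + η/2) (E := E) (h1.trans hle) (h2.trans hle)
    ⟨n, hn, by linarith⟩ (show 0 < η/4 by positivity)
  exact ⟨m, hm, by linarith⟩

lemma lower {b : ℝ} (hb : Irrational b) {lam E Λ : ℝ} (hΛ : 0 ≤ Λ) (hl : lam ≠ 0)
    (h : ∃ N : ℕ, 1 ≤ N ∧ (N:ℝ)⁻¹ * ∫ x in (0:ℝ)..1, Real.log (opNorm2 (cp (gz lam E 1) b N x)) < Λ) :
    Real.log |lam| ≤ Λ := by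
  refine le_of_forall_pos_le_add fun η hη => ?_
  obtain ⟨n, hn, h3⟩ := dual1 hb hl hΛ h hη
  have : 0 ≤ (n:ℝ)⁻¹ * ∫ x in (0:ℝ)..1, Real.log (opNorm2 (cp (gh lam E) b n x)) := by
    apply mul_nonneg (by positivity)
    apply intervalIntegral.integral_nonneg (by norm_num)
    intro x _
    exact Real.log_nonneg (one_le_cp _ _ _ _)
  linarith

end AMO



namespace AMO

open Filter Topology Matrix
open scoped ComplexOrder

/-- abbreviation for the Hilbert space -/
noncomputable abbrev ell := lp (fun _ : ℤ => ℂ) 2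

lemma hasSum_sq (u : ell) : HasSum (fun n : ℤ => ‖u n‖^2) (‖u‖^2) := by
  have := lp.hasSum_norm (p := 2) (by norm_num) u
  simpa using this

lemma hasSum_shift {β : Type*} [AddCommMonoid β] [TopologicalSpace β] {f : ℤ → β} {s : β}
    (h : HasSum f s) (c : ℤ) : HasSum (fun n => f (n + c)) s := by
  have := (Equiv.addRight c).hasSum_iff (f := f) (a := s)
  exact this.mpr h

lemma summable_cross (u v : ell) (c : ℤ) : Summable (fun n : ℤ => inner ℂ (u (n + c)) (v n)) := by
  have h1 := (hasSum_shift (hasSum_sq u) c).summable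
  have h2 := (hasSum_sq v).summable
  refine Summable.of_norm_bounded (h1.add h2) fun n => ?_
  refine (norm_inner_le_norm _ _).trans ?_
  nlinarith [sq_nonneg (‖u (n+c)‖ - ‖v n‖), sq_nonneg (‖u (n+c)‖), sq_nonneg (‖v n‖)]

lemma symm_op {V : ℝ → ℝ} {b θ : ℝ} {H : ell →L[ℂ] ell} (hH : IsSchrodingerOp V b θ H) (u v : ell) :
    inner ℂ (H u) v = inner ℂ u (H v) := by
  have s1 := summable_cross u v 1
  have s2 := summable_cross u v (-1)
  have s := lp.summable_inner (𝕜 := ℂ) (H u) v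
  have s3 : Summable (fun n : ℤ => inner ℂ ((V ((n : ℝ) * b + θ) : ℂ) * u n) (v n)) := by
    refine ((s.sub s1).sub s2).congr fun n => ?_
    rw [hH u n, inner_add_left, inner_add_left]
    simp only [sub_eq_add_neg]
    ring
  have h1 : HasSum (fun n : ℤ => inner ℂ (u n) (v (n + 1))) (∑' n : ℤ, inner ℂ (u (n + -1)) (v n)) := by
    have := hasSum_shift s2.hasSum 1
    simpa using this
  have h2 : HasSum (fun n : ℤ => inner ℂ (u n) (v (n - 1))) (∑' n : ℤ, inner ℂ (u (n + 1)) (v n)) := by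
    have := hasSum_shift s1.hasSum (-1)
    simpa [sub_eq_add_neg] using this
  have e1 : HasSum (fun n : ℤ => inner ℂ ((H u) n) (v n)) ((∑' n : ℤ, inner ℂ (u (n + 1)) (v n)) +
      (∑' n : ℤ, inner ℂ (u (n + -1)) (v n)) + ∑' n : ℤ, inner ℂ ((V ((n : ℝ) * b + θ) : ℂ) * u n) (v n)) := by
    refine ((s1.hasSum.add s2.hasSum).add s3.hasSum).congr_fun ?_
    intro n
    rw [hH u n, inner_add_left, inner_add_left]
    rfl
  have e2 : HasSum (fun n : ℤ => inner ℂ (u n) ((H v) n)) ((∑' n : ℤ, inner ℂ (u (n + -1)) (v n)) +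
      (∑' n : ℤ, inner ℂ (u (n + 1)) (v n)) + ∑' n : ℤ, inner ℂ ((V ((n : ℝ) * b + θ) : ℂ) * u n) (v n)) := by
    refine ((h1.add h2).add s3.hasSum).congr_fun ?_
    intro n
    rw [hH v n, inner_add_right, inner_add_right]
    congr 1
    simp only [RCLike.inner_apply, map_mul, Complex.conj_ofReal]
    ring
  rw [(lp.hasSum_inner (𝕜 := ℂ) (H u) v).unique e1, (lp.hasSum_inner (𝕜 := ℂ) u (H v)).unique e2]
  ring

lemma weyl {V : ℝ → ℝ} {b θ : ℝ} {H : ell →L[ℂ] ell} (hH : IsSchrodingerOp V b θ H) {E : ℝ}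
    (hE : (E : ℂ) ∈ spectrum ℂ H) {ε : ℝ} (hε : 0 < ε) :
    ∃ u : ell, u ≠ 0 ∧ ‖H u - (E:ℂ) • u‖^2 ≤ ε * ‖u‖^2 := by
  by_contra! hc
  set A : ell →L[ℂ] ell := algebraMap ℂ _ (E:ℂ) - H with hA
  have hAu : ∀ u, A u = (E:ℂ) • u - H u := by
    intro u
    rw [hA, Algebra.algebraMap_eq_smul_one]
    rfl
  have hsym : ∀ u v, inner ℂ (A u) v = inner ℂ u (A v) := by
    intro u v
    rw [hAu, hAu, inner_sub_left, inner_sub_right, symm_op hH, inner_smul_left, inner_smul_right,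
      Complex.conj_ofReal]
  have hU : IsUnit (A * A) := by
    refine ContinuousLinearMap.isUnit_of_forall_le_norm_inner_map (A * A) (c := ⟨ε, hε.le⟩) hε fun u => ?_
    change ‖u‖^2 * ε ≤ _
    rw [show (A * A) u = A (A u) from rfl, hsym, inner_self_eq_norm_sq_to_K]
    simp only [Complex.coe_algebraMap, norm_pow, Complex.norm_real, norm_norm]
    by_cases hu : u = 0
    · simp [hu]
    have := hc u hu
    rw [hAu, norm_sub_rev]
    linarith
  have hU2 : IsUnit A := ((Commute.refl A).isUnit_mul_iff.mp hU).1
  exact hE hU2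

lemma vn_sub_comm (v w : Fin 2 → ℂ) : vn v ≤ vn w + vn (v - w) := by
  have := vn_add_le w (v - w)
  simpa using this

lemma cp_le_pow {g : ℝ → ℂ} {G : ℝ} (hG : ∀ t, opNorm2 (cm g t) ≤ G) (b : ℝ) (k : ℕ) (x : ℝ) :
    opNorm2 (cp g b k x) ≤ G^k := by
  have hG0 : 0 ≤ G := (opNorm2_nonneg _).trans (hG 0)
  induction k with
  | zero => simp [cp_zero, opNorm2_one]
  | succ k ih =>
    rw [cp_succ, pow_succ']
    refine (opNorm2_mul_le _ _).trans ?_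
    have := hG (x + k * b)
    have := opNorm2_nonneg (cp g b k x)
    gcongr

lemma err_rec {g : ℝ → ℂ} {G : ℝ} (hG1 : 1 ≤ G) (hG : ∀ t, opNorm2 (cm g t) ≤ G) {b θ : ℝ}
    {U : ℤ → Fin 2 → ℂ} {f : ℤ → ℂ}
    (hU : ∀ m : ℤ, U (m+1) = (cm g (m * b + θ)) *ᵥ (U m) + ![f m, 0]) (m : ℤ) {φ : ℝ} (hφ : 0 ≤ φ)
    (k : ℕ) (hf : ∀ i : ℕ, i < k → ‖f (m + i)‖ ≤ φ) :
    vn (U (m + k) - (cp g b k (m * b + θ)) *ᵥ (U m)) ≤ k * G^k * φ := by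
  induction k with
  | zero => simp [cp_zero, vn]
  | succ k ih =>
    have h1 := ih fun i hi => hf i (by omega)
    have h2 := hf k (by omega)
    have e : U (m + (k+1 : ℕ)) - (cp g b (k+1) (m * b + θ)) *ᵥ (U m)
      = (cm g ((m + k : ℤ) * b + θ)) *ᵥ (U (m + k) - (cp g b k (m * b + θ)) *ᵥ (U m)) + ![f (m+k), 0] := by
      rw [cp_succ, Matrix.mulVec_sub, Matrix.mulVec_mulVec]
      have := hU (m + k)
      push_cast at this ⊢
      rw [← add_assoc, this, show (m:ℝ) * b + θ + k * b = (m + k) * b + θ by ring]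
      abel
    rw [e]
    refine (vn_add_le _ _).trans ?_
    have h3 : vn ![f (m+k), 0] ≤ φ := by
      refine (vn_le_sum _).trans ?_
      simpa using h2
    have h4 := vn_mulVec_le (cm g ((m + k : ℤ) * b + θ)) (U (m + k) - (cp g b k (m * b + θ)) *ᵥ (U m))
    have h5 := hG ((m + k : ℤ) * b + θ)
    have h6 := vn_nonneg (U (m + k) - (cp g b k (m * b + θ)) *ᵥ (U m))
    have h7 : 1 ≤ G^(k+1) := one_le_pow₀ hG1
    calc _ ≤ G * (k * G^k * φ) + 1 * φ := by
          rw [one_mul]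
          refine add_le_add (h4.trans ?_) h3
          gcongr
      _ ≤ G * (k * G^k * φ) + G^(k+1) * φ := by gcongr
      _ = _ := by push_cast; ring

lemma decomp (w z : Fin 2 → ℂ) (hw : vn w = 1) :
    z = ((starRingEnd ℂ) (w 0) * z 0 + (starRingEnd ℂ) (w 1) * z 1) • w
      + (w 0 * z 1 - w 1 * z 0) • ![-(starRingEnd ℂ) (w 1), (starRingEnd ℂ) (w 0)] := by
  have h : (starRingEnd ℂ) (w 0) * w 0 + (starRingEnd ℂ) (w 1) * w 1 = 1 := by
    have := vn_sq w
    rw [hw, one_pow] at this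
    rw [mul_comm, Complex.mul_conj, mul_comm, Complex.mul_conj, Complex.normSq_eq_norm_sq,
      Complex.normSq_eq_norm_sq]
    exact_mod_cast this.symm
  funext i
  fin_cases i
  · simp
    linear_combination (-z 0) * h
  · simp
    linear_combination (-z 1) * h

lemma two_norm {B C : Matrix (Fin 2) (Fin 2) ℂ} (hB : B.det = 1) {w y : Fin 2 → ℂ} (hw : vn w = 1)
    (hy : B *ᵥ y = w) {c : ℝ} (hyc : vn y ≤ c) (hCw : vn (C *ᵥ w) ≤ c) :
    opNorm2 (C * B) ≤ 2 * c * (opNorm2 B + opNorm2 C) := by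
  have hc : 0 ≤ c := (vn_nonneg _).trans hyc
  have hB0 := opNorm2_nonneg B
  have hC0 := opNorm2_nonneg C
  refine opNorm2_le (by positivity) fun v => ?_
  have hv := vn_nonneg v
  have hz := vn_mulVec_le B v
  set z := B *ᵥ v with hzd
  have hdet : w 0 * z 1 - w 1 * z 0 = y 0 * v 1 - y 1 * v 0 := by
    rw [← hy, hzd]
    simp only [Matrix.mulVec, dotProduct, Fin.sum_univ_two]
    rw [Matrix.det_fin_two] at hB
    linear_combination (y 0 * v 1 - y 1 * v 0) * hB
  have hb : ‖w 0 * z 1 - w 1 * z 0‖ ≤ 2 * c * vn v := by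
    rw [hdet]
    refine (norm_sub_le _ _).trans ?_
    rw [norm_mul, norm_mul]
    have h1 := (apply_le_vn y 0).trans hyc
    have h2 := (apply_le_vn y 1).trans hyc
    have h3 := apply_le_vn v 0
    have h4 := apply_le_vn v 1
    calc _ ≤ c * vn v + c * vn v := by gcongr
      _ = _ := by ring
  have ha : ‖(starRingEnd ℂ) (w 0) * z 0 + (starRingEnd ℂ) (w 1) * z 1‖ ≤ 2 * (opNorm2 B * vn v) := by
    refine (norm_add_le _ _).trans ?_
    rw [norm_mul, norm_mul, RCLike.norm_conj, RCLike.norm_conj]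
    have h1 := (apply_le_vn w 0).trans hw.le
    have h2 := (apply_le_vn w 1).trans hw.le
    have h3 := (apply_le_vn z 0).trans hz
    have h4 := (apply_le_vn z 1).trans hz
    calc _ ≤ 1 * (opNorm2 B * vn v) + 1 * (opNorm2 B * vn v) := by gcongr
      _ = _ := by ring
  have hw' : vn ![-(starRingEnd ℂ) (w 1), (starRingEnd ℂ) (w 0)] = 1 := by
    have h1 := vn_sq ![-(starRingEnd ℂ) (w 1), (starRingEnd ℂ) (w 0)]
    have h2 := vn_sq w
    simp at h1
    rw [hw] at h2
    have h3 := vn_nonneg ![-(starRingEnd ℂ) (w 1), (starRingEnd ℂ) (w 0)]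
    nlinarith
  rw [← Matrix.mulVec_mulVec, ← hzd, decomp w z hw, Matrix.mulVec_add, Matrix.mulVec_smul, Matrix.mulVec_smul]
  refine (vn_add_le _ _).trans ?_
  rw [vn_smul, vn_smul]
  have h5 := vn_mulVec_le C ![-(starRingEnd ℂ) (w 1), (starRingEnd ℂ) (w 0)]
  rw [hw', mul_one] at h5
  have h6 := vn_nonneg (C *ᵥ w)
  have h7 := vn_nonneg (C *ᵥ ![-(starRingEnd ℂ) (w 1), (starRingEnd ℂ) (w 0)])
  calc _ ≤ 2 * (opNorm2 B * vn v) * c + 2 * c * vn v * opNorm2 C := by gcongr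
    _ = _ := by ring

end AMO



namespace AMO

open Filter Topology Matrix
open scoped ComplexOrder

lemma dich {V : ℝ → ℝ} {b θ : ℝ} {H : ell →L[ℂ] ell} (hH : IsSchrodingerOp V b θ H) {E : ℝ}
    (hE : (E : ℂ) ∈ spectrum ℂ H) {G : ℝ} (hG1 : 1 ≤ G)
    (hG : ∀ t, opNorm2 (cm (fun t => (E:ℂ) - (V t : ℝ)) t) ≤ G) (h : ℕ) :
    ∃ x0 : ℝ, opNorm2 (cp (fun t => (E:ℂ) - (V t : ℝ)) b (h + h) x0)
      ≤ 6 * (opNorm2 (cp (fun t => (E:ℂ) - (V t : ℝ)) b h x0)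
          + opNorm2 (cp (fun t => (E:ℂ) - (V t : ℝ)) b h (x0 + h * b))) := by
  set g : ℝ → ℂ := fun t => (E:ℂ) - (V t : ℝ) with hg
  set Q : ℝ := 4 * (h * G^(2*h)) + 1 with hQ
  have hGp : 1 ≤ G^(2*h) := one_le_pow₀ hG1
  have hQ1 : 1 ≤ Q := by
    have : 0 ≤ 4 * (h * G^(2*h)) := by positivity
    linarith
  set K : ℝ := 3 * Q^2 with hK
  have hKpos : 0 < K := by positivity
  obtain ⟨u, hu0, hu⟩ := weyl hH hE (show 0 < 1 / (K * (2 * h + 1)) by positivity)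
  set f : ℤ → ℂ := fun n => (H u - (E:ℂ) • u : ell) n with hf
  have hfn : ∀ n, f n = u (n+1) + u (n-1) - g (n * b + θ) * u n := by
    intro n
    have h1 : f n = (H u) n - E * u n := by
      simp only [hf]
      rfl
    rw [h1, hH u n, hg]
    ring
  set U : ℤ → Fin 2 → ℂ := fun m => ![u m, u (m-1)] with hUd
  have hU : ∀ m : ℤ, U (m+1) = (cm g (m * b + θ)) *ᵥ (U m) + ![f m, 0] := by
    intro m
    funext i
    fin_cases i
    · simp [hUd, cm, hfn]
      ring
    · simp [hUd, cm]
  have hS := hasSum_sq u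
  have hT := hasSum_sq (H u - (E:ℂ) • u)
  have hUS : HasSum (fun m => vn (U m)^2) (‖u‖^2 + ‖u‖^2) := by
    have h1 := hS.add (hasSum_shift hS (-1))
    refine h1.congr_fun fun m => ?_
    rw [vn_sq]
    rfl
  have hF : HasSum (fun m => vn (U (m + h))^2 + vn (U (m + -h))^2
      + ∑ i ∈ Finset.range (2*h), K * ‖f (m + (-h + i))‖^2)
      ((‖u‖^2 + ‖u‖^2) + (‖u‖^2 + ‖u‖^2)
        + ∑ i ∈ Finset.range (2*h), K * ‖H u - (E:ℂ) • u‖^2) := by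
    refine ((hasSum_shift hUS _).add (hasSum_shift hUS _)).add ?_
    refine hasSum_sum fun i _ => ?_
    exact (hasSum_shift hT _).mul_left K
  have hun : 0 < ‖u‖^2 := by
    have := norm_pos_iff.mpr hu0
    positivity
  obtain ⟨m, hm0, hm⟩ : ∃ m, U m ≠ 0 ∧ vn (U (m + h))^2 + vn (U (m + -h))^2
      + ∑ i ∈ Finset.range (2*h), K * ‖f (m + (-h + i))‖^2 ≤ 3 * vn (U m)^2 := by
    by_contra! hc
    have h1 : ∀ m, 3 * vn (U m)^2 ≤ vn (U (m + h))^2 + vn (U (m + -h))^2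
      + ∑ i ∈ Finset.range (2*h), K * ‖f (m + (-h + i))‖^2 := by
      intro m
      by_cases h0 : U m = 0
      · have : vn (U m) = 0 := by rw [h0]; simp [vn]
        rw [this]
        have : 0 ≤ ∑ i ∈ Finset.range (2*h), K * ‖f (m + (-h + i))‖^2 :=
          Finset.sum_nonneg fun i _ => by positivity
        nlinarith [sq_nonneg (vn (U (m + h))), sq_nonneg (vn (U (m + -h)))]
      · exact (hc m h0).le
    have h2 := hasSum_le h1 (hUS.mul_left 3) hF
    have h3 : ∑ i ∈ Finset.range (2*h), K * ‖H u - (E:ℂ) • u‖^2 ≤ ‖u‖^2 := by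
      rw [Finset.sum_const, Finset.card_range, nsmul_eq_mul]
      push_cast
      calc 2 * (h:ℝ) * (K * ‖H u - (E:ℂ) • u‖^2)
          ≤ (2 * h + 1) * (K * ‖H u - (E:ℂ) • u‖^2) := by gcongr; linarith
        _ ≤ (2 * h + 1) * (K * (1 / (K * (2 * h + 1)) * ‖u‖^2)) := by gcongr
        _ = ‖u‖^2 := by field_simp
    linarith
  have hp := vn_pos hm0
  set p := vn (U m) with hpd
  have hsum0 : 0 ≤ ∑ i ∈ Finset.range (2*h), K * ‖f (m + (-h + i))‖^2 :=
    Finset.sum_nonneg fun i _ => by positivity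
  have hUp : vn (U (m + h)) ≤ 2 * p := by
    refine abs_le_of_sq_le_sq' ?_ (by positivity) |>.2
    nlinarith [sq_nonneg (vn (U (m + -h)))]
  have hUm : vn (U (m + -h)) ≤ 2 * p := by
    refine abs_le_of_sq_le_sq' ?_ (by positivity) |>.2
    nlinarith [sq_nonneg (vn (U (m + h)))]
  have hfb : ∀ i : ℕ, i < 2*h → ‖f (m + (-h + i))‖ ≤ p / Q := by
    intro i hi
    have h1 := Finset.single_le_sum (f := fun i : ℕ => K * ‖f (m + (-h + i))‖^2)
      (fun i _ => by positivity) (Finset.mem_range.mpr hi)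
    have h2 : K * ‖f (m + (-h + i))‖^2 ≤ 3 * p^2 := by
      nlinarith [sq_nonneg (vn (U (m + h))), sq_nonneg (vn (U (m + -h)))]
    have h3 : (Q * ‖f (m + (-h + i))‖)^2 ≤ p^2 := by
      rw [hK] at h2
      nlinarith
    rw [le_div_iff₀ (by positivity), mul_comm]
    exact abs_le_of_sq_le_sq' h3 (by positivity) |>.2
  have hGh : G^h ≤ G^(2*h) := pow_le_pow_right₀ hG1 (by omega)
  have hφ : 0 ≤ p / Q := by positivity
  have hQp : 4 * (h * G^(2*h)) * (p / Q) ≤ p := by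
    rw [mul_div_assoc', div_le_iff₀ (by positivity)]
    nlinarith
  have hfw := err_rec hG1 hG hU m hφ h (fun i hi => by
    have := hfb (h + i) (by omega)
    push_cast at this
    rwa [show m + (-(h:ℤ) + (h + i)) = m + i by ring] at this)
  have hbw := err_rec hG1 hG hU (m + -h) hφ h (fun i hi => by
    have := hfb i (by omega)
    rwa [← add_assoc] at this)
  rw [neg_add_cancel_right] at hbw
  set x0 : ℝ := ((m + -h : ℤ):ℝ) * b + θ with hx0
  have hx1 : (m:ℝ) * b + θ = x0 + h * b := by rw [hx0]; push_cast; ring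
  rw [hx1] at hfw
  refine ⟨x0, ?_⟩
  set B := cp g b h x0 with hB
  set C := cp g b h (x0 + h * b) with hC
  have hdet : B.det = 1 := det_cp _ _ _ _
  have hA1 : B.adjugate * B = 1 := by rw [Matrix.adjugate_mul, hdet, one_smul]
  have hA2 : B * B.adjugate = 1 := by rw [Matrix.mul_adjugate, hdet, one_smul]
  have key1 : vn (C *ᵥ U m) ≤ 3 * p := by
    have h1 := vn_sub_comm (C *ᵥ U m) (U (m+h))
    have h2 : vn (C *ᵥ U m - U (m+h)) = vn (U (m+h) - C *ᵥ U m) := by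
      have := vn_smul (-1) (U (m+h) - C *ᵥ U m)
      rw [neg_smul, one_smul, neg_sub, norm_neg, norm_one, one_mul] at this
      exact this
    have h3 : h * G^h * (p/Q) ≤ p := by
      refine le_trans ?_ hQp
      have : (h:ℝ) * G^h ≤ 4 * (h * G^(2*h)) := by
        have : (h:ℝ) * G^h ≤ h * G^(2*h) := by gcongr
        have : 0 ≤ (h:ℝ) * G^(2*h) := by positivity
        linarith
      gcongr
    linarith
  have key2 : vn (B.adjugate *ᵥ U m) ≤ 3 * p := by
    have h1 := vn_sub_comm (B.adjugate *ᵥ U m) (U (m + -h))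
    have h2 : B.adjugate *ᵥ U m - U (m + -h) = B.adjugate *ᵥ (U m - B *ᵥ U (m + -h)) := by
      rw [Matrix.mulVec_sub, Matrix.mulVec_mulVec, hA1, Matrix.one_mulVec]
    rw [h2] at h1
    have h3 := vn_mulVec_le B.adjugate (U m - B *ᵥ U (m + -h))
    have h4 : opNorm2 B.adjugate ≤ 4 * G^h := (opNorm2_adj_le B).trans (by
      have := cp_le_pow hG b h x0
      linarith)
    have h5 : opNorm2 B.adjugate * vn (U m - B *ᵥ U (m + -h)) ≤ p := by
      calc _ ≤ 4 * G^h * (h * G^h * (p/Q)) := by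
            have := vn_nonneg (U m - B *ᵥ U (m + -h))
            gcongr
        _ = 4 * (h * G^(2*h)) * (p/Q) := by rw [two_mul, pow_add]; ring
        _ ≤ p := hQp
    linarith
  have hpc : ‖((p⁻¹:ℝ):ℂ)‖ = p⁻¹ := by rw [Complex.norm_real, Real.norm_eq_abs, abs_of_pos (by positivity)]
  have hfin := two_norm (B := B) (C := C) hdet (w := ((p⁻¹:ℝ):ℂ) • U m) (y := ((p⁻¹:ℝ):ℂ) • (B.adjugate *ᵥ U m))
    (c := 3) (by rw [vn_smul, hpc, ← hpd]; field_simp)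
    (by rw [Matrix.mulVec_smul, Matrix.mulVec_mulVec, hA2, Matrix.one_mulVec])
    (by rw [vn_smul, hpc, inv_mul_le_iff₀ hp]; linarith)
    (by rw [Matrix.mulVec_smul, vn_smul, hpc, inv_mul_le_iff₀ hp]; linarith)
  rw [cp_add, ← hB, ← hC]
  linarith

end AMO


namespace AMO
open Filter Topology Matrix

lemma ee_lip (x y : ℝ) : ‖ee x - ee y‖ ≤ 2 * Real.pi * |x - y| := by
  have h : ee x - ee y = ee y * (ee (x - y) - 1) := by
    rw [mul_sub, ← ee_add]; simp
  rw [h, norm_mul, norm_ee, one_mul]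
  have := Real.norm_exp_I_mul_ofReal_sub_one_le (x := 2 * Real.pi * (x - y))
  rw [Real.norm_eq_abs, abs_mul, abs_of_pos (by positivity : (0:ℝ) < 2 * Real.pi)] at this
  refine le_trans (le_of_eq ?_) this
  unfold ee
  congr 3
  push_cast; ring

lemma root_ge {η : ℂ} {q : ℕ} (h1 : η ≠ 1) (hq : η ^ q = 1) (hn : ‖η‖ = 1) (hq0 : 1 ≤ q) :
    1 / (q:ℝ) ≤ ‖1 - η‖ := by
  have hs : ∑ j ∈ Finset.range q, (1 - η ^ j) = q := by
    rw [Finset.sum_sub_distrib, geom_sum_eq h1, hq]; simp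
  have hj : ∀ j : ℕ, ‖1 - η ^ j‖ ≤ j * ‖1 - η‖ := by
    intro j
    induction j with
    | zero => simp
    | succ j ih =>
      have : 1 - η^(j+1) = (1 - η) + η * (1 - η^j) := by ring
      rw [this]
      refine (norm_add_le _ _).trans ?_
      rw [norm_mul, hn, one_mul]; push_cast; linarith
  have : (q:ℝ) ≤ q * (q * ‖1 - η‖) := by
    calc (q:ℝ) = ‖∑ j ∈ Finset.range q, (1 - η ^ j)‖ := by rw [hs]; simp
      _ ≤ ∑ j ∈ Finset.range q, ‖1 - η ^ j‖ := norm_sum_le _ _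
      _ ≤ ∑ j ∈ Finset.range q, (q * ‖1 - η‖) := by
          refine Finset.sum_le_sum fun j hj' => (hj j).trans ?_
          have : (j:ℝ) ≤ q := by exact_mod_cast (Finset.mem_range.mp hj').le
          gcongr
      _ = _ := by simp
  have hq' : (0:ℝ) < q := by exact_mod_cast hq0
  rw [div_le_iff₀ hq']
  nlinarith

lemma prod_root {μ : ℂ} {q N l : ℕ} (hμ : IsPrimitiveRoot μ q) (hn : ‖μ‖ = 1) (hq : 1 ≤ q) (hN : N ≤ q)
    (hl : l < N) : (1/2:ℝ)^q ≤ ∏ i ∈ (Finset.range N).erase l, ‖μ^l - μ^i‖ := by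
  obtain ⟨m, rfl⟩ : ∃ m, q = m + 1 := ⟨q - 1, by omega⟩
  set e : ℕ → ℕ := fun i => if i < l then l - i - 1 else m - (i - l) with he
  set S := (Finset.range N).erase l with hS
  have hmem : ∀ i ∈ S, i ≠ l ∧ i < N := fun i hi => by
    simpa [hS] using hi
  have hterm : ∀ i ∈ S, ‖μ^l - μ^i‖ = ‖1 - μ^(e i + 1)‖ := by
    intro i hi
    obtain ⟨h1, h2⟩ := hmem i hi
    have h3 : μ^l = μ^i * μ^(e i + 1) := by
      rw [← pow_add]
      by_cases h : i < l
      · simp only [he, h, if_true]; congr 1; omega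
      · simp only [he, h, if_false]
        rw [show i + (m - (i-l) + 1) = l + (m+1) by omega, pow_add, hμ.pow_eq_one, mul_one]
    have h4 : μ^l - μ^i = - (μ^i * (1 - μ^(e i + 1))) := by rw [h3]; ring
    rw [h4, norm_neg, norm_mul, norm_pow, hn, one_pow, one_mul]
  have hinj : Set.InjOn e S := by
    intro i hi j hj hij
    obtain ⟨h1, h2⟩ := hmem i hi
    obtain ⟨h3, h4⟩ := hmem j hj
    simp only [he] at hij
    split_ifs at hij <;> omega
  have hsub : S.image e ⊆ Finset.range m := by
    intro k hk
    obtain ⟨i, hi, rfl⟩ := Finset.mem_image.mp hk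
    obtain ⟨h1, h2⟩ := hmem i hi
    simp only [he, Finset.mem_range]
    split_ifs <;> omega
  have hfull : ∏ k ∈ Finset.range m, ‖1 - μ^(k+1)‖ = m + 1 := by
    have := congrArg norm hμ.prod_one_sub_pow_eq_order
    rw [norm_prod] at this
    rw [this]
    norm_cast
  rw [Finset.prod_congr rfl hterm, ← Finset.prod_image (f := fun k => ‖1 - μ^(k+1)‖) hinj]
  rw [← Finset.prod_sdiff hsub] at hfull
  have hrest : ∏ k ∈ Finset.range m \ S.image e, ‖1 - μ^(k+1)‖ ≤ 2^(m+1) := by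
    calc _ ≤ ∏ k ∈ Finset.range m \ S.image e, (2:ℝ) := by
          refine Finset.prod_le_prod (fun _ _ => norm_nonneg _) fun k _ => ?_
          refine (norm_sub_le _ _).trans ?_
          rw [norm_pow, hn]; norm_num
      _ = 2^(Finset.range m \ S.image e).card := by simp
      _ ≤ _ := by
          apply pow_le_pow_right₀ (by norm_num)
          refine (Finset.card_le_card Finset.sdiff_subset).trans ?_
          simp
  have hnn : 0 ≤ ∏ k ∈ S.image e, ‖1 - μ^(k+1)‖ := Finset.prod_nonneg fun _ _ => norm_nonneg _
  have h5 : (1:ℝ) ≤ 2^(m+1) * ∏ k ∈ S.image e, ‖1 - μ^(k+1)‖ := by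
    have := mul_le_mul_of_nonneg_right hrest hnn
    have : (0:ℝ) ≤ m := by positivity
    linarith
  rw [one_div, inv_pow]
  exact (inv_le_iff_one_le_mul₀' (by positivity)).mpr h5

lemma exists_rat {b : ℝ} (hb : Irrational b) (N0 : ℕ) : ∃ r : ℚ, N0 ≤ r.den ∧ |b - r| < 1 / (r.den:ℝ)^2 := by
  by_contra hcon
  push Not at hcon
  have hinf := Real.infinite_rat_abs_sub_lt_one_div_den_sq_of_irrational hb
  apply hinf
  obtain ⟨M, hM⟩ := exists_nat_gt (|b| + 1)
  refine Set.Finite.subset (s := ((Finset.Icc (-(M*N0:ℤ)) (M*N0)) ×ˢ (Finset.range N0)).image (fun p => (p.1:ℚ) / p.2)) (Finset.finite_toSet _) ?_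
  intro r hr
  simp only [Set.mem_ofPred_eq] at hr
  have hden : r.den < N0 := by
    by_contra h
    push Not at h
    exact absurd hr (not_lt.mpr (hcon r h))
  rw [Finset.mem_coe, Finset.mem_image]
  have hd : (1:ℝ) ≤ r.den := by exact_mod_cast r.den_pos
  refine ⟨(r.num, r.den), ?_, by simpa using r.num_div_den⟩
  rw [Finset.mem_product]
  refine ⟨?_, by simpa using hden⟩
  have h1 : |(r:ℝ)| ≤ M := by
    have : 1 / (r.den:ℝ)^2 ≤ 1 := by
      rw [div_le_one (by positivity)]; nlinarith
    have h2 : |(r:ℝ)| - |b| ≤ |(r:ℝ) - b| := abs_sub_abs_le_abs_sub _ _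
    rw [abs_sub_comm] at h2
    linarith
  have h2 : (r:ℝ) = r.num / r.den := Rat.cast_def r
  have h3 : |(r.num:ℝ)| ≤ M * N0 := by
    have : (r.num:ℝ) = r * r.den := by rw [h2]; field_simp
    rw [this, abs_mul, abs_of_nonneg (by positivity : (0:ℝ) ≤ r.den)]
    have : (r.den:ℝ) ≤ N0 := by exact_mod_cast hden.le
    gcongr
  have h4 : |r.num| ≤ M * N0 := by exact_mod_cast h3
  rw [Finset.mem_Icc]
  exact abs_le.mp h4

lemma denoms {b : ℝ} (hb : Irrational b) : ∃ c : ℝ, 0 < c ∧ c ≤ 1 ∧ ∀ N0 : ℕ, ∃ s : ℕ, N0 ≤ s ∧ 1 ≤ s ∧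
    ∀ l < 2 * s, c ^ (2*s) ≤ ∏ i ∈ (Finset.range (2*s)).erase l, ‖ee (l*b) - ee (i*b)‖ := by
  refine ⟨(1/2)^33, by positivity, by norm_num, fun N0 => ?_⟩
  obtain ⟨r, hr1, hr2⟩ := exists_rat hb (32*(N0+1))
  set q := r.den with hq
  have hq0 : 1 ≤ q := r.den_pos
  have hqr : (0:ℝ) < q := by exact_mod_cast hq0
  refine ⟨q/32, by omega, by omega, ?_⟩
  set s := q/32 with hs
  have hs1 : 32 * s ≤ q := by omega
  have hs2 : q ≤ 64 * s := by omega
  intro l hl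
  set μ := ee r with hμd
  have hprim : IsPrimitiveRoot μ q := by
    have := Complex.isPrimitiveRoot_exp_of_isCoprime r.num q (by omega) (by
      have := r.reduced
      rw [Int.isCoprime_iff_gcd_eq_one]
      simpa [Int.gcd, Nat.Coprime] using this)
    convert this using 1
    rw [hμd, ee]
    congr 1
    have h2 : (r:ℝ) = r.num / r.den := Rat.cast_def r
    rw [h2]; push_cast; ring
  have hμn : ‖μ‖ = 1 := norm_ee _
  have hpr := prod_root hprim hμn hq0 (by omega : 2 * s ≤ q) hl
  have hpt : ∀ i j : ℕ, i < j → j < 2 * s → (1/2) * ‖μ^j - μ^i‖ ≤ ‖ee (j*b) - ee (i*b)‖ := by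
    intro i j hij hj
    obtain ⟨k, rfl⟩ := Nat.exists_eq_add_of_lt hij
    set k' := k + 1
    have h1 : ‖μ^(i+k+1) - μ^i‖ = ‖1 - μ^k'‖ := by
      rw [show μ^(i+k+1) - μ^i = -(μ^i * (1 - μ^k')) by simp only [k']; ring, norm_neg, norm_mul, norm_pow, hμn, one_pow, one_mul]
    have h2 : ‖ee ((i+k+1:ℕ)*b) - ee (i*b)‖ = ‖1 - ee (k'*b)‖ := by
      have : ee ((i+k+1:ℕ)*b) = ee (i*b) * ee (k'*b) := by
        rw [← ee_add]; congr 1; simp only [k']; push_cast; ring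
      rw [this, show ee (i*b) * ee (k'*b) - ee (i*b) = -(ee (i*b) * (1 - ee (k'*b))) by ring, norm_neg, norm_mul, norm_ee, one_mul]
    rw [h1, h2]
    have hk2 : 16 * k' ≤ q := by simp only [k']; omega
    have h3 : 1 / (q:ℝ) ≤ ‖1 - μ^k'‖ := by
      apply root_ge _ _ _ hq0
      · exact hprim.pow_ne_one_of_pos_of_lt (by simp [k']) (by omega)
      · rw [← pow_mul, mul_comm, pow_mul, hprim.pow_eq_one, one_pow]
      · rw [norm_pow, hμn, one_pow]
    have h4 : ‖ee (k'*b) - μ^k'‖ ≤ 1/2 * (1/(q:ℝ)) := by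
      rw [hμd, ← ee_nat_mul]
      refine (ee_lip _ _).trans ?_
      rw [← mul_sub, abs_mul, abs_of_nonneg (by positivity : (0:ℝ) ≤ k')]
      have hk3 : 16 * (k':ℝ) ≤ q := by exact_mod_cast hk2
      calc 2 * Real.pi * (k' * |b - r|) ≤ 2 * 4 * ((q/16) * (1/(q:ℝ)^2)) := by
            have := Real.pi_le_four
            have h5 : (k':ℝ) ≤ q/16 := by linarith
            have := hr2.le
            gcongr
        _ = 1/2 * (1/(q:ℝ)) := by field_simp; norm_num
    have h5 : ‖1 - μ^k'‖ ≤ ‖1 - ee (k'*b)‖ + ‖ee (k'*b) - μ^k'‖ := by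
      refine le_trans (le_of_eq ?_) (norm_add_le _ _)
      congr 1; ring
    linarith
  have hpt' : ∀ i ∈ (Finset.range (2*s)).erase l, (1/2) * ‖μ^l - μ^i‖ ≤ ‖ee (l*b) - ee (i*b)‖ := by
    intro i hi
    obtain ⟨h1, h2⟩ : i ≠ l ∧ i < 2 * s := by simpa using hi
    rcases lt_or_gt_of_ne h1 with h | h
    · exact hpt i l h hl
    · rw [norm_sub_rev, norm_sub_rev (ee _)]; exact hpt l i h h2
  refine le_trans ?_ (Finset.prod_le_prod (fun _ _ => by positivity) hpt')
  rw [Finset.prod_mul_distrib, Finset.prod_const, Finset.card_erase_of_mem (by simpa using hl), Finset.card_range, ← pow_mul]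
  calc (1/2:ℝ)^(33*(2*s)) ≤ (1/2)^((2*s-1) + q) := by
        apply pow_le_pow_of_le_one (by norm_num) (by norm_num); omega
    _ = (1/2)^(2*s-1) * (1/2)^q := pow_add _ _ _
    _ ≤ _ := by gcongr

end AMO


namespace AMO
open Filter Topology Matrix

lemma sub_ee_ne {ρ : ℝ} (hρ : 0 < ρ) (h1 : ρ ≠ 1) (t : ℝ) : ee t - (ρ:ℂ) ≠ 0 := by
  intro h
  have h2 : ee t = ρ := sub_eq_zero.mp h
  have h3 := congrArg norm h2
  rw [norm_ee, Complex.norm_real, Real.norm_eq_abs, abs_of_pos hρ] at h3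
  exact h1 h3.symm

lemma integral_log_ee {ρ : ℝ} (hρ : 0 < ρ) :
    ∫ t in (0:ℝ)..1, Real.log ‖ee t - (ρ:ℂ)‖ = Real.posLog ρ := by
  have h := circleAverage_log_norm_sub_const_eq_posLog (a := (ρ:ℂ))
  rw [Real.circleAverage_def, Complex.norm_real, Real.norm_eq_abs, abs_of_pos hρ] at h
  rw [← h]
  have h2 := intervalIntegral.integral_comp_mul_left (a := 0) (b := 1)
    (fun θ => Real.log ‖circleMap 0 1 θ - (ρ:ℂ)‖) (c := 2 * Real.pi) (by positivity)
  rw [mul_zero, mul_one] at h2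
  rw [← h2]
  refine intervalIntegral.integral_congr fun t _ => ?_
  simp only [circleMap, ee]
  congr 3
  push_cast
  simp

lemma nodeprod {b : ℝ} (hb : Irrational b) {ρ : ℝ} (hρ : 0 < ρ) (h1 : ρ ≠ 1) {η : ℝ} (hη : 0 < η) :
    ∃ C : ℝ, ∀ (N : ℕ) (x0 y : ℝ),
      Real.exp (N * (Real.posLog ρ - η) - C) ≤ ∏ l ∈ Finset.range N, ‖(ρ:ℂ) * ee y - ee (x0 + l*b)‖ ∧
      ∏ l ∈ Finset.range N, ‖(ρ:ℂ) * ee y - ee (x0 + l*b)‖ ≤ Real.exp (N * (Real.posLog ρ + η) + C) := by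
  have hc : Continuous (fun t => Real.log ‖ee t - (ρ:ℂ)‖) := by
    refine Continuous.log ?_ fun t => norm_ne_zero_iff.mpr (sub_ee_ne hρ h1 t)
    have := continuous_ee
    fun_prop
  have hp : Function.Periodic (fun t => Real.log ‖ee t - (ρ:ℂ)‖) 1 := by
    intro t
    simp only [ee_periodic t]
  obtain ⟨C, hC⟩ := EQ hb hc hp hη
  refine ⟨C, fun N x0 y => ?_⟩
  have h2 := hC N (x0 - y)
  rw [integral_log_ee hρ] at h2
  have h3 : ∏ l ∈ Finset.range N, ‖(ρ:ℂ) * ee y - ee (x0 + l*b)‖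
      = Real.exp (∑ l ∈ Finset.range N, Real.log ‖ee (x0 - y + l*b) - (ρ:ℂ)‖) := by
    rw [Real.exp_sum]
    refine Finset.prod_congr rfl fun l _ => ?_
    rw [Real.exp_log (norm_pos_iff.mpr (sub_ee_ne hρ h1 _))]
    have : (ρ:ℂ) * ee y - ee (x0 + l*b) = -(ee y * (ee (x0 - y + l*b) - (ρ:ℂ))) := by
      rw [mul_sub, ← ee_add, show y + (x0 - y + l*b) = x0 + l*b by ring]; ring
    rw [this, norm_neg, norm_mul, norm_ee, one_mul]
  rw [h3]
  obtain ⟨h4, h5⟩ := abs_le.mp h2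
  constructor <;> apply Real.exp_le_exp.mpr <;> linarith

lemma exists_poly (lam E b : ℝ) (n : ℕ) (j : Fin 2) : ∃ F0 F1 : Polynomial ℂ, ∀ ρ : ℝ, 0 < ρ → ∀ x : ℝ,
    F0.eval ((ρ:ℂ) * ee x) = ((ρ:ℂ) * ee x)^n * cp (gz lam E ρ) b n x 0 j ∧
    F1.eval ((ρ:ℂ) * ee x) = ((ρ:ℂ) * ee x)^n * cp (gz lam E ρ) b n x 1 j := by
  induction n with
  | zero =>
    refine ⟨Polynomial.C ((1 : Matrix (Fin 2) (Fin 2) ℂ) 0 j), Polynomial.C ((1 : Matrix (Fin 2) (Fin 2) ℂ) 1 j), fun ρ _ x => ?_⟩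
    simp [cp_zero]
  | succ n ih =>
    obtain ⟨F0, F1, ih⟩ := ih
    refine ⟨(Polynomial.C (E:ℂ) * Polynomial.X - Polynomial.C (lam:ℂ) * (Polynomial.C (ee (n*b)) * Polynomial.X^2 + Polynomial.C (ee (-(n*b))))) * F0 - Polynomial.X * F1, Polynomial.X * F0, fun ρ hρ x => ?_⟩
    obtain ⟨h1, h2⟩ := ih ρ hρ x
    have hρ' : (ρ:ℂ) ≠ 0 := by exact_mod_cast hρ.ne'
    have hx := ee_ne_zero x
    constructor
    · simp only [Polynomial.eval_sub, Polynomial.eval_mul, Polynomial.eval_C, Polynomial.eval_X, Polynomial.eval_add, Polynomial.eval_pow, h1, h2, cp_succ, Matrix.mul_apply, Fin.sum_univ_two, cm, gz, Matrix.of_apply, Matrix.cons_val_zero, Matrix.cons_val_one, Matrix.cons_val', Matrix.cons_val_fin_one]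
      rw [neg_add, ee_add, ee_add, ee_neg x]
      push_cast
      field_simp
      ring
    · simp only [Polynomial.eval_mul, Polynomial.eval_X, h1, cp_succ, Matrix.mul_apply, Fin.sum_univ_two, cm, Matrix.of_apply, Matrix.cons_val_zero, Matrix.cons_val_one, Matrix.cons_val', Matrix.cons_val_fin_one]
      ring

lemma exists_poly' (lam E b : ℝ) (n : ℕ) (i j : Fin 2) : ∃ F : Polynomial ℂ, ∀ ρ : ℝ, 0 < ρ → ∀ x : ℝ,
    F.eval ((ρ:ℂ) * ee x) = ((ρ:ℂ) * ee x)^n * cp (gz lam E ρ) b n x i j := by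
  obtain ⟨F0, F1, h⟩ := exists_poly lam E b n j
  fin_cases i
  · exact ⟨F0, fun ρ hρ x => (h ρ hρ x).1⟩
  · exact ⟨F1, fun ρ hρ x => (h ρ hρ x).2⟩

lemma annulus_max {f : ℂ → ℂ} {R C : ℝ} (hR : 1 < R) (hf : ∀ w : ℂ, w ≠ 0 → DifferentiableAt ℂ f w)
    (h : ∀ w : ℂ, ‖w‖ = R ∨ ‖w‖ = R⁻¹ → ‖f w‖ ≤ C) {z : ℂ} (hz : ‖z‖ = 1) : ‖f z‖ ≤ C := by
  set U : Set ℂ := {w | R⁻¹ < ‖w‖ ∧ ‖w‖ < R} with hU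
  have hUo : IsOpen U := (isOpen_lt continuous_const continuous_norm).inter (isOpen_lt continuous_norm continuous_const)
  have hR0 : 0 < R⁻¹ := by positivity
  have hcl : closure U ⊆ {w | R⁻¹ ≤ ‖w‖ ∧ ‖w‖ ≤ R} := by
    refine closure_minimal (fun w hw => ⟨hw.1.le, hw.2.le⟩) ?_
    exact (isClosed_le continuous_const continuous_norm).inter (isClosed_le continuous_norm continuous_const)
  have hb : Bornology.IsBounded U := by
    refine (Metric.isBounded_ball (x := (0:ℂ)) (r := R)).subset fun w hw => ?_
    simpa using hw.2
  have hne : ∀ w ∈ closure U, w ≠ 0 := by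
    intro w hw h0
    have := (hcl hw).1
    rw [h0, norm_zero] at this
    linarith
  have hd : DiffContOnCl ℂ f U := by
    refine ⟨fun w hw => (hf w (hne w (subset_closure hw))).differentiableWithinAt, fun w hw => (hf w (hne w hw)).continuousAt.continuousWithinAt⟩
  refine Complex.norm_le_of_forall_mem_frontier_norm_le hb hd (fun w hw => h w ?_) (subset_closure ?_)
  · rw [frontier, hUo.interior_eq] at hw
    obtain ⟨h1, h2⟩ := hcl hw.1
    have h3 : ¬ (R⁻¹ < ‖w‖ ∧ ‖w‖ < R) := hw.2
    by_contra hcon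
    push Not at hcon
    exact h3 ⟨lt_of_le_of_ne h1 hcon.2.symm, lt_of_le_of_ne h2 hcon.1⟩
  · show R⁻¹ < ‖z‖ ∧ ‖z‖ < R
    rw [hz]
    exact ⟨inv_lt_one_of_one_lt₀ hR, hR⟩

end AMO


namespace AMO
open Filter Topology Matrix

lemma interp_bound {s n : ℕ} (hsn : s ≤ n) (F : Polynomial ℂ) (w : ℕ → ℂ)
    (hw : ∀ l, ‖w l‖ = 1) {d V A a a' P R : ℝ} (hR : 1 < R) (hd : 0 < d) (hV : 0 ≤ V) (hA : 0 ≤ A)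
    (hden : ∀ l < 2 * s, d ≤ ∏ i ∈ (Finset.range (2*s)).erase l, ‖w l - w i‖)
    (hFV : ∀ l < 2 * s, ‖F.eval (w l)‖ ≤ V)
    (hFA : ∀ z : ℂ, ‖z‖ = R ∨ ‖z‖ = R⁻¹ → ‖F.eval z‖ ≤ ‖z‖^n * A)
    (ho1 : ∀ z : ℂ, ‖z‖ = R ∨ ‖z‖ = R⁻¹ → ‖z‖^s ≤ a * ∏ l ∈ Finset.range (2*s), ‖z - w l‖)
    (ho2 : ∀ z : ℂ, ‖z‖ = R ∨ ‖z‖ = R⁻¹ → 1 ≤ a' * ∏ l ∈ Finset.range (2*s), ‖z - w l‖)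
    {zs : ℂ} (hz : ‖zs‖ = 1) (hP : ∏ l ∈ Finset.range (2*s), ‖zs - w l‖ ≤ P) :
    ‖F.eval zs‖ ≤ (2*s:ℕ) * V * ((R+1)^(2*s)/d)
      + P * (A * a + (2*s:ℕ) * V * ((R+1)^(2*s)/d) * a') := by
  set S := Finset.range (2*s) with hS
  set B : ℝ := (2*s:ℕ) * V * ((R+1)^(2*s)/d) with hB
  have hB0 : 0 ≤ B := by positivity
  have hinj : Set.InjOn w S := by
    intro i hi j hj hij
    by_contra hne
    have hi' : i < 2 * s := by simpa [hS] using hi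
    have h1 := hden i hi'
    have : ∏ k ∈ S.erase i, ‖w i - w k‖ = 0 := by
      apply Finset.prod_eq_zero (i := j)
      · exact Finset.mem_erase.mpr ⟨Ne.symm hne, hj⟩
      · rw [hij, sub_self, norm_zero]
    linarith
  have hw0 : ∀ l, w l ≠ 0 := fun l h => by
    have := hw l
    rw [h, norm_zero] at this
    exact zero_ne_one this
  set r : ℕ → ℂ := fun l => (w l ^ (n-s))⁻¹ * F.eval (w l) with hr
  have hrV : ∀ l < 2*s, ‖r l‖ ≤ V := by
    intro l hl
    rw [hr]
    simp only
    rw [norm_mul, norm_inv, norm_pow, hw l, one_pow, inv_one, one_mul]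
    exact hFV l hl
  set Lg := Lagrange.interpolate S w r with hLg
  have hLgB : ∀ z : ℂ, ‖z‖ ≤ R → ‖Lg.eval z‖ ≤ B := by
    intro z hz
    rw [hLg, Lagrange.interpolate_apply, Polynomial.eval_finsetSum]
    refine (norm_sum_le _ _).trans ?_
    calc _ ≤ ∑ l ∈ S, V * ((R+1)^(2*s)/d) := by
          refine Finset.sum_le_sum fun l hl => ?_
          have hl' : l < 2 * s := by simpa [hS] using hl
          rw [Polynomial.eval_mul, Polynomial.eval_C, norm_mul]
          refine mul_le_mul (hrV l hl') ?_ (norm_nonneg _) hV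
          rw [Lagrange.basis, Polynomial.eval_prod, norm_prod]
          have : ∀ i ∈ S.erase l, ‖(Lagrange.basisDivisor (w l) (w i)).eval z‖ = ‖z - w i‖ / ‖w l - w i‖ := by
            intro i _
            rw [Lagrange.basisDivisor]
            simp [div_eq_inv_mul]
          rw [Finset.prod_congr rfl this, Finset.prod_div_distrib]
          refine div_le_div₀ (by positivity) ?_ hd (hden l hl')
          calc _ ≤ ∏ i ∈ S.erase l, (R+1) := by
                refine Finset.prod_le_prod (fun _ _ => norm_nonneg _) fun i _ => ?_
                refine (norm_sub_le _ _).trans ?_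
                rw [hw i]; linarith
            _ = (R+1)^(S.erase l).card := by simp
            _ ≤ _ := by
              apply pow_le_pow_right₀ (by linarith)
              refine (Finset.card_le_card (Finset.erase_subset _ _)).trans ?_
              simp [hS]
      _ = B := by simp [hS, hB, mul_assoc]
  have hdvd : Lagrange.nodal S w ∣ F - Polynomial.X^(n-s) * Lg := by
    rw [Lagrange.nodal_eq]
    refine Finset.prod_dvd_of_coprime ?_ fun l hl => ?_
    · intro i hi j hj hij
      exact Polynomial.isCoprime_X_sub_C_of_isUnit_sub (IsUnit.mk0 _ (sub_ne_zero.mpr fun h => hij (hinj hi hj h)))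
    · rw [Polynomial.dvd_iff_isRoot, Polynomial.IsRoot, Polynomial.eval_sub, Polynomial.eval_mul, Polynomial.eval_pow, Polynomial.eval_X, hLg, Lagrange.eval_interpolate_at_node _ hinj hl, hr]
      have := pow_ne_zero (n-s) (hw0 l)
      field_simp
      ring
  obtain ⟨h, hh⟩ := hdvd
  have hev : ∀ z : ℂ, F.eval z = z^(n-s) * Lg.eval z + (∏ l ∈ S, (z - w l)) * h.eval z := by
    intro z
    have := congrArg (Polynomial.eval z) hh
    rw [Polynomial.eval_sub, Polynomial.eval_mul, Polynomial.eval_pow, Polynomial.eval_X, Polynomial.eval_mul, Lagrange.eval_nodal] at this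
    linear_combination this
  have hmax : ‖(fun z : ℂ => h.eval z * (z⁻¹)^(n-s)) zs‖ ≤ A * a + B * a' := by
    refine annulus_max (f := fun z : ℂ => h.eval z * (z⁻¹)^(n-s)) hR (fun z hz => ?_) (fun z hzR => ?_) hz
    · exact h.differentiable.differentiableAt.mul ((differentiableAt_inv hz).pow _)
    · have hz0 : 0 < ‖z‖ := by
        rcases hzR with h | h <;> rw [h] <;> positivity
      have hzR' : ‖z‖ ≤ R := by
        rcases hzR with h | h
        · exact h.le
        · rw [h]; exact (inv_le_one_of_one_le₀ hR.le).trans hR.le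
      set Q := ∏ l ∈ S, ‖z - w l‖ with hQ
      have h1 : 1 ≤ a' * Q := ho2 z hzR
      have hQ0 : 0 ≤ Q := Finset.prod_nonneg fun _ _ => norm_nonneg _
      have hQ1 : 0 < Q := by
        rcases hQ0.eq_or_lt with h | h
        · rw [← h] at h1; linarith
        · exact h
      have h2 : ‖z‖^s ≤ a * Q := ho1 z hzR
      have h3 : Q * ‖h.eval z‖ ≤ ‖z‖^n * A + ‖z‖^(n-s) * B := by
        have h4 : (∏ l ∈ S, (z - w l)) * h.eval z = F.eval z - z^(n-s) * Lg.eval z := by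
          rw [hev z]; ring
        have h5 := congrArg norm h4
        rw [norm_mul, norm_prod] at h5
        rw [hQ, h5]
        refine (norm_sub_le _ _).trans ?_
        rw [norm_mul, norm_pow]
        have := hFA z hzR
        have := hLgB z hzR'
        gcongr
      have h6 : ‖z‖^n = ‖z‖^(n-s) * ‖z‖^s := by rw [← pow_add]; congr 1; omega
      rw [h6] at h3
      have hpz : 0 < ‖z‖^(n-s) := by positivity
      show ‖h.eval z * (z⁻¹)^(n-s)‖ ≤ _
      rw [norm_mul, norm_pow, norm_inv, inv_pow]
      rw [← div_eq_mul_inv, div_le_iff₀ hpz]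
      refine le_of_mul_le_mul_left (h3.trans ?_) hQ1
      have h7 : ‖z‖^s * A + B ≤ Q * (A * a + B * a') := by
        have := mul_le_mul_of_nonneg_right h2 hA
        have := mul_le_mul_of_nonneg_left h1 hB0
        nlinarith
      have := mul_le_mul_of_nonneg_left h7 hpz.le
      nlinarith
  have hzs0 : zs ≠ 0 := by
    intro h
    rw [h, norm_zero] at hz
    exact zero_ne_one hz
  simp only [norm_mul, norm_pow, norm_inv, hz, inv_one, one_pow, mul_one] at hmax
  rw [hev zs]
  refine (norm_add_le _ _).trans ?_
  rw [norm_mul, norm_mul, norm_pow, hz, one_pow, one_mul, norm_prod]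
  have h8 := hLgB zs (by rw [hz]; exact hR.le)
  have h9 : (∏ l ∈ S, ‖zs - w l‖) * ‖h.eval zs‖ ≤ P * (A * a + B * a') := by
    have : 0 ≤ ∏ l ∈ S, ‖zs - w l‖ := Finset.prod_nonneg fun _ _ => norm_nonneg _
    exact mul_le_mul hP hmax (norm_nonneg _) (this.trans hP)
  linarith

end AMO


namespace AMO
open Filter Topology Matrix

lemma polar (z : ℂ) : ∃ y : ℝ, z = (‖z‖:ℂ) * ee y := by
  refine ⟨z.arg / (2 * Real.pi), ?_⟩
  conv_lhs => rw [← Complex.norm_mul_exp_arg_mul_I z]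
  rw [ee]
  congr 2
  have : (Real.pi:ℂ) ≠ 0 := by exact_mod_cast Real.pi_ne_zero
  push_cast
  field_simp

lemma norm_sub_mono {R : ℝ} (hR : 1 ≤ R) (y t : ℝ) : ‖ee y - ee t‖ ≤ ‖(R:ℂ) * ee y - ee t‖ := by
  set u := ee (t - y) with hu
  have h1 : ee t = ee y * u := by rw [hu, ← ee_add]; congr 1; ring
  have h2 : ee y - ee t = ee y * (1 - u) := by rw [h1]; ring
  have h3 : (R:ℂ) * ee y - ee t = ee y * (R - u) := by rw [h1]; ring
  rw [h2, h3, norm_mul, norm_mul, norm_ee, one_mul, one_mul]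
  have hre : u.re ≤ 1 := (Complex.re_le_norm u).trans (norm_ee _).le
  rw [← Real.sqrt_sq (norm_nonneg (1 - u)), ← Real.sqrt_sq (norm_nonneg ((R:ℂ) - u))]
  apply Real.sqrt_le_sqrt
  rw [← Complex.normSq_eq_norm_sq, ← Complex.normSq_eq_norm_sq, Complex.normSq_apply, Complex.normSq_apply]
  simp only [Complex.sub_re, Complex.sub_im, Complex.one_re, Complex.one_im, Complex.ofReal_re, Complex.ofReal_im]
  nlinarith

lemma cp_shift (g : ℝ → ℂ) (b : ℝ) (n j : ℕ) (x : ℝ) :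
    opNorm2 (cp g b n (x + j*b)) ≤ opNorm2 (cp g b j (x + n*b)) * opNorm2 (cp g b n x) * (4 * opNorm2 (cp g b j x)) := by
  have h : cp g b n (x + j*b) = cp g b j (x + n*b) * cp g b n x * (cp g b j x).adjugate := by
    rw [← cp_add, add_comm j n, cp_add, Matrix.mul_assoc, Matrix.mul_adjugate, det_cp, one_smul, Matrix.mul_one]
  rw [h]
  refine (opNorm2_mul_le _ _).trans ?_
  have h1 := opNorm2_mul_le (cp g b j (x + n*b)) (cp g b n x)
  have h2 := opNorm2_adj_le (cp g b j x)
  have := opNorm2_nonneg (cp g b j x).adjugate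
  have := opNorm2_nonneg (cp g b j (x + n*b))
  have := opNorm2_nonneg (cp g b n x)
  gcongr

lemma exists_large {g : ℝ → ℂ} (hg : Continuous g) (b : ℝ) (n : ℕ) {a : ℝ}
    (h : a ≤ ∫ x in (0:ℝ)..1, Real.log (opNorm2 (cp g b n x))) :
    ∃ x, Real.exp a ≤ opNorm2 (cp g b n x) := by
  by_contra hcon
  push Not at hcon
  have h1 : ∀ x, Real.log (opNorm2 (cp g b n x)) < a := fun x => by
    have := hcon x
    rwa [Real.log_lt_iff_lt_exp (by linarith [one_le_cp g b n x])]
  have h2 := intervalIntegral.integral_lt_integral_of_continuousOn_of_le_of_exists_lt (a := (0:ℝ)) (b := 1) one_pos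
    (continuous_logcp hg b n).continuousOn (continuousOn_const (c := a)) (fun x _ => (h1 x).le) ⟨0, by simp, h1 0⟩
  simp at h2
  linarith

set_option maxHeartbeats 2000000 in
lemma contra {b : ℝ} (hb : Irrational b) {lam E L : ℝ} (hL : 0 < L) (hlam : |lam| < Real.exp L)
    (hinf : ∀ n : ℕ, 1 ≤ n → n * L ≤ ∫ x in (0:ℝ)..1, Real.log (opNorm2 (cp (gz lam E 1) b n x)))
    (hΛ : ∀ Λ, L < Λ → ∃ N : ℕ, 1 ≤ N ∧ (N:ℝ)⁻¹ * ∫ x in (0:ℝ)..1, Real.log (opNorm2 (cp (gz lam E 1) b N x)) < Λ)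
    (hdich : ∀ h : ℕ, ∃ x0, opNorm2 (cp (gz lam E 1) b (h+h) x0) ≤
      6 * (opNorm2 (cp (gz lam E 1) b h x0) + opNorm2 (cp (gz lam E 1) b h (x0 + h*b)))) : False := by
  -- radius
  obtain ⟨r, hr, hlr⟩ : ∃ r : ℝ, 0 < r ∧ |lam| * Real.exp r ≤ Real.exp L := by
    have h0 := abs_nonneg lam
    have h1 : 0 < (Real.exp L - |lam|) / (|lam| + 1) := div_pos (by linarith) (by linarith)
    refine ⟨Real.log (1 + (Real.exp L - |lam|) / (|lam| + 1)), Real.log_pos (by linarith), ?_⟩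
    rw [Real.exp_log (by linarith)]
    have h2 : |lam| * ((Real.exp L - |lam|) / (|lam| + 1)) ≤ Real.exp L - |lam| := by
      rw [mul_div_assoc', div_le_iff₀ (by linarith)]
      nlinarith
    linarith
  set R := Real.exp r with hR
  have hR1 : 1 < R := Real.one_lt_exp_iff.mpr hr
  have hR0 : 0 < R := by linarith
  have hRi : R⁻¹ = Real.exp (-r) := by rw [hR, Real.exp_neg]
  have hRi1 : R⁻¹ < 1 := inv_lt_one_of_one_lt₀ hR1
  have hli : |lam| * R⁻¹ ≤ Real.exp L := by
    have := abs_nonneg lam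
    have : |lam| * R⁻¹ ≤ |lam| * 1 := by gcongr
    linarith
  obtain ⟨c, hc0, hc1, hden⟩ := denoms hb
  set δ := Real.log ((R+1)/c) with hδ
  have hδe : Real.exp δ = (R+1)/c := Real.exp_log (by positivity)
  obtain ⟨K, hK⟩ := exists_nat_gt ((2 * L + δ + r + 1) / (L/2))
  rw [div_lt_iff₀ (by positivity)] at hK
  set K' := K + 1 with hK'
  have hK1 : 2 * L + δ + r + 1 ≤ (K':ℝ) * (L/2) := by
    rw [hK']; push_cast; nlinarith
  have hK'0 : (1:ℝ) ≤ K' := by rw [hK']; push_cast; linarith [(Nat.cast_nonneg K : (0:ℝ) ≤ K)]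
  set η := r / 4 / (K' + 8) with hη
  have hη0 : 0 < η := by positivity
  have hηK : (K' + 8) * η = r / 4 := by rw [hη]; field_simp
  -- norm growth
  have hgrow : ∀ ρ : ℝ, 0 < ρ → |lam| * ρ ≤ Real.exp L → |lam| * ρ⁻¹ ≤ Real.exp L →
      ∃ C : ℝ, 1 ≤ C ∧ ∀ n x, opNorm2 (cp (gz lam E ρ) b n x) ≤ C * Real.exp (n * (L + η)) := by
    intro ρ hρ h1 h2
    have hle : Real.exp L ≤ Real.exp (L + η/2) := Real.exp_le_exp.mpr (by linarith)
    obtain ⟨C, hC, h⟩ := step1 (E := E) hb (Λ := L + η/2) (by linarith) hρ (h1.trans hle) (h2.trans hle)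
      (hΛ _ (by linarith)) (half_pos hη0)
    refine ⟨C, hC, fun n x => (h n x).trans (le_of_eq ?_)⟩
    congr 3; ring
  obtain ⟨C1, hC1, hg1⟩ := hgrow 1 one_pos (by simpa using hlam.le) (by simpa using hlam.le)
  obtain ⟨C2, hC2, hg2⟩ := hgrow R hR0 hlr hli
  obtain ⟨C3, hC3, hg3⟩ := hgrow R⁻¹ (by positivity) hli (by rwa [inv_inv])
  -- node products
  obtain ⟨D1, hD1⟩ := nodeprod hb hR0 hR1.ne' hη0
  obtain ⟨D2, hD2⟩ := nodeprod hb (inv_pos.mpr hR0) hRi1.ne hη0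
  obtain ⟨D3, hD3⟩ := nodeprod hb (Real.exp_pos (r/16)) (Real.one_lt_exp_iff.mpr (by linarith)).ne' hη0
  set Dm := max D1 (max D2 D3) with hDm
  have hDm1 : D1 ≤ Dm := le_max_left _ _
  have hDm2 : D2 ≤ Dm := (le_max_left _ _).trans (le_max_right _ _)
  have hDm3 : D3 ≤ Dm := (le_max_right _ _).trans (le_max_right _ _)
  have hpl1 : Real.posLog R = r := by
    rw [Real.posLog_eq_log (by rw [abs_of_pos hR0]; exact hR1.le), hR, Real.log_exp]
  have hpl2 : Real.posLog R⁻¹ = 0 := by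
    rw [Real.posLog_eq_zero_iff, abs_of_pos (by positivity)]; exact hRi1.le
  have hpl3 : Real.posLog (Real.exp (r/16)) = r/16 := by
    rw [Real.posLog_eq_log (by rw [abs_of_pos (Real.exp_pos _)]; exact Real.one_le_exp (by linarith)), Real.log_exp]
  rw [hpl1] at hD1
  rw [hpl2] at hD2
  rw [hpl3] at hD3
  set A0 := max C2 C3 with hA0
  set Cv := 48 * C1^3 with hCv
  set Ct := Cv + A0 * Real.exp (2*Dm) + Cv * Real.exp (2*Dm) with hCt
  have hA0' : 1 ≤ A0 := hC2.trans (le_max_left _ _)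
  have hCv0 : 0 < Cv := by positivity
  have hCt0 : 0 < Ct := by positivity
  obtain ⟨N0, hN0⟩ := poly_exp (8 * Ct) (by positivity : 0 < r/8)
  obtain ⟨s, hs0, hs1, hdens⟩ := hden N0
  set N := 2 * s with hN
  have hNs : (N:ℝ) = 2 * s := by rw [hN]; push_cast; ring
  set h := K' * s with hh
  set n := h + h with hn
  have hnN : (n:ℝ) = K' * N := by rw [hn, hh, hNs]; push_cast; ring
  have hhN : (h:ℝ) = K' * N / 2 := by rw [hh, hNs]; push_cast; ring
  have hsn : s ≤ n := by
    rw [hn, hh, hK']; nlinarith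
  obtain ⟨x0, hx0⟩ := hdich h
  obtain ⟨xs, hxs⟩ := exists_large (continuous_gz lam E 1) b n (hinf n (by omega))
  obtain ⟨i, j, hij⟩ := exists_entry (cp (gz lam E 1) b n xs)
  obtain ⟨F, hF⟩ := exists_poly' lam E b n i j
  have hF1 : ∀ x, ‖F.eval (ee x)‖ = ‖cp (gz lam E 1) b n x i j‖ := by
    intro x
    have := hF 1 one_pos x
    rw [Complex.ofReal_one, one_mul] at this
    rw [this, norm_mul, norm_pow, norm_ee, one_pow, one_mul]
  set V := Cv * Real.exp ((h + 2 * N) * (L + η)) with hV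
  have hLη : 0 < L + η := by linarith
  have hV0 : opNorm2 (cp (gz lam E 1) b n x0) ≤ 12 * (C1 * Real.exp (h * (L+η))) := by
    have h1 := hg1 h x0
    have h2 := hg1 h (x0 + h*b)
    linarith
  have hFV : ∀ l < N, ‖F.eval (ee (x0 + l*b))‖ ≤ V := by
    intro l hl
    rw [hF1]
    refine (entry_le _ _ _).trans ((cp_shift _ _ _ _ _).trans ?_)
    have h1 := hg1 l (x0 + n*b)
    have h2 := hg1 l x0
    calc _ ≤ (C1 * Real.exp (l * (L+η))) * (12 * (C1 * Real.exp (h * (L+η)))) * (4 * (C1 * Real.exp (l * (L+η)))) := by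
          have := opNorm2_nonneg (cp (gz lam E 1) b l x0)
          have := opNorm2_nonneg (cp (gz lam E 1) b n x0)
          have := opNorm2_nonneg (cp (gz lam E 1) b l (x0 + n*b))
          gcongr
      _ = Cv * Real.exp ((h + 2 * l) * (L+η)) := by
          rw [show ((h:ℝ) + 2 * l) * (L+η) = l * (L+η) + h * (L+η) + l * (L+η) by ring, Real.exp_add, Real.exp_add, hCv]
          ring
      _ ≤ V := by
          rw [hV]
          have : (l:ℝ) ≤ N := by exact_mod_cast hl.le
          gcongr
  have hdens' : ∀ l < N, c^N ≤ ∏ k ∈ (Finset.range N).erase l, ‖ee (x0 + l*b) - ee (x0 + k*b)‖ := by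
    intro l hl
    refine (hdens l hl).trans (le_of_eq (Finset.prod_congr rfl fun k _ => ?_))
    rw [ee_add, ee_add, ← mul_sub, norm_mul, norm_ee, one_mul]
  have hzrep : ∀ z : ℂ, ‖z‖ = R ∨ ‖z‖ = R⁻¹ → (∃ y, z = (R:ℂ) * ee y ∧ ‖z‖ = R) ∨ (∃ y, z = ((R⁻¹:ℝ):ℂ) * ee y ∧ ‖z‖ = R⁻¹) := by
    intro z hz
    obtain ⟨y, hy⟩ := polar z
    rcases hz with hz | hz
    · left; refine ⟨y, ?_, hz⟩; rwa [hz] at hy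
    · right; refine ⟨y, ?_, hz⟩; rwa [hz] at hy
  have hRs : R^s = Real.exp (N * (r/2)) := by
    rw [hR, ← Real.exp_nat_mul, hNs]; congr 1; ring
  have hRis : R⁻¹^s = Real.exp (-(N * (r/2))) := by
    rw [inv_pow, hRs, Real.exp_neg]
  have main := interp_bound (s := s) (n := n) hsn F (fun l => ee (x0 + l*b)) (fun l => norm_ee _)
    (d := c^N) (V := V) (A := A0 * Real.exp (n * (L+η))) (a := Real.exp (N * (-(r/2) + η) + Dm))
    (a' := Real.exp (N * η + Dm)) (P := Real.exp (N * (r/16 + η) + Dm)) (R := R) hR1 (by positivity)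
    (by positivity) (by positivity) hdens' hFV
    (by
      intro z hz
      rcases hzrep z hz with ⟨y, hy, hzn⟩ | ⟨y, hy, hzn⟩
      · have h1 := hF R hR0 y
        rw [← hy] at h1
        rw [h1, norm_mul, norm_pow]
        have h2 := (entry_le _ i j).trans (hg2 n y)
        have h3 : C2 ≤ A0 := le_max_left _ _
        have h4 : C2 * Real.exp (n * (L+η)) ≤ A0 * Real.exp (n * (L+η)) := by gcongr
        have h5 := h2.trans h4
        gcongr
      · have h1 := hF R⁻¹ (by positivity) y
        rw [← hy] at h1
        rw [h1, norm_mul, norm_pow]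
        have h2 := (entry_le _ i j).trans (hg3 n y)
        have h3 : C3 ≤ A0 := le_max_right _ _
        have h4 : C3 * Real.exp (n * (L+η)) ≤ A0 * Real.exp (n * (L+η)) := by gcongr
        have h5 := h2.trans h4
        gcongr)
    (by
      intro z hz
      rcases hzrep z hz with ⟨y, hy, hzn⟩ | ⟨y, hy, hzn⟩
      · rw [hzn, hRs, hy]
        refine le_trans ?_ (mul_le_mul_of_nonneg_left (hD1 N x0 y).1 (Real.exp_pos _).le)
        rw [← Real.exp_add]
        apply Real.exp_le_exp.mpr
        linarith
      · rw [hzn, hRis, hy]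
        refine le_trans ?_ (mul_le_mul_of_nonneg_left (hD2 N x0 y).1 (Real.exp_pos _).le)
        rw [← Real.exp_add]
        apply Real.exp_le_exp.mpr
        linarith)
    (by
      intro z hz
      rcases hzrep z hz with ⟨y, hy, hzn⟩ | ⟨y, hy, hzn⟩
      · rw [hy]
        refine le_trans ?_ (mul_le_mul_of_nonneg_left (hD1 N x0 y).1 (Real.exp_pos _).le)
        rw [← Real.exp_add]
        apply Real.one_le_exp
        have : 0 ≤ (N:ℝ) * r := by positivity
        linarith
      · rw [hy]
        refine le_trans ?_ (mul_le_mul_of_nonneg_left (hD2 N x0 y).1 (Real.exp_pos _).le)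
        rw [← Real.exp_add]
        apply Real.one_le_exp
        linarith)
    (zs := ee xs) (norm_ee _)
    (by
      refine (Finset.prod_le_prod (s := Finset.range N) (fun _ _ => norm_nonneg _)
        (fun (l:ℕ) _ => norm_sub_mono (Real.one_le_exp (by positivity : 0 ≤ r/16)) xs (x0 + l*b))).trans ?_
      refine (hD3 N x0 xs).2.trans ?_
      apply Real.exp_le_exp.mpr
      linarith)
  rw [hF1] at main
  have hlow : Real.exp (n * L) ≤ 4 * ‖cp (gz lam E 1) b n xs i j‖ := hxs.trans hij
  set X := Real.exp (N * (K' * L - r/8)) with hX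
  have hNn : (0:ℝ) ≤ N := Nat.cast_nonneg _
  have hDN : (R+1)^N / c^N = Real.exp (N * δ) := by
    rw [← div_pow, ← hδe, ← Real.exp_nat_mul]
  have hexp1 : (h + 2 * N) * (L + η) + N * δ + N * (r/16 + η) + N * η ≤ N * (K' * L - r/8) := by
    rw [hhN]
    have : (K'/2 + 2) * (L + η) + δ + (r/16+η) + η ≤ K' * L - r/8 := by
      linarith
    have := mul_le_mul_of_nonneg_left this hNn
    linarith
  have hb0 : V * ((R+1)^N / c^N) ≤ Cv * X := by
    rw [hDN, hV, mul_assoc, ← Real.exp_add, hX]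
    gcongr
    have : 0 ≤ N * (r/16 + η) + N * η := by positivity
    linarith
  have hb1 : Real.exp (N * (r/16 + η) + Dm) * (V * ((R+1)^N / c^N) * Real.exp (N * η + Dm)) ≤ Cv * Real.exp (2*Dm) * X := by
    rw [hDN, hV, hX]
    have : Real.exp (N * (r/16 + η) + Dm) * (Cv * Real.exp ((h + 2 * N) * (L + η)) * Real.exp (N * δ) * Real.exp (N * η + Dm))
        = Cv * Real.exp (2*Dm) * Real.exp ((h + 2 * N) * (L + η) + N * δ + N * (r/16 + η) + N * η) := by
      simp only [Real.exp_add, two_mul]; ring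
    rw [this]
    gcongr
  have hb2 : Real.exp (N * (r/16 + η) + Dm) * (A0 * Real.exp (n * (L+η)) * Real.exp (N * (-(r/2) + η) + Dm)) ≤ A0 * Real.exp (2*Dm) * X := by
    rw [hX]
    have : Real.exp (N * (r/16 + η) + Dm) * (A0 * Real.exp (n * (L+η)) * Real.exp (N * (-(r/2) + η) + Dm))
        = A0 * Real.exp (2*Dm) * Real.exp (N * (r/16 + η) + n * (L+η) + N * (-(r/2) + η)) := by
      simp only [Real.exp_add, two_mul]; ring
    rw [this]
    have h3 : N * (r/16 + η) + n * (L+η) + N * (-(r/2) + η) ≤ N * (K' * L - r/8) := by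
      rw [hnN]
      have : (r/16 + η) + K' * (L+η) + (-(r/2) + η) ≤ K' * L - r/8 := by linarith
      have := mul_le_mul_of_nonneg_left this hNn
      linarith
    gcongr
  have hX0 : 0 < X := Real.exp_pos _
  have hfin : ‖cp (gz lam E 1) b n xs i j‖ ≤ Ct * (N+1)^2 * X := by
    have e1 : ((2*s:ℕ):ℝ) = N := by rw [hN]
    rw [e1] at main
    have hsq := sq_nonneg (N:ℝ)
    have h1 : (N:ℝ) ≤ (N+1)^2 := by rw [add_sq]; linarith
    have h2 : (1:ℝ) ≤ (N+1)^2 := by rw [add_sq]; linarith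
    have m1 : N * (V * ((R+1)^N / c^N)) ≤ (N+1)^2 * (Cv * X) := by
      exact mul_le_mul h1 hb0 (by positivity) (by positivity)
    have m2 : N * (Real.exp (N * (r/16 + η) + Dm) * (V * ((R+1)^N / c^N) * Real.exp (N * η + Dm))) ≤ (N+1)^2 * (Cv * Real.exp (2*Dm) * X) :=
      mul_le_mul h1 hb1 (by positivity) (by positivity)
    have m3 : 1 * (Real.exp (N * (r/16 + η) + Dm) * (A0 * Real.exp (n * (L+η)) * Real.exp (N * (-(r/2) + η) + Dm))) ≤ (N+1)^2 * (A0 * Real.exp (2*Dm) * X) :=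
      mul_le_mul h2 hb2 (by positivity) (by positivity)
    rw [hCt]
    calc _ ≤ _ := main
      _ = N * (V * ((R+1)^N / c^N)) + 1 * (Real.exp (N * (r/16 + η) + Dm) * (A0 * Real.exp (n * (L+η)) * Real.exp (N * (-(r/2) + η) + Dm))) + N * (Real.exp (N * (r/16 + η) + Dm) * (V * ((R+1)^N / c^N) * Real.exp (N * η + Dm))) := by ring
      _ ≤ (N+1)^2 * (Cv * X) + (N+1)^2 * (A0 * Real.exp (2*Dm) * X) + (N+1)^2 * (Cv * Real.exp (2*Dm) * X) := by linarith
      _ = _ := by ring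
  have hpe := hN0 N (by omega)
  have hsplit : Real.exp (n * L) = X * Real.exp (N * (r/8)) := by
    rw [hX, ← Real.exp_add, hnN]; congr 1; ring
  have : 8 * (Ct * (N+1)^2 * X) ≤ Real.exp (n * L) := by
    rw [hsplit]
    have := mul_le_mul_of_nonneg_left hpe hX0.le
    linarith
  have hpos : 0 < Real.exp (n * L) := Real.exp_pos _
  linarith

end AMO


namespace AMO
open Filter Topology Matrix

lemma gz_eq (lam E : ℝ) : (fun t => (E:ℂ) - (potV 0 lam t : ℝ)) = gz lam E 1 := by
  funext t
  have h : ee t + ee (-t) = 2 * Complex.cos (2 * Real.pi * t) := by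
    rw [Complex.two_cos, ee, ee]
    congr 2
    push_cast; ring
  simp only [gz, potV, zero_mul, sub_zero, div_one, Complex.ofReal_one, one_mul, inv_one, h]
  push_cast
  ring

lemma lyap_eq (lam b E : ℝ) : lyap (potV 0 lam) b (E:ℂ) = ⨅ n : ℕ+, ((n : ℝ))⁻¹ *
    ∫ x in (0:ℝ)..(1:ℝ), Real.log (opNorm2 (cp (gz lam E 1) b n x)) := by
  unfold lyap
  simp only [tProd_eq, gz_eq]

lemma int_nonneg (lam b E : ℝ) (n : ℕ) : 0 ≤ ((n : ℝ))⁻¹ *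
    ∫ x in (0:ℝ)..(1:ℝ), Real.log (opNorm2 (cp (gz lam E 1) b n x)) := by
  apply mul_nonneg (by positivity)
  apply intervalIntegral.integral_nonneg zero_le_one
  intro x _
  exact Real.log_nonneg (one_le_cp _ _ _ _)

end AMO

/-- for `α = 0` (the almost Mathieu operator, `v(x) = 2λcos(2πx)`),
for every `θ` and every `E` in the spectrum, `L(E) = max{log|λ|, 0}`. -/
theorem lyapunov_almost_mathieu (lam b θ : ℝ) (hb : Irrational b)
    (H : lp (fun _ : ℤ => ℂ) 2 →L[ℂ] lp (fun _ : ℤ => ℂ) 2)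
    (hH : IsSchrodingerOp (potV 0 lam) b θ H)
    (E : ℝ) (hE : (E : ℂ) ∈ spectrum ℂ H) :
    lyap (potV 0 lam) b (E : ℂ) = max (Real.log |lam|) 0 := by
  have hL := AMO.lyap_eq lam b E
  set L := lyap (potV 0 lam) b (E : ℂ)
  have hbdd : BddBelow (Set.range fun n : ℕ+ => ((n : ℝ))⁻¹ *
      ∫ x in (0:ℝ)..(1:ℝ), Real.log (opNorm2 (AMO.cp (AMO.gz lam E 1) b n x))) := by
    refine ⟨0, ?_⟩
    rintro _ ⟨n, rfl⟩
    exact AMO.int_nonneg lam b E n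
  have hΛ : ∀ Λ, L < Λ → ∃ N : ℕ, 1 ≤ N ∧ (N:ℝ)⁻¹ *
      ∫ x in (0:ℝ)..1, Real.log (opNorm2 (AMO.cp (AMO.gz lam E 1) b N x)) < Λ := by
    intro Λ hlt
    rw [hL] at hlt
    obtain ⟨n, hn⟩ := exists_lt_of_ciInf_lt hlt
    exact ⟨n, n.pos, hn⟩
  have hinf : ∀ n : ℕ, 1 ≤ n → n * L ≤
      ∫ x in (0:ℝ)..1, Real.log (opNorm2 (AMO.cp (AMO.gz lam E 1) b n x)) := by
    intro n hn
    have h1 := ciInf_le hbdd (⟨n, hn⟩ : ℕ+)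
    rw [← hL] at h1
    simp only [PNat.mk_coe] at h1
    have hn' : (0:ℝ) < n := by exact_mod_cast hn
    rwa [inv_mul_eq_div, le_div_iff₀ hn', mul_comm] at h1
  have hL0 : 0 ≤ L := by
    rw [hL]
    exact le_ciInf fun n => AMO.int_nonneg lam b E n
  apply le_antisymm
  · by_contra hcon
    push Not at hcon
    obtain ⟨h1, h2⟩ := max_lt_iff.mp hcon
    refine AMO.contra hb (lam := lam) (E := E) h2 ?_ hinf hΛ ?_
    · rcases eq_or_ne lam 0 with h | h
      · rw [h, abs_zero]; exact Real.exp_pos _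
      · rwa [← Real.log_lt_iff_lt_exp (abs_pos.mpr h)]
    · intro h
      have hG : ∀ t, opNorm2 (AMO.cm (fun t => (E:ℂ) - (potV 0 lam t : ℝ)) t) ≤ |E| + 2 * |lam| + 3 := by
        intro t
        refine (AMO.opNorm2_le_sum _).trans ?_
        have h1 : ‖(E:ℂ) - (potV 0 lam t : ℝ)‖ ≤ |E| + 2 * |lam| := by
          rw [← Complex.ofReal_sub, Complex.norm_real, Real.norm_eq_abs]
          refine (abs_sub _ _).trans ?_
          have h2 : |potV 0 lam t| ≤ 2 * |lam| := by
            simp only [potV, zero_mul, sub_zero, div_one]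
            rw [abs_mul, abs_mul, abs_two]
            have := Real.abs_cos_le_one (2 * Real.pi * t)
            have : 2 * |lam| * |Real.cos (2 * Real.pi * t)| ≤ 2 * |lam| * 1 := by gcongr
            linarith
          linarith
        simp [AMO.cm]
        linarith
      have := AMO.dich hH hE (by have := abs_nonneg E; have := abs_nonneg lam; linarith) hG h
      rwa [AMO.gz_eq] at this
  · apply max_le _ hL0
    rcases eq_or_ne lam 0 with h | h
    · rw [h, abs_zero, Real.log_zero]; exact hL0
    · refine le_of_forall_pos_le_add fun η hη => ?_
      exact AMO.lower hb (by linarith) h (hΛ (L + η) (by linarith))
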